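/- arXiv:math-ph/9905008 — 2 statements merged into one kernel-verified Lean document; each statement's English description precedes it below -/
import Mathlib

section
/- Let α ∈ (0,1) be an irrational bounded density number and let λ ∈ ℝ \ {0}. Then there exist constants C > 0 and μ > 0 such that ‖M(λ,E,w)‖ ≤ C·|w|^μ for every word w ∈ W_α and every E in the spectrum of H_{λ,α,θ'} for some θ' ∈ [0,1). -/
open scoped Classical

noncomputable section

/-- The Sturmian potential `v_{α,θ}(n) = χ_{[1-α,1)}(nα + θ mod 1)`. -/
def sturmian (α θ : ℝ) (n : ℤ) : ℝ :=
  if Int.fract (n * α + θ) ∈ Set.Ico (1 - α) 1 then 1 else 0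

/-- Iterates of the Gauss map, starting at `α`. -/
def cfGauss (α : ℝ) : ℕ → ℝ
  | 0 => α
  | n + 1 => Int.fract (cfGauss α n)⁻¹

/-- The continued fraction coefficients `a_n` of `α = [a_1, a_2, …]` (for `n ≥ 1`):
`a_1 = ⌊1/α⌋`, `a_2 = ⌊1/fract(1/α)⌋`, … . -/
def cfCoeff (α : ℝ) (n : ℕ) : ℕ := ⌊(cfGauss α (n - 1))⁻¹⌋₊

/-- The standard words, with an index shift: `sWord a n` is `s_{n-1}`.  Thus
`sWord a 0 = s_{-1} = 1`, `sWord a 1 = s_0 = 0`, `sWord a 2 = s_1 = 0^{a_1 - 1} 1`, and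
`sWord a (n+1) = s_n = s_{n-1}^{a_n} s_{n-2}` for `n ≥ 2`. -/
def sWord (a : ℕ → ℕ) : ℕ → List ℝ
  | 0 => [1]
  | 1 => [0]
  | 2 => List.replicate (a 1 - 1) (0 : ℝ) ++ [1]
  | n + 3 => (List.replicate (a (n + 2)) (sWord a (n + 2))).flatten ++ sWord a (n + 1)

/-- The `n`-th letter (for `n ≥ 1`) of the one-sided infinite word `c_α = lim s_n`:
since `|s_n| ≥ n`, it is the `n`-th letter of `s_n`. -/
def cword (α : ℝ) (n : ℕ) : ℝ := (sWord (cfCoeff α) (n + 1)).getD (n - 1) 0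

/-- `w` is a (finite) prefix of the one-sided infinite word `c_α`. -/
def IsPrefC (α : ℝ) (w : List ℝ) : Prop :=
  w = (List.range w.length).map fun i => cword α (i + 1)

/-- The one-step transfer matrix `T(λ,E,a) = [[E - λa, -1], [1, 0]]`. -/
def transferT (lam : ℝ) (E : ℂ) (a : ℝ) : Matrix (Fin 2) (Fin 2) ℂ :=
  !![E - lam * a, -1; 1, 0]

/-- The transfer matrix over a word `w = w_1 … w_n`:
`M(λ,E,w) = T(λ,E,w_n) ⋯ T(λ,E,w_1)`. -/
def transferM (lam : ℝ) (E : ℂ) : List ℝ → Matrix (Fin 2) (Fin 2) ℂ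
  | [] => 1
  | a :: w => transferM lam E w * transferT lam E a

/-- The operator norm on `ℂ²` (with the euclidean norm) of a `2 × 2` complex matrix. -/
def opNorm (A : Matrix (Fin 2) (Fin 2) ℂ) : ℝ :=
  ‖Matrix.toEuclideanCLM (𝕜 := ℂ) A‖

/-- The word `v_{α,θ}^n = v_{α,θ}(1) … v_{α,θ}(n)`. -/
def sturmianWord (α θ : ℝ) (n : ℕ) : List ℝ :=
  (List.range n).map fun k => sturmian α θ (k + 1)

/-- The set of finite nonempty subwords of a two-sided sequence `v : ℤ → ℝ`. -/
def SubZ (v : ℤ → ℝ) : Set (List ℝ) :=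
  {w | w ≠ [] ∧ ∃ k : ℤ, w = (List.range w.length).map fun i => v (k + i)}

/-- The set of finite nonempty subwords of the one-sided word `c_α` (indexed from `1`). -/
def SubC (α : ℝ) : Set (List ℝ) :=
  {w | w ≠ [] ∧ ∃ k : ℕ, 1 ≤ k ∧ w = (List.range w.length).map fun i => cword α (k + i)}

/-- `W_α`, the set of all finite nonempty subwords of the sequences `v_{α,θ}`, `θ ∈ [0,1)`. -/
def Walpha (α : ℝ) : Set (List ℝ) :=
  {w | ∃ θ ∈ Set.Ico (0 : ℝ) 1, w ∈ SubZ (sturmian α θ)}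

/-- `α` is a bounded density number: `limsup_{n→∞} (1/n) ∑_{j=1}^n a_j < ∞` for the
continued fraction coefficients `a_j` of `α`. -/
def BoundedDensity (α : ℝ) : Prop :=
  Filter.IsBoundedUnder (· ≤ ·) Filter.atTop
    (fun n : ℕ => (1 / n : ℝ) * ∑ j ∈ Finset.Icc 1 n, (cfCoeff α j : ℝ))

end

/-! ## Combinatorics: coding of two-interval exchanges and desubstitution -/
namespace SturmBound

/-- strict coding of the two-interval exchange with lengths `p`, `q`. -/
def Orb (p q : ℝ) : ℝ → List Bool → Prop
  | _, [] => True
  | x, false :: w => x < p ∧ Orb p q (x + q) w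
  | x, true :: w => p < x ∧ Orb p q (x - p) w

def Gen (p q x : ℝ) : Prop := ∀ m n : ℤ, x ≠ m * p + n * q

/-- the word `0^b 1`. -/
def blk : ℕ → List Bool
  | 0 => [true]
  | b + 1 => false :: blk b

/-- the substitution `0 ↦ 0^b 1`, `1 ↦ 0`. -/
def tau (b : ℕ) : List Bool → List Bool
  | [] => []
  | false :: w => blk b ++ tau b w
  | true :: w => false :: tau b w

def Lng (p q : ℝ) (w : List Bool) : Prop :=
  ∃ x, 0 < x ∧ x < p + q ∧ Gen p q x ∧ Orb p q x w

lemma tau_append (b : ℕ) (u v : List Bool) : tau b (u ++ v) = tau b u ++ tau b v := by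
  induction u with
  | nil => rfl
  | cons a u ih => cases a <;> simp [tau, ih]

lemma blk_length (b : ℕ) : (blk b).length = b + 1 := by
  induction b with
  | zero => rfl
  | succ b ih => simp [blk, ih]

lemma blk_drop (b j : ℕ) (h : j ≤ b) : blk b = List.replicate j false ++ blk (b - j) := by
  induction j generalizing b with
  | zero => simp
  | succ j ih =>
    obtain ⟨c, rfl⟩ : ∃ c, b = c + 1 := ⟨b - 1, by omega⟩
    rw [blk, ih c (by omega), List.replicate_succ]
    simp

lemma Orb_prefix {p q : ℝ} {u v : List Bool} {x : ℝ} (h : Orb p q x (u ++ v)) : Orb p q x u := by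
  induction u generalizing x with
  | nil => trivial
  | cons a u ih => cases a <;> exact ⟨h.1, ih h.2⟩

lemma Gen.addq {p q x : ℝ} (h : Gen p q x) : Gen p q (x + q) := by
  intro m n e
  apply h m (n - 1)
  push_cast; linarith

lemma Gen.subp {p q x : ℝ} (h : Gen p q x) : Gen p q (x - p) := by
  intro m n e
  apply h (m + 1) n
  push_cast; linarith

lemma Gen.subjq {p q x : ℝ} (h : Gen p q x) (j : ℕ) : Gen p q (x - j * q) := by
  intro m n e
  apply h m (n + j)
  push_cast; linarith

lemma Gen.next {p q x : ℝ} (h : Gen p q x) (b : ℕ) :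
    Gen q (p - b * q) (p - b * q + q - x) := by
  intro m n e
  apply h (1 - n) (1 - b - m + n * b)
  push_cast; linarith

/-- one block. -/
lemma orb_blk {p q : ℝ} (b : ℕ) {y : ℝ} {w : List Bool} (h1 : p - b * q < y)
    (h2 : y < p - b * q + q) (hq : 0 ≤ q) (h : Orb p q y w) :
    w <+: blk b ∨ ∃ w1, w = blk b ++ w1 ∧ Orb p q (y - (p - b * q)) w1 := by
  induction b generalizing y w with
  | zero =>
    rcases w with _ | ⟨_ | _, w⟩
    · left; simp
    · have := h.1; simp at h1; linarith
    · right; refine ⟨w, rfl, ?_⟩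
      simpa using h.2
  | succ b ih =>
    push_cast at h1 h2
    have hb : 0 ≤ (b : ℝ) * q := by positivity
    rcases w with _ | ⟨_ | _, w⟩
    · left; simp
    · rcases ih (y := y + q) (w := w) (by linarith) (by linarith) h.2 with h' | ⟨w1, e, h'⟩
      · left; simpa [blk] using h'
      · right; refine ⟨w1, by simp [blk, e], ?_⟩
        convert h' using 1; push_cast; ring
    · have := h.1; linarith

/-- forward parse -/
lemma parse_fwd {p q : ℝ} (b : ℕ) (hq : 0 ≤ q) (hp : b * q ≤ p) (n : ℕ) :
    ∀ (w : List Bool) (y : ℝ), w.length ≤ n → 0 < y → y < p - b * q + q → Gen p q y →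
      Orb p q y w → ∃ w' l u, w = tau b w' ++ u ∧ u.length ≤ b + 1 ∧ u <+: tau b l ∧
        Orb q (p - b * q) (p - b * q + q - y) (w' ++ l) := by
  induction n with
  | zero =>
    intro w y hw _ _ _ _
    have : w = [] := List.length_eq_zero_iff.1 (by omega)
    subst this
    exact ⟨[], [], [], rfl, by simp, by simp, trivial⟩
  | succ n ih =>
    intro w y hw h0 h1 hg h
    have hbq : 0 ≤ (b : ℝ) * q := by positivity
    rcases lt_trichotomy y (p - b * q) with hy | hy | hy
    · rcases w with _ | ⟨_ | _, w⟩
      · exact ⟨[], [], [], rfl, by simp, by simp, trivial⟩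
      · obtain ⟨w', l, u, e, hu, hl, ho⟩ := ih w (y + q) (by simpa using hw) (by linarith)
          (by linarith) hg.addq h.2
        refine ⟨true :: w', l, u, by simp [tau, e], hu, hl, ?_, ?_⟩
        · linarith
        · have e2 : p - b * q + q - y - q = p - b * q + q - (y + q) := by ring
          show Orb q (p - b * q) (p - b * q + q - y - q) (w' ++ l)
          rw [e2]; exact ho
      · have := h.1; linarith
    · exact absurd hy (by have := hg 1 (-b); push_cast at this; intro e; apply this; linarith)
    · rcases orb_blk b hy h1 hq h with h' | ⟨w1, e, h'⟩
      · refine ⟨[], [false], w, rfl, ?_, ?_, ?_, trivial⟩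
        · simpa [blk_length] using h'.length_le
        · simpa [tau] using h'
        · linarith
      · have hlen : w1.length ≤ n := by
          have := congrArg List.length e
          simp [blk_length] at this; omega
        have hgg : Gen p q (y - (p - b * q)) := by
          intro m k e
          apply hg (m + 1) (k - b)
          push_cast; linarith
        obtain ⟨w', l, u, e', hu, hl, ho⟩ := ih w1 (y - (p - b * q)) hlen (by linarith)
          (by linarith) hgg h'
        refine ⟨false :: w', l, u, by simp [tau, e, e'], hu, hl, ?_, ?_⟩
        · linarith
        · have e2 : p - b * q + q - y + (p - b * q) = p - b * q + q - (y - (p - b * q)) := by ring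
          show Orb q (p - b * q) (p - b * q + q - y + (p - b * q)) (w' ++ l)
          rw [e2]; exact ho

lemma find_j {p q : ℝ} (b : ℕ) {x : ℝ} (hg : Gen p q x) (h1 : p - b * q < x) (h2 : x < p + q) :
    ∃ j ≤ b, p - b * q < x - j * q ∧ x - j * q < p - b * q + q := by
  induction b with
  | zero => exact ⟨0, le_rfl, by simpa using h1, by simpa using h2⟩
  | succ b ih =>
    rcases lt_trichotomy x (p - b * q) with h | h | h
    · refine ⟨0, by omega, by simpa using h1, ?_⟩
      push_cast; linarith
    · exact absurd h (by have := hg 1 (-b); push_cast at this; intro e; apply this; linarith)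
    · obtain ⟨j, hj, a1, a2⟩ := ih h
      refine ⟨j + 1, by omega, ?_, ?_⟩ <;> push_cast <;> linarith

lemma orb_ext {p q : ℝ} (hq : 0 ≤ q) (j : ℕ) {x : ℝ} {w : List Bool} (hx : x - q < p)
    (h : Orb p q x w) : Orb p q (x - j * q) (List.replicate j false ++ w) := by
  induction j with
  | zero => simpa using h
  | succ j ih =>
    rw [List.replicate_succ]
    have hb : 0 ≤ (j : ℝ) * q := by positivity
    refine ⟨by push_cast; linarith, ?_⟩
    have e2 : x - (j + 1 : ℕ) * q + q = x - j * q := by push_cast; ring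
    show Orb p q (x - (j + 1 : ℕ) * q + q) (List.replicate j false ++ w)
    rw [e2]; exact ih

lemma Lng_suffix {p q : ℝ} (hp : 0 ≤ p) (hq : 0 ≤ q) {u v : List Bool} (h : Lng p q (u ++ v)) :
    Lng p q v := by
  induction u with
  | nil => exact h
  | cons a u ih =>
    apply ih
    obtain ⟨x, h0, h1, hg, ho⟩ := h
    cases a
    · exact ⟨x + q, by linarith, by linarith [ho.1], hg.addq, ho.2⟩
    · exact ⟨x - p, by linarith [ho.1], by linarith, hg.subp, ho.2⟩

lemma Lng_prefix {p q : ℝ} {u v : List Bool} (h : Lng p q (u ++ v)) : Lng p q u := by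
  obtain ⟨x, h0, h1, hg, ho⟩ := h
  exact ⟨x, h0, h1, hg, Orb_prefix ho⟩

/-- desubstitution -/
lemma parse {p q : ℝ} (b : ℕ) (hq : 0 ≤ q) (hp : b * q ≤ p) {w : List Bool} (h : Lng p q w) :
    ∃ w' u u' W, w = u ++ tau b w' ++ u' ∧ u.length ≤ b + 1 ∧ u'.length ≤ b + 1 ∧
      Lng q (p - b * q) w' ∧ w <:+: tau b W ∧ Lng q (p - b * q) W := by
  obtain ⟨x, h0, h1, hg, ho⟩ := h
  rcases lt_trichotomy x (p - b * q) with hx | hx | hx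
  · obtain ⟨w', l, u, e, hu, hl, ho'⟩ := parse_fwd b hq hp w.length w x le_rfl h0 (by linarith)
      hg ho
    have hL : Lng q (p - b * q) (w' ++ l) :=
      ⟨_, by linarith, by linarith, hg.next b, ho'⟩
    refine ⟨w', [], u, w' ++ l, by simpa using e, by simp, hu, Lng_prefix hL, ?_, hL⟩
    rw [e, tau_append]
    exact ((List.prefix_append_right_inj _).2 hl).isInfix
  · exact absurd hx (by have := hg 1 (-b); push_cast at this; intro e; apply this; linarith)
  · obtain ⟨j, hj, a1, a2⟩ := find_j b hg hx h1
    have hext := orb_ext hq j (by linarith) ho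
    have hgj := hg.subjq j
    have hL0 : 0 < p - b * q + q - (x - j * q) ∧
        p - b * q + q - (x - j * q) < q + (p - b * q) := ⟨by linarith, by linarith⟩
    rcases orb_blk b a1 a2 hq hext with h' | ⟨w1, e, h'⟩
    · have hl := h'.length_le
      simp [blk_length] at hl
      have hL : Lng q (p - b * q) [false] := ⟨_, hL0.1, hL0.2, hgj.next b, by linarith, trivial⟩
      refine ⟨[], w, [], [false], by simp [tau], by omega, by simp, Lng_prefix (v := [false]) hL,
        ?_, hL⟩
      have : w <:+: List.replicate j false ++ w := (List.suffix_append _ _).isInfix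
      simpa [tau] using this.trans h'.isInfix
    · rw [blk_drop b j hj, List.append_assoc] at e
      have e := List.append_cancel_left e
      have hgg : Gen p q (x - j * q - (p - b * q)) := by
        intro m k e
        apply hgj (m + 1) (k - b)
        push_cast; linarith
      obtain ⟨w', l, u, e', hu, hl, ho'⟩ := parse_fwd b hq hp w1.length w1 _ le_rfl
        (by linarith) (by linarith) hgg h'
      have hL : Lng q (p - b * q) (false :: (w' ++ l)) := by
        refine ⟨_, hL0.1, hL0.2, hgj.next b, by linarith, ?_⟩
        convert ho' using 1; ring
      refine ⟨w', blk (b - j), u, _, by rw [e, e']; simp, by rw [blk_length]; omega, hu,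
        Lng_prefix (Lng_suffix (u := [false]) hq (by linarith) hL), ?_, hL⟩
      rw [e, e', tau, tau_append]
      have h3 : blk (b - j) <:+ blk b := ⟨_, (blk_drop b j hj).symm⟩
      obtain ⟨s, hs⟩ := h3
      obtain ⟨t, ht⟩ := hl
      exact ⟨s, t, by rw [← hs, ← ht]; simp⟩

/-- weights: `0` has weight 2, `1` has weight 1. -/
def wt : List Bool → ℕ
  | [] => 0
  | false :: w => 2 + wt w
  | true :: w => 1 + wt w

lemma wt_append (u v : List Bool) : wt (u ++ v) = wt u + wt v := by
  induction u with
  | nil => simp [wt]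
  | cons a u ih => cases a <;> simp [wt, ih] <;> ring

lemma wt_blk (b : ℕ) : wt (blk b) = 2 * b + 1 := by
  induction b with
  | zero => rfl
  | succ b ih => simp [wt, blk, ih]; ring

lemma wt_tau {b : ℕ} (hb : 1 ≤ b) (w : List Bool) : 3 * wt w ≤ 2 * wt (tau b w) := by
  induction w with
  | nil => simp [wt, tau]
  | cons a w ih => cases a <;> simp [wt, tau, wt_append, wt_blk] <;> omega

lemma wt_le (w : List Bool) : wt w ≤ 2 * w.length := by
  induction w with
  | nil => simp [wt]
  | cons a w ih => cases a <;> simp [wt] <;> omega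

lemma le_wt (w : List Bool) : w.length ≤ wt w := by
  induction w with
  | nil => simp [wt]
  | cons a w ih => cases a <;> simp [wt] <;> omega

lemma length_tau (b : ℕ) (w : List Bool) : w.length ≤ (tau b w).length := by
  induction w with
  | nil => simp [tau]
  | cons a w ih => cases a <;> simp [tau, blk_length] <;> omega

lemma tau_infix {u v : List Bool} (b : ℕ) (h : u <:+: v) : tau b u <:+: tau b v := by
  obtain ⟨s, t, rfl⟩ := h
  simp only [tau_append]
  exact ⟨_, _, rfl⟩

/-- iterated substitution -/
def Phi : ℕ → (ℕ → ℕ) → List Bool → List Bool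
  | 0, _, w => w
  | N + 1, b, w => tau (b 0) (Phi N (fun n => b (n + 1)) w)

/-- lengths of the rational approximant -/
def rl : ℕ → (ℕ → ℕ) → ℝ → ℝ × ℝ
  | 0, _, c => (c, 0)
  | N + 1, b, c => (b 0 * (rl N (fun n => b (n + 1)) c).1 + (rl N (fun n => b (n + 1)) c).2,
      (rl N (fun n => b (n + 1)) c).1)

lemma rl_nonneg (N : ℕ) (b : ℕ → ℕ) {c : ℝ} (hc : 0 ≤ c) : 0 ≤ (rl N b c).1 ∧ 0 ≤ (rl N b c).2 := by
  induction N generalizing b with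
  | zero => exact ⟨hc, le_rfl⟩
  | succ N ih =>
    have := ih (fun n => b (n + 1))
    refine ⟨?_, this.1⟩
    have h1 := this.1
    have h2 := this.2
    simp only [rl]; positivity

lemma rl_ge (N : ℕ) (b : ℕ → ℕ) {c : ℝ} (hc : 0 ≤ c) : c ≤ (rl N b c).1 + (rl N b c).2 := by
  induction N generalizing b with
  | zero => simp [rl]
  | succ N ih =>
    have := ih (fun n => b (n + 1))
    obtain ⟨h1, h2⟩ := rl_nonneg N (fun n => b (n + 1)) hc
    simp only [rl]
    have : 0 ≤ (b 0 : ℝ) * (rl N (fun n => b (n + 1)) c).1 := by positivity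
    linarith

lemma rl_smul (N : ℕ) (b : ℕ → ℕ) (c : ℝ) : rl N b c = (c * (rl N b 1).1, c * (rl N b 1).2) := by
  induction N generalizing b with
  | zero => simp [rl]
  | succ N ih =>
    simp only [rl, Prod.mk.injEq]
    rw [ih]
    constructor
    · simp; ring
    · simp

lemma rl_cross (N : ℕ) (b : ℕ → ℕ) (c : ℝ) (hc : 0 ≤ c) (p q : ℕ → ℝ)
    (hpq : ∀ n, p n = b n * q n + q (n + 1)) (hqp : ∀ n, q n = p (n + 1)) (hq : ∀ n, 0 ≤ q n) :
    |p 0 * (rl N b c).2 - q 0 * (rl N b c).1| = c * q N := by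
  induction N generalizing b p q with
  | zero => simp [rl, abs_mul, abs_of_nonneg hc, abs_of_nonneg (hq 0)]; ring
  | succ N ih =>
    rw [← ih (fun n => b (n + 1)) (fun n => p (n + 1)) (fun n => q (n + 1)) (fun n => hpq _)
      (fun n => hqp _) (fun n => hq _), ← abs_neg]
    congr 1
    simp only [rl, hpq 0, ← hqp 0]
    ring

lemma Lng_zero {c : ℝ} {w : List Bool} (h : Lng c 0 w) : w = List.replicate w.length false := by
  obtain ⟨x, h0, h1, hg, ho⟩ := h
  simp only [add_zero] at h1
  clear h0 hg
  induction w generalizing x with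
  | nil => rfl
  | cons a w ih =>
    cases a
    · rw [List.length_cons, List.replicate_succ, ← ih x (by simpa using ho.2) h1]
    · have := ho.1; linarith

lemma parse_rat (N : ℕ) (b : ℕ → ℕ) {c : ℝ} (hc : 0 ≤ c) {w : List Bool}
    (h : Lng (rl N b c).1 (rl N b c).2 w) : ∃ m, w <:+: Phi N b (List.replicate m false) := by
  induction N generalizing b w with
  | zero => exact ⟨w.length, by rw [← Lng_zero h]; exact List.infix_rfl⟩
  | succ N ih =>
    obtain ⟨h1, h2⟩ := rl_nonneg N (fun n => b (n + 1)) hc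
    obtain ⟨w', u, u', W, -, -, -, -, hW, hL⟩ := parse (b 0) (p := (rl (N + 1) b c).1)
      (q := (rl (N + 1) b c).2) h1 (by simp only [rl]; linarith) h
    obtain ⟨m, hm⟩ := ih (fun n => b (n + 1)) (w := W) (by
      have e2 : (rl N (fun n => b (n + 1)) c).2 = b 0 * (rl N (fun n => b (n + 1)) c).1 + (rl N (fun n => b (n + 1)) c).2 -
        b 0 * (rl N (fun n => b (n + 1)) c).1 := by ring
      rw [e2]
      exact hL)
    exact ⟨m, hW.trans (tau_infix _ hm)⟩

lemma Phi_append (N : ℕ) (b : ℕ → ℕ) (u v : List Bool) :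
    Phi N b (u ++ v) = Phi N b u ++ Phi N b v := by
  induction N generalizing b with
  | zero => rfl
  | succ N ih => simp [Phi, ih, tau_append]

lemma Phi_replicate (N : ℕ) (b : ℕ → ℕ) (m : ℕ) :
    Phi N b (List.replicate m false) = (List.replicate m (Phi N b [false])).flatten := by
  induction m with
  | zero =>
    have := Phi_append N b [] []
    simpa using this
  | succ m ih =>
    rw [List.replicate_succ, ← List.singleton_append, Phi_append, ih, List.replicate_succ,
      List.flatten_cons]

lemma Phi_wt (N : ℕ) (b : ℕ → ℕ) (hb : ∀ n, 1 ≤ b n) (w : List Bool) :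
    3 ^ N * wt w ≤ 2 ^ N * wt (Phi N b w) := by
  induction N generalizing b with
  | zero => simp [Phi]
  | succ N ih =>
    have h1 := ih (fun n => b (n + 1)) (fun n => hb _)
    have h2 := wt_tau (hb 0) (Phi N (fun n => b (n + 1)) w)
    simp only [Phi]
    calc 3 ^ (N + 1) * wt w = 3 * (3 ^ N * wt w) := by ring
      _ ≤ 3 * (2 ^ N * wt (Phi N (fun n => b (n + 1)) w)) := by gcongr
      _ = 2 ^ N * (3 * wt (Phi N (fun n => b (n + 1)) w)) := by ring
      _ ≤ 2 ^ N * (2 * wt (tau (b 0) (Phi N (fun n => b (n + 1)) w))) := by gcongr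
      _ = _ := by ring

/-- openness -/
lemma orb_open {p q : ℝ} {w : List Bool} {x : ℝ} (h : Orb p q x w) :
    ∃ δ > 0, ∀ p' q' x', |p' - p| < δ → |q' - q| < δ → |x' - x| < δ → Orb p' q' x' w := by
  induction w generalizing x with
  | nil => exact ⟨1, one_pos, fun _ _ _ _ _ _ => trivial⟩
  | cons a w ih =>
    cases a
    · obtain ⟨δ, hδ, H⟩ := ih h.2
      have h1 : 0 < p - x := sub_pos.2 h.1
      refine ⟨min (δ / 2) ((p - x) / 2), by positivity, fun p' q' x' hp hq hx => ?_⟩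
      rw [lt_min_iff, abs_lt, abs_lt] at hp hq hx
      refine ⟨by linarith, H _ _ _ ?_ ?_ ?_⟩ <;> rw [abs_lt] <;> constructor <;> linarith
    · obtain ⟨δ, hδ, H⟩ := ih h.2
      have h1 : 0 < x - p := sub_pos.2 h.1
      refine ⟨min (δ / 2) ((x - p) / 2), by positivity, fun p' q' x' hp hq hx => ?_⟩
      rw [lt_min_iff, abs_lt, abs_lt] at hp hq hx
      refine ⟨by linarith, H _ _ _ ?_ ?_ ?_⟩ <;> rw [abs_lt] <;> constructor <;> linarith

/-- half-open coding -/
def HOrb (p q : ℝ) : ℝ → List Bool → Prop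
  | _, [] => True
  | x, false :: w => x < p ∧ HOrb p q (x + q) w
  | x, true :: w => p ≤ x ∧ HOrb p q (x - p) w

lemma horb_orb {p q : ℝ} {w : List Bool} {x : ℝ} (h : HOrb p q x w) :
    ∃ δ > 0, ∀ x', x < x' → x' < x + δ → Orb p q x' w := by
  induction w generalizing x with
  | nil => exact ⟨1, one_pos, fun _ _ _ => trivial⟩
  | cons a w ih =>
    cases a
    · obtain ⟨δ, hδ, H⟩ := ih h.2
      have h1 : 0 < p - x := sub_pos.2 h.1
      refine ⟨min δ (p - x), by positivity, fun x' hx hx' => ?_⟩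
      have := min_le_left δ (p - x)
      have := min_le_right δ (p - x)
      exact ⟨by linarith, H _ (by linarith) (by linarith)⟩
    · obtain ⟨δ, hδ, H⟩ := ih h.2
      have h1 := h.1
      exact ⟨δ, hδ, fun x' hx hx' => ⟨by linarith, H _ (by linarith) (by linarith)⟩⟩

lemma exists_gen (p q : ℝ) {s t : ℝ} (h : s < t) : ∃ x, s < x ∧ x < t ∧ Gen p q x := by
  have hc : (Set.range fun z : ℤ × ℤ => (z.1 : ℝ) * p + z.2 * q).Countable :=
    Set.countable_range _
  have hn : ¬ (Set.Ioo s t).Countable := by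
    intro h'
    have := h'.measure_zero MeasureTheory.volume
    simp at this; linarith
  by_contra! H
  apply hn
  refine hc.mono fun x hx => ?_
  have := H x hx.1 hx.2
  simp only [Gen] at this
  push Not at this
  obtain ⟨m, n, e⟩ := this
  exact ⟨(m, n), e.symm⟩

end SturmBound

/-! ## Transfer matrices, traces and growth -/
namespace SturmBound

abbrev Mt := Matrix (Fin 2) (Fin 2) ℂ

def Mw (A B : Mt) : List Bool → Mt
  | [] => 1
  | false :: w => Mw A B w * A
  | true :: w => Mw A B w * B

lemma Mw_append (A B : Mt) (u v : List Bool) : Mw A B (u ++ v) = Mw A B v * Mw A B u := by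
  induction u with
  | nil => simp [Mw]
  | cons a u ih => cases a <;> simp [Mw, ih, mul_assoc]

lemma Mw_blk (A B : Mt) (b : ℕ) : Mw A B (blk b) = B * A ^ b := by
  induction b with
  | zero => simp [Mw, blk]
  | succ b ih => simp [Mw, blk, ih, pow_succ, mul_assoc]

lemma Mw_tau (A B : Mt) (b : ℕ) (w : List Bool) : Mw A B (tau b w) = Mw (B * A ^ b) A w := by
  induction w with
  | nil => rfl
  | cons a w ih => cases a <;> simp [Mw, tau, Mw_append, Mw_blk, ih]

lemma ch2 {A : Mt} (h : A.det = 1) : A * A = A.trace • A - 1 := by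
  rw [Matrix.det_fin_two] at h
  ext i j
  fin_cases i <;> fin_cases j <;>
    simp [Matrix.mul_apply, Fin.sum_univ_two, Matrix.trace_fin_two] <;>
    first | linear_combination -h | linear_combination h | ring

lemma polar (A B : Mt) : B * A = -(A * B) + A.trace • B + B.trace • A +
    ((B * A).trace - A.trace * B.trace) • (1 : Mt) := by
  ext i j
  fin_cases i <;> fin_cases j <;>
    simp [Matrix.mul_apply, Fin.sum_univ_two, Matrix.trace_fin_two] <;> ring

def RR (A B X : Mt) (r : ℝ) : Prop :=
  ∃ c0 c1 c2 c3 : ℂ, X = c0 • (1 : Mt) + c1 • A + c2 • B + c3 • (A * B) ∧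
    ‖c0‖ + ‖c1‖ + ‖c2‖ + ‖c3‖ ≤ r

lemma RR.mono {A B X : Mt} {r s : ℝ} (h : RR A B X r) (hs : r ≤ s) : RR A B X s := by
  obtain ⟨c0, c1, c2, c3, e, hc⟩ := h
  exact ⟨c0, c1, c2, c3, e, hc.trans hs⟩

lemma RR_one (A B : Mt) : RR A B 1 1 := ⟨1, 0, 0, 0, by simp, by simp⟩

lemma RR.add {A B X Y : Mt} {r s : ℝ} (h : RR A B X r) (h' : RR A B Y s) :
    RR A B (X + Y) (r + s) := by
  obtain ⟨c0, c1, c2, c3, e, hc⟩ := h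
  obtain ⟨d0, d1, d2, d3, e', hd⟩ := h'
  refine ⟨c0 + d0, c1 + d1, c2 + d2, c3 + d3, by rw [e, e']; module, ?_⟩
  linarith [norm_add_le c0 d0, norm_add_le c1 d1, norm_add_le c2 d2, norm_add_le c3 d3]

lemma RR.smul {A B X : Mt} {r : ℝ} (h : RR A B X r) (c : ℂ) : RR A B (c • X) (‖c‖ * r) := by
  obtain ⟨c0, c1, c2, c3, e, hc⟩ := h
  refine ⟨c * c0, c * c1, c * c2, c * c3, by rw [e]; module, ?_⟩
  simp only [norm_mul]
  have := mul_le_mul_of_nonneg_left hc (norm_nonneg c)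
  linarith

/-- bounded trace data -/
structure TB (A B : Mt) (K : ℝ) : Prop where
  dA : A.det = 1
  dB : B.det = 1
  x : ‖A.trace‖ ≤ K
  y : ‖B.trace‖ ≤ K
  z : ‖(B * A).trace‖ ≤ K

lemma rr_comb {A B Y0 Y1 Y2 Y3 : Mt} {c0 c1 c2 c3 : ℂ} {r C : ℝ} (hC : 0 ≤ C)
    (hc : ‖c0‖ + ‖c1‖ + ‖c2‖ + ‖c3‖ ≤ r) (h0 : RR A B Y0 C) (h1 : RR A B Y1 C) (h2 : RR A B Y2 C)
    (h3 : RR A B Y3 C) : RR A B (c0 • Y0 + c1 • Y1 + c2 • Y2 + c3 • Y3) (C * r) := by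
  refine ((((h0.smul c0).add (h1.smul c1)).add (h2.smul c2)).add (h3.smul c3)).mono ?_
  have := mul_le_mul_of_nonneg_left hc hC
  linarith

section
variable {A B : Mt} {K : ℝ}

lemma norm_zxy (h : TB A B K) (hK : 1 ≤ K) :
    ‖(B * A).trace - A.trace * B.trace‖ ≤ K + K * K := by
  refine (norm_sub_le _ _).trans ?_
  rw [norm_mul]
  exact add_le_add h.z (mul_le_mul h.x h.y (norm_nonneg _) (by linarith))

lemma RR.mulLA (h : TB A B K) (hK : 1 ≤ K) {X : Mt} {r : ℝ} (hX : RR A B X r) :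
    RR A B (A * X) ((K * K + 4 * K + 1) * r) := by
  obtain ⟨c0, c1, c2, c3, e, hc⟩ := hX
  have e' : A * X = c0 • A + c1 • (A * A) + c2 • (A * B) + c3 • (A * A * B) := by
    rw [e]; simp [mul_add, mul_assoc]
  rw [e']
  have := h.x
  refine rr_comb (by positivity) hc ⟨0, 1, 0, 0, by simp, ?_⟩
    ⟨-1, A.trace, 0, 0, by rw [ch2 h.dA]; module, ?_⟩ ⟨0, 0, 0, 1, by simp, ?_⟩
    ⟨0, 0, -1, A.trace, by rw [ch2 h.dA, sub_mul, smul_mul_assoc, one_mul]; module, ?_⟩ <;>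
    simp <;> nlinarith

lemma RR.mulRB (h : TB A B K) (hK : 1 ≤ K) {X : Mt} {r : ℝ} (hX : RR A B X r) :
    RR A B (X * B) ((K * K + 4 * K + 1) * r) := by
  obtain ⟨c0, c1, c2, c3, e, hc⟩ := hX
  have e' : X * B = c0 • B + c1 • (A * B) + c2 • (B * B) + c3 • (A * (B * B)) := by
    rw [e]; simp [add_mul, mul_assoc]
  rw [e']
  have := h.y
  refine rr_comb (by positivity) hc ⟨0, 0, 1, 0, by simp, ?_⟩ ⟨0, 0, 0, 1, by simp, ?_⟩
    ⟨-1, 0, B.trace, 0, by rw [ch2 h.dB]; module, ?_⟩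
    ⟨0, -1, 0, B.trace, by rw [ch2 h.dB, mul_sub, mul_smul_comm, mul_one]; module, ?_⟩ <;>
    simp <;> nlinarith

lemma RR_BA (h : TB A B K) (hK : 1 ≤ K) : RR A B (B * A) (K * K + 4 * K + 1) := by
  refine ⟨(B * A).trace - A.trace * B.trace, B.trace, A.trace, -1, ?_, ?_⟩
  · conv_lhs => rw [polar A B]
    module
  · have := norm_zxy h hK
    have := h.x
    have := h.y
    simp only [norm_neg, norm_one]; nlinarith

lemma ABA (h : TB A B K) : A * B * A = B - B.trace • (1 : Mt) + (B * A).trace • A := by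
  rw [mul_assoc]
  conv_lhs => rw [polar A B]
  have e : A * (A * B) = A.trace • (A * B) - B := by
    rw [← mul_assoc, ch2 h.dA, sub_mul, smul_mul_assoc, one_mul]
  simp only [mul_add, mul_neg, mul_smul_comm, e, mul_one, ch2 h.dA]
  module

lemma BAB (h : TB A B K) : B * A * B = A - A.trace • (1 : Mt) + (B * A).trace • B := by
  conv_lhs => rw [polar A B]
  have e : A * B * B = B.trace • (A * B) - A := by
    rw [mul_assoc, ch2 h.dB, mul_sub, mul_smul_comm, mul_one]
  simp only [add_mul, neg_mul, smul_mul_assoc, e, one_mul, ch2 h.dB]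
  module

lemma RR.mulRA (h : TB A B K) (hK : 1 ≤ K) {X : Mt} {r : ℝ} (hX : RR A B X r) :
    RR A B (X * A) ((K * K + 4 * K + 1) * r) := by
  obtain ⟨c0, c1, c2, c3, e, hc⟩ := hX
  have e' : X * A = c0 • A + c1 • (A * A) + c2 • (B * A) + c3 • (A * B * A) := by
    rw [e]; simp [add_mul, mul_assoc]
  rw [e']
  have := h.x
  have := h.y
  have := h.z
  refine rr_comb (by positivity) hc ⟨0, 1, 0, 0, by simp, ?_⟩
    ⟨-1, A.trace, 0, 0, by rw [ch2 h.dA]; module, ?_⟩ (RR_BA h hK)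
    ⟨-B.trace, (B * A).trace, 1, 0, by rw [ABA h]; module, ?_⟩ <;>
    simp only [norm_neg, norm_one, norm_zero] <;> nlinarith

lemma RR.mulLB (h : TB A B K) (hK : 1 ≤ K) {X : Mt} {r : ℝ} (hX : RR A B X r) :
    RR A B (B * X) ((K * K + 4 * K + 1) * r) := by
  obtain ⟨c0, c1, c2, c3, e, hc⟩ := hX
  have e' : B * X = c0 • B + c1 • (B * A) + c2 • (B * B) + c3 • (B * A * B) := by
    rw [e]; simp [mul_add, mul_assoc]
  rw [e']
  have := h.x
  have := h.y
  have := h.z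
  refine rr_comb (by positivity) hc ⟨0, 0, 1, 0, by simp, ?_⟩ (RR_BA h hK)
    ⟨-1, 0, B.trace, 0, by rw [ch2 h.dB]; module, ?_⟩
    ⟨-A.trace, 1, (B * A).trace, 0, by rw [BAB h]; module, ?_⟩ <;>
    simp only [norm_neg, norm_one, norm_zero] <;> nlinarith

lemma RR.mulLw (h : TB A B K) (hK : 1 ≤ K) (u : List Bool) {X : Mt} {r : ℝ} (hX : RR A B X r) :
    RR A B (Mw A B u * X) ((K * K + 4 * K + 1) ^ u.length * r) := by
  induction u generalizing X r with
  | nil => simpa [Mw] using hX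
  | cons a u ih =>
    cases a
    · have := ih (hX.mulLA h hK)
      rw [← mul_assoc, ← mul_assoc, ← pow_succ] at this
      simpa [Mw] using this
    · have := ih (hX.mulLB h hK)
      rw [← mul_assoc, ← mul_assoc, ← pow_succ] at this
      simpa [Mw] using this

lemma RR.mulRw (h : TB A B K) (hK : 1 ≤ K) (u : List Bool) {X : Mt} {r : ℝ} (hX : RR A B X r) :
    RR A B (X * Mw A B u) ((K * K + 4 * K + 1) ^ u.length * r) := by
  induction u generalizing X r with
  | nil => simpa [Mw] using hX
  | cons a u ih =>
    cases a
    · have := (ih hX).mulRA h hK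
      rw [mul_assoc, ← mul_assoc _ _ r, ← pow_succ'] at this
      simpa [Mw] using this
    · have := (ih hX).mulRB h hK
      rw [mul_assoc, ← mul_assoc _ _ r, ← pow_succ'] at this
      simpa [Mw] using this

lemma RR_word (h : TB A B K) (hK : 1 ≤ K) (u : List Bool) {n : ℕ} (hn : u.length ≤ n) :
    RR A B (Mw A B u) ((K * K + 4 * K + 1) ^ n) := by
  have := (RR_one A B).mulLw h hK u
  rw [mul_one, mul_one] at this
  exact this.mono (pow_le_pow_right₀ (by nlinarith) hn)

/-- going down one level -/
lemma RR.down (h : TB A B K) (hK : 1 ≤ K) (b : ℕ) {X : Mt} {r : ℝ} (hX : RR (B * A ^ b) A X r) :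
    RR A B X ((K * K + 4 * K + 1) ^ (b + 2) * r) := by
  obtain ⟨c0, c1, c2, c3, e, hc⟩ := hX
  rw [e]
  refine rr_comb (by positivity) hc ?_ ?_ ?_ ?_
  · exact RR_word h hK [] (by simp)
  · rw [← Mw_blk]; exact RR_word h hK _ (by simp [blk_length])
  · simpa [Mw] using RR_word h hK [false] (n := b + 2) (by simp)
  · rw [mul_assoc, ← pow_succ, ← Mw_blk]; exact RR_word h hK _ (by simp [blk_length])

lemma RR.step (h : TB A B K) (hK : 1 ≤ K) (b : ℕ) {w u u' : List Bool} {r : ℝ} (hr : 0 ≤ r)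
    (hu : u.length ≤ b + 1) (hu' : u'.length ≤ b + 1)
    (hX : RR (B * A ^ b) A (Mw (B * A ^ b) A w) r) :
    RR A B (Mw A B (u ++ tau b w ++ u')) ((K * K + 4 * K + 1) ^ (3 * b + 4) * r) := by
  rw [Mw_append, Mw_append, Mw_tau]
  refine (((hX.down h hK b).mulRw h hK u).mulLw h hK u').mono ?_
  have hC : 1 ≤ K * K + 4 * K + 1 := by nlinarith
  rw [← mul_assoc, ← mul_assoc, ← pow_add, ← pow_add]
  exact mul_le_mul_of_nonneg_right (pow_le_pow_right₀ hC (by omega)) hr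

end

/-! ### traces -/

def ytr (A B : Mt) (j : ℕ) : ℂ := (B * A ^ j).trace

lemma ytr_rec {A : Mt} (B : Mt) (h : A.det = 1) (j : ℕ) :
    ytr A B (j + 2) = A.trace * ytr A B (j + 1) - ytr A B j := by
  simp only [ytr]
  have : B * A ^ (j + 2) = A.trace • (B * A ^ (j + 1)) - B * A ^ j := by
    rw [pow_add, pow_two, ch2 h, pow_succ, mul_sub, mul_one, mul_smul_comm, mul_sub, mul_smul_comm]
  rw [this, Matrix.trace_sub, Matrix.trace_smul, smul_eq_mul]

lemma ytr_swap (A B : Mt) (b : ℕ) : (A * (B * A ^ b)).trace = ytr A B (b + 1) := by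
  rw [Matrix.trace_mul_comm, mul_assoc, ← pow_succ]; rfl

def Esc (A B : Mt) : Prop :=
  2 < ‖A.trace‖ ∧ 2 < ‖B.trace‖ ∧ ‖A.trace‖ * ‖B.trace‖ < 2 * ‖(B * A).trace‖

def Fr (x y z l : ℂ) : Prop := x ^ 2 + y ^ 2 + z ^ 2 - x * y * z = 4 + l ^ 2

lemma norm_rec {x y0 y1 y2 : ℂ} (h : y2 = x * y1 - y0) : ‖x‖ * ‖y1‖ - ‖y0‖ ≤ ‖y2‖ := by
  rw [h, ← norm_mul]; exact norm_sub_norm_le _ _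

lemma grow {A : Mt} (B : Mt) (h : A.det = 1) (hx : 2 < ‖A.trace‖) {j : ℕ} (h1 : 2 < ‖ytr A B j‖)
    (h2 : ‖A.trace‖ * ‖ytr A B j‖ < 2 * ‖ytr A B (j + 1)‖) :
    2 < ‖ytr A B (j + 1)‖ ∧ ‖A.trace‖ * ‖ytr A B (j + 1)‖ < 2 * ‖ytr A B (j + 2)‖ := by
  have := norm_rec (ytr_rec B h j)
  constructor
  · nlinarith
  · have h3 : ‖A.trace‖ * (‖A.trace‖ * ‖ytr A B j‖) < ‖A.trace‖ * (2 * ‖ytr A B (j + 1)‖) :=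
      mul_lt_mul_of_pos_left h2 (by linarith)
    have h4 : 4 * ‖ytr A B j‖ ≤ ‖A.trace‖ * (‖A.trace‖ * ‖ytr A B j‖) := by
      rw [← mul_assoc]
      exact mul_le_mul_of_nonneg_right (by nlinarith) (norm_nonneg _)
    linarith

lemma esc_step {A B : Mt} (h : A.det = 1) (b : ℕ) (he : Esc A B) : Esc (B * A ^ b) A := by
  obtain ⟨hx, hy, hz⟩ := he
  have key : ∀ j, 2 < ‖ytr A B j‖ ∧ ‖A.trace‖ * ‖ytr A B j‖ < 2 * ‖ytr A B (j + 1)‖ := by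
    intro j
    induction j with
    | zero => simpa [ytr] using And.intro hy hz
    | succ j ih => exact grow B h hx ih.1 ih.2
  refine ⟨(key b).1, hx, ?_⟩
  rw [ytr_swap, mul_comm]
  exact (key b).2

lemma noesc_small {A B : Mt} (h : A.det = 1) (b : ℕ) (hx : 2 < ‖A.trace‖) (hy : ‖B.trace‖ ≤ 2)
    (he : ¬ Esc (B * A ^ b) A) : ∀ j ≤ b, ‖ytr A B j‖ ≤ 2 := by
  by_contra! H
  obtain ⟨j, hj, hj2⟩ := H
  have P : ∀ j, ‖ytr A B j‖ ≤ 2 ∨ (2 < ‖ytr A B j‖ ∧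
      ‖A.trace‖ * ‖ytr A B j‖ < 2 * ‖ytr A B (j + 1)‖) := by
    intro j
    induction j with
    | zero => left; simpa [ytr] using hy
    | succ j ih =>
      rcases ih with ih | ih
      · by_cases h2 : ‖ytr A B (j + 1)‖ ≤ 2
        · exact Or.inl h2
        · push Not at h2
          right
          refine ⟨h2, ?_⟩
          have := norm_rec (ytr_rec B h j)
          nlinarith
      · exact Or.inr (grow B h hx ih.1 ih.2)
  have Q : ∀ k, j ≤ k → (2 < ‖ytr A B k‖ ∧
      ‖A.trace‖ * ‖ytr A B k‖ < 2 * ‖ytr A B (k + 1)‖) := by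
    intro k hk
    induction k, hk using Nat.le_induction with
    | base => exact (P j).resolve_left (not_le.2 hj2)
    | succ k _ ih => exact grow B h hx ih.1 ih.2
  apply he
  refine ⟨(Q b hj).1, hx, ?_⟩
  rw [ytr_swap, mul_comm]
  exact (Q b hj).2

lemma fr_ytr {A B : Mt} (h : A.det = 1) {l : ℂ} (hF : Fr A.trace B.trace (B * A).trace l) (j : ℕ) :
    Fr A.trace (ytr A B j) (ytr A B (j + 1)) l := by
  induction j with
  | zero => simpa [ytr] using hF
  | succ j ih =>
    simp only [Fr] at ih ⊢
    rw [ytr_rec B h j]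
    linear_combination ih

lemma fr_bound {x y z : ℂ} {l : ℝ} (h : Fr x y z l) (hx : ‖x‖ ≤ 2) (hy : ‖y‖ ≤ 2) :
    ‖z‖ ≤ l ^ 2 + 8 := by
  have e : z ^ 2 = 4 + (l : ℂ) ^ 2 - x ^ 2 - y ^ 2 + x * y * z := by
    simp only [Fr] at h; linear_combination h
  have h1 : ‖z‖ ^ 2 ≤ 4 + l ^ 2 + 4 + 4 + 4 * ‖z‖ := by
    rw [← norm_pow, e]
    have a1 : ‖x ^ 2‖ ≤ 4 := by rw [norm_pow]; nlinarith [norm_nonneg x]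
    have a2 : ‖y ^ 2‖ ≤ 4 := by rw [norm_pow]; nlinarith [norm_nonneg y]
    have a3 : ‖x * y * z‖ ≤ 4 * ‖z‖ := by
      rw [norm_mul, norm_mul]
      have : ‖x‖ * ‖y‖ ≤ 4 := by nlinarith [norm_nonneg x, norm_nonneg y]
      exact mul_le_mul_of_nonneg_right this (norm_nonneg z)
    have a4 : ‖(4 : ℂ) + (l : ℂ) ^ 2‖ ≤ 4 + l ^ 2 := by
      refine (norm_add_le _ _).trans ?_
      simp
    have b1 := norm_add_le (4 + (l : ℂ) ^ 2 - x ^ 2 - y ^ 2) (x * y * z)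
    have b2 := norm_sub_le (4 + (l : ℂ) ^ 2 - x ^ 2) (y ^ 2)
    have b3 := norm_sub_le (4 + (l : ℂ) ^ 2) (x ^ 2)
    linarith
  by_contra! H
  nlinarith [sq_nonneg l]

/-- the sequence of matrix pairs -/
def st (b : ℕ → ℕ) (A B : Mt) : ℕ → Mt × Mt
  | 0 => (A, B)
  | n + 1 => ((st b A B n).2 * (st b A B n).1 ^ b n, (st b A B n).1)

lemma st_shift (b : ℕ → ℕ) (A B : Mt) (n : ℕ) :
    st (fun n => b (n + 1)) (B * A ^ b 0) A n = st b A B (n + 1) := by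
  induction n with
  | zero => rfl
  | succ n ih => rw [st, ih]; rfl

lemma Mw_Phi (N : ℕ) (b : ℕ → ℕ) (A B : Mt) (w : List Bool) :
    Mw A B (Phi N b w) = Mw (st b A B N).1 (st b A B N).2 w := by
  induction N generalizing b A B with
  | zero => rfl
  | succ N ih => rw [Phi, Mw_tau, ih, st_shift]

def KK (l : ℝ) : ℝ := 4 * l ^ 2 + 4 * |l| + 20

section
variable (b : ℕ → ℕ) (E : ℂ) (l : ℝ)

lemma transferT_det (a : ℝ) : (transferT l E a).det = 1 := by
  simp [transferT, Matrix.det_fin_two]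

/-- the pair at level `n`. -/
def sq (n : ℕ) : Mt × Mt := st b (transferT l E 0) (transferT l E 1) n

lemma sq_det (n : ℕ) : (sq b E l n).1.det = 1 ∧ (sq b E l n).2.det = 1 := by
  induction n with
  | zero => exact ⟨transferT_det E l 0, transferT_det E l 1⟩
  | succ n ih =>
    refine ⟨?_, ih.1⟩
    show ((sq b E l n).2 * (sq b E l n).1 ^ b n).det = 1
    simp [Matrix.det_mul, Matrix.det_pow, ih.1, ih.2]

lemma sq_trace_zero : (sq b E l 0).1.trace = E ∧ (sq b E l 0).2.trace = E - l ∧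
    ((sq b E l 0).2 * (sq b E l 0).1).trace = E * (E - l) - 2 := by
  refine ⟨?_, ?_, ?_⟩
  · simp [sq, st, transferT, Matrix.trace_fin_two]
  · simp [sq, st, transferT, Matrix.trace_fin_two]
  · simp [sq, st, transferT, Matrix.trace_fin_two]; ring

lemma sq_fr (n : ℕ) : Fr (sq b E l n).1.trace (sq b E l n).2.trace
    ((sq b E l n).2 * (sq b E l n).1).trace l := by
  induction n with
  | zero =>
    obtain ⟨h1, h2, h3⟩ := sq_trace_zero b E l
    rw [h1, h2, h3, Fr]; ring
  | succ n ih =>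
    have := fr_ytr (sq_det b E l n).1 ih (b n)
    show Fr (ytr (sq b E l n).1 (sq b E l n).2 (b n)) (sq b E l n).1.trace
      ((sq b E l n).1 * ((sq b E l n).2 * (sq b E l n).1 ^ b n)).trace l
    rw [ytr_swap]
    simp only [Fr] at this ⊢
    linear_combination this

lemma esc_mono {n m : ℕ} (hnm : n ≤ m) (h : Esc (sq b E l n).1 (sq b E l n).2) :
    Esc (sq b E l m).1 (sq b E l m).2 := by
  induction m, hnm using Nat.le_induction with
  | base => exact h
  | succ m _ ih => exact esc_step (sq_det b E l m).1 (b m) ih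

variable {b E l}

lemma min_two (he : ∀ n, ¬ Esc (sq b E l n).1 (sq b E l n).2) (n : ℕ)
    (hx : 2 < ‖(sq b E l n).1.trace‖) : ‖(sq b E l n).2.trace‖ ≤ 2 := by
  induction n with
  | zero =>
    by_contra! hy
    apply he 0
    refine ⟨hx, hy, ?_⟩
    obtain ⟨h1, h2, h3⟩ := sq_trace_zero b E l
    rw [h1] at hx
    rw [h2] at hy
    rw [h1, h2, h3]
    have := norm_sub_norm_le (E * (E - l)) 2
    rw [norm_mul] at this
    norm_num at this
    nlinarith
  | succ n ih =>
    by_contra! hy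
    have h2 := ih hy
    have := noesc_small (sq_det b E l n).1 (b n) hy h2 (he (n + 1)) (b n) le_rfl
    exact absurd hx (not_lt.2 this)

lemma tb_all (hb : ∀ n, 1 ≤ b (n + 1)) (he : ∀ n, ¬ Esc (sq b E l n).1 (sq b E l n).2) (n : ℕ) :
    TB (sq b E l n).1 (sq b E l n).2 (KK l) := by
  have hl := abs_nonneg l
  have hl2 : |l| ^ 2 = l ^ 2 := sq_abs l
  have h0 : TB (sq b E l 0).1 (sq b E l 0).2 (l ^ 2 + 4 * |l| + 6) := by
    obtain ⟨h1, h2, h3⟩ := sq_trace_zero b E l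
    have hm := min_two he 0
    rw [h1, h2] at hm
    have hnl : ‖(l : ℂ)‖ = |l| := by simp
    have a1 : ‖E‖ ≤ 2 + |l| := by
      by_contra! H
      have := hm (by linarith)
      have := norm_sub_norm_le E l
      linarith
    have a2 : ‖E - l‖ ≤ 2 + |l| := by
      rcases le_or_gt ‖E‖ 2 with h | h
      · have := norm_sub_le E l; linarith
      · have := hm h; linarith
    refine ⟨(sq_det b E l 0).1, (sq_det b E l 0).2, ?_, ?_, ?_⟩
    · rw [h1]; nlinarith
    · rw [h2]; nlinarith
    · rw [h3]
      refine (norm_sub_le _ _).trans ?_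
      rw [norm_mul]
      norm_num
      nlinarith [norm_nonneg E, norm_nonneg (E - l)]
  rcases n with _ | n
  · refine ⟨h0.dA, h0.dB, h0.x.trans ?_, h0.y.trans ?_, h0.z.trans ?_⟩ <;> unfold KK <;> nlinarith
  · have hd := sq_det b E l (n + 1)
    have hF := sq_fr b E l (n + 1)
    have hz1 : ‖((sq b E l (n + 1)).2 * (sq b E l (n + 1)).1).trace‖ =
      ‖ytr (sq b E l (n + 1)).1 (sq b E l (n + 1)).2 1‖ := by simp [ytr]
    rcases lt_or_ge 2 ‖(sq b E l (n + 1)).1.trace‖ with hx | hx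
    · have hs := noesc_small hd.1 (b (n + 1)) hx (min_two he (n + 1) hx) (he (n + 2))
      have hy : ‖(sq b E l (n + 1)).2.trace‖ ≤ 2 := min_two he (n + 1) hx
      have hz : ‖((sq b E l (n + 1)).2 * (sq b E l (n + 1)).1).trace‖ ≤ 2 := by
        rw [hz1]; exact hs 1 (hb n)
      have hxb := fr_bound (x := (sq b E l (n + 1)).2.trace)
        (y := ((sq b E l (n + 1)).2 * (sq b E l (n + 1)).1).trace)
        (z := (sq b E l (n + 1)).1.trace) (l := l) (by
        simp only [Fr] at hF ⊢; linear_combination hF) hy hz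
      refine ⟨hd.1, hd.2, ?_, ?_, ?_⟩ <;> unfold KK <;> nlinarith
    · rcases le_or_gt ‖(sq b E l (n + 1)).2.trace‖ 2 with hy | hy
      · have hz := fr_bound hF hx hy
        refine ⟨hd.1, hd.2, ?_, ?_, ?_⟩ <;> unfold KK <;> nlinarith
      · have hy' : 2 < ‖(sq b E l n).1.trace‖ := hy
        rcases Nat.eq_zero_or_pos (b n) with hbn | hbn
        · have hn : n = 0 := by
            rcases n with _ | n
            · rfl
            · have := hb n; omega
          subst hn
          have e : sq b E l 1 = ((sq b E l 0).2, (sq b E l 0).1) := by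
            show ((sq b E l 0).2 * (sq b E l 0).1 ^ b 0, (sq b E l 0).1) = _
            rw [hbn]; simp
          rw [zero_add, e]
          refine ⟨h0.dB, h0.dA, h0.y.trans ?_, h0.x.trans ?_, ?_⟩
          · unfold KK; nlinarith
          · unfold KK; nlinarith
          · rw [Matrix.trace_mul_comm]
            refine h0.z.trans ?_
            unfold KK; nlinarith
        · obtain ⟨c, hc⟩ : ∃ c, b n = c + 1 := ⟨b n - 1, by omega⟩
          have hdn := sq_det b E l n
          have hs := noesc_small hdn.1 (b n) hy' (min_two he n hy') (he (n + 1))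
          have s1 := hs c (by omega)
          have s2 := hs (c + 1) (by omega)
          have hFn := fr_ytr hdn.1 (sq_fr b E l n) c
          have hxb := fr_bound (x := ytr (sq b E l n).1 (sq b E l n).2 c)
            (y := ytr (sq b E l n).1 (sq b E l n).2 (c + 1))
            (z := (sq b E l n).1.trace) (l := l) (by
            simp only [Fr] at hFn ⊢; linear_combination hFn) s1 s2
          have hz2 : ((sq b E l (n + 1)).2 * (sq b E l (n + 1)).1).trace =
              ytr (sq b E l n).1 (sq b E l n).2 (c + 2) := by
            show ((sq b E l n).1 * ((sq b E l n).2 * (sq b E l n).1 ^ b n)).trace = _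
            rw [ytr_swap, hc]
          have hy3 : ‖(sq b E l (n + 1)).2.trace‖ ≤ l ^ 2 + 8 := hxb
          refine ⟨hd.1, hd.2, ?_, ?_, ?_⟩
          · unfold KK; nlinarith
          · unfold KK; nlinarith
          · rw [hz2, ytr_rec _ hdn.1]
            refine (norm_sub_le _ _).trans ?_
            rw [norm_mul]
            unfold KK
            nlinarith [norm_nonneg (sq b E l n).1.trace,
              norm_nonneg (ytr (sq b E l n).1 (sq b E l n).2 (c + 1))]

end

end SturmBound

/-! ## Spectral part -/
namespace SturmBound

lemma eig_close {ι : Type*} [Fintype ι] (T : EuclideanSpace ℂ ι →ₗ[ℂ] EuclideanSpace ℂ ι)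
    (hT : T.IsSymmetric) (e : ℂ) (δ : ℝ) (hδ : 0 < δ) (φ : EuclideanSpace ℂ ι)
    (h : ‖T φ - e • φ‖ < δ * ‖φ‖) :
    ∃ (μ : ℂ) (v : EuclideanSpace ℂ ι), v ≠ 0 ∧ T v = μ • v ∧ ‖μ - e‖ < δ := by
  by_contra! H
  set B := hT.eigenvectorBasis (n := Module.finrank ℂ (EuclideanSpace ℂ ι)) rfl with hB
  have h1 : ∀ i, T (B i) = ((hT.eigenvalues rfl i : ℝ) : ℂ) • B i := fun i =>
    hT.apply_eigenvectorBasis rfl i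
  have h2 : ∀ i, δ ≤ ‖((hT.eigenvalues rfl i : ℝ) : ℂ) - e‖ := fun i =>
    H _ (B i) (B.orthonormal.ne_zero i) (h1 i)
  have h3 : ∀ i, inner ℂ (B i) (T φ - e • φ) =
      (((hT.eigenvalues rfl i : ℝ) : ℂ) - e) * inner ℂ (B i) φ := by
    intro i
    rw [inner_sub_right, ← hT, h1, inner_smul_left, inner_smul_right]
    simp; ring
  have h4 : (δ * ‖φ‖) ^ 2 ≤ ‖T φ - e • φ‖ ^ 2 := by
    rw [← B.sum_sq_norm_inner_right (T φ - e • φ), mul_pow, ← B.sum_sq_norm_inner_right φ,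
      Finset.mul_sum]
    refine Finset.sum_le_sum fun i _ => ?_
    rw [h3, norm_mul, mul_pow]
    gcongr
    exact h2 i
  have := abs_le_of_sq_le_sq' h4 (norm_nonneg _)
  linarith [this.2]

/-- the cyclic Jacobi operator. -/
noncomputable def cyc (N : ℕ) [NeZero N] (V : ZMod N → ℝ) :
    EuclideanSpace ℂ (ZMod N) →ₗ[ℂ] EuclideanSpace ℂ (ZMod N) where
  toFun φ := WithLp.toLp 2 fun j => φ (j + 1) + φ (j - 1) + (V j : ℂ) * φ j
  map_add' φ ψ := by ext j; simp; ring
  map_smul' c φ := by ext j; simp; ring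

lemma cyc_apply (N : ℕ) [NeZero N] (V : ZMod N → ℝ) (φ : EuclideanSpace ℂ (ZMod N)) (j : ZMod N) :
    cyc N V φ j = φ (j + 1) + φ (j - 1) + (V j : ℂ) * φ j := rfl

lemma cyc_symm (N : ℕ) [NeZero N] (V : ZMod N → ℝ) : (cyc N V).IsSymmetric := by
  intro φ ψ
  simp only [PiLp.inner_apply, cyc_apply, inner_add_left, inner_add_right, Finset.sum_add_distrib]
  have h1 : ∑ j, inner ℂ (φ (j + 1)) (ψ j) = ∑ j, inner ℂ (φ j) (ψ (j - 1)) := by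
    refine Fintype.sum_equiv (Equiv.addRight 1) _ _ ?_
    intro j; simp
  have h2 : ∑ j, inner ℂ (φ (j - 1)) (ψ j) = ∑ j, inner ℂ (φ j) (ψ (j + 1)) := by
    refine Fintype.sum_equiv (Equiv.subRight 1) _ _ ?_
    intro j; simp
  rw [h1, h2]
  have h3 : ∀ j, inner ℂ ((V j : ℂ) * φ j) (ψ j) = inner ℂ (φ j) ((V j : ℂ) * ψ j) := by
    intro j
    simp; ring
  simp only [h3]
  ring

def bit : Bool → ℝ
  | false => 0
  | true => 1

lemma Mw_walk (lam : ℝ) (e : ℂ) (S : List Bool) (ψ : ℕ → ℂ)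
    (h : ∀ i (hi : i < S.length), ψ (i + 2) + ψ i + ((lam * bit S[i] : ℝ) : ℂ) * ψ (i + 1) = e * ψ (i + 1)) :
    (Mw (transferT lam e 0) (transferT lam e 1) S).mulVec ![ψ 1, ψ 0] =
      ![ψ (S.length + 1), ψ S.length] := by
  induction S generalizing ψ with
  | nil => simp [Mw]
  | cons a S ih =>
    have h0 := h 0 (by simp)
    have ih' := ih (fun i => ψ (i + 1)) (fun i hi => h (i + 1) (by simpa using hi))
    have key : (transferT lam e (bit a)).mulVec ![ψ 1, ψ 0] = ![ψ 2, ψ 1] := by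
      simp only [transferT]
      ext i
      fin_cases i
      · simp [Matrix.mulVec, dotProduct, Fin.sum_univ_two] at h0 ⊢
        linear_combination -h0
      · simp [Matrix.mulVec, dotProduct, Fin.sum_univ_two]
    have : Mw (transferT lam e 0) (transferT lam e 1) (a :: S) =
      Mw (transferT lam e 0) (transferT lam e 1) S * transferT lam e (bit a) := by
      cases a <;> rfl
    rw [this, ← Matrix.mulVec_mulVec, key, ih']
    simp

lemma Mw_det (A B : Mt) (hA : A.det = 1) (hB : B.det = 1) (S : List Bool) : (Mw A B S).det = 1 := by
  induction S with
  | nil => simp [Mw]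
  | cons a S ih => cases a <;> simp [Mw, ih, hA, hB]

lemma trace_two (N : ℕ) [NeZero N] (lam : ℝ) (e : ℂ) (S : List Bool) (hS : S.length = N)
    (v : EuclideanSpace ℂ (ZMod N)) (hv : v ≠ 0)
    (hv' : cyc N (fun j => lam * bit (S.getD j.val false)) v = e • v) :
    (Mw (transferT lam e 0) (transferT lam e 1) S).trace = 2 := by
  have hE : ∀ j : ZMod N, v (j + 1) + v (j - 1) + ((lam * bit (S.getD j.val false) : ℝ) : ℂ) * v j = e * v j := by
    intro j
    have := congrArg (fun f : EuclideanSpace ℂ (ZMod N) => f j) hv'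
    simpa only [cyc_apply, PiLp.smul_apply, smul_eq_mul] using this
  have hw := Mw_walk lam e S (fun i => v ((i : ZMod N) - 1)) (by
    intro i hi
    have := hE (i : ZMod N)
    rw [ZMod.val_natCast_of_lt (by omega), List.getD_eq_getElem _ _ hi] at this
    have e1 : (((i + 2 : ℕ) : ZMod N) - 1) = i + 1 := by push_cast; ring
    have e2 : (((i + 1 : ℕ) : ZMod N) - 1) = i := by push_cast; ring
    rw [e1, e2]
    exact this)
  set M := Mw (transferT lam e 0) (transferT lam e 1) S
  have hd : M.det = 1 := Mw_det _ _ (transferT_det _ _ _) (transferT_det _ _ _) S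
  simp only [hS] at hw
  have e1 : (((N + 1 : ℕ) : ZMod N) - 1) = ((1 : ℕ) : ZMod N) - 1 := by simp
  have e2 : (((N : ℕ) : ZMod N) - 1) = ((0 : ℕ) : ZMod N) - 1 := by simp
  rw [e1, e2] at hw
  have hne : ![v (((1 : ℕ) : ZMod N) - 1), v (((0 : ℕ) : ZMod N) - 1)] ≠ 0 := by
    intro h0
    have a0 := congrFun h0 0
    have a1 := congrFun h0 1
    simp at a0 a1
    apply hv
    have : ∀ n : ℕ, v (n : ZMod N) = 0 ∧ v ((n : ZMod N) - 1) = 0 := by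
      intro n
      induction n with
      | zero => simpa using ⟨a0, a1⟩
      | succ n ih =>
        have := hE n
        rw [ih.1, ih.2] at this
        push_cast
        refine ⟨by simpa using this, by simpa using ih.1⟩
    ext j
    have := (this j.val).1
    simpa using this
  have hz : (M - 1).det = 0 := by
    rw [← Matrix.exists_mulVec_eq_zero_iff]
    refine ⟨_, hne, ?_⟩
    rw [Matrix.sub_mulVec, hw, Matrix.one_mulVec, sub_self]
  rw [Matrix.det_fin_two] at hd hz
  rw [Matrix.trace_fin_two]
  simp at hz
  linear_combination hd - hz

end SturmBound

namespace SturmBound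

noncomputable abbrev L2 := lp (fun _ : ℤ => ℂ) 2

lemma l2_norm_sq (u : L2) : HasSum (fun n => ‖u n‖ ^ 2) (‖u‖ ^ 2) := by
  have := lp.hasSum_norm (p := 2) (by norm_num) u
  simpa using this

/-- representative of `j - k` in `[-(L+1), N-L-2]`. -/
def rep (N : ℕ) (k : ℤ) (L : ℕ) (j : ZMod N) : ℤ := ((j - (k : ZMod N) + ((L + 1 : ℕ) : ZMod N)).val : ℤ) - (L + 1)

lemma rep_cast (N : ℕ) [NeZero N] (k : ℤ) (L : ℕ) (j : ZMod N) : ((rep N k L j + k : ℤ) : ZMod N) = j := by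
  simp [rep]

lemma rep_range (N : ℕ) [NeZero N] (k : ℤ) (L : ℕ) (j : ZMod N) :
    -(L + 1 : ℤ) ≤ rep N k L j ∧ rep N k L j < N - (L + 1) := by
  have := ZMod.val_lt (j - (k : ZMod N) + ((L + 1 : ℕ) : ZMod N))
  unfold rep
  omega

lemma rep_unique (N : ℕ) [NeZero N] (k : ℤ) (L : ℕ) (j : ZMod N) (n : ℤ)
    (h1 : -(L + 1 : ℤ) ≤ n) (h2 : n < N - (L + 1)) (h : ((n + k : ℤ) : ZMod N) = j) :
    rep N k L j = n := by
  have h3 := rep_cast N k L j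
  have h4 := rep_range N k L j
  rw [← h, ZMod.intCast_eq_intCast_iff_dvd_sub] at h3
  have h3' : (N : ℤ) ∣ n - rep N k L ((n + k : ℤ) : ZMod N) := by
    convert h3 using 1; ring
  rw [h] at h3'
  have := Int.eq_zero_of_abs_lt_dvd h3' (by rw [abs_lt]; constructor <;> omega)
  omega

lemma rep_inj (N : ℕ) [NeZero N] (k : ℤ) (L : ℕ) : Function.Injective (rep N k L) := by
  intro i j h
  rw [← rep_cast N k L i, h, rep_cast]

lemma rep_succ (N : ℕ) [NeZero N] (k : ℤ) (L : ℕ) (hN : 2 * L + 3 ≤ N) (f : ℤ → ℂ)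
    (hf : ∀ n : ℤ, L < |n| → f n = 0) (j : ZMod N) : f (rep N k L (j + 1)) = f (rep N k L j + 1) := by
  have h4 := rep_range N k L j
  have h3 := rep_cast N k L j
  by_cases h : rep N k L j + 1 < N - (L + 1)
  · rw [rep_unique N k L (j + 1) (rep N k L j + 1) (by omega) h]
    push_cast at h3 ⊢
    linear_combination h3
  · rw [rep_unique N k L (j + 1) (-(L + 1)) (by omega) (by omega)]
    · rw [hf, hf]
      · rw [lt_abs]; omega
      · rw [lt_abs]; omega
    · have : rep N k L j = N - L - 2 := by omega
      rw [← h3, this]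
      push_cast
      simp; ring

lemma rep_pred (N : ℕ) [NeZero N] (k : ℤ) (L : ℕ) (hN : 2 * L + 3 ≤ N) (f : ℤ → ℂ)
    (hf : ∀ n : ℤ, L < |n| → f n = 0) (j : ZMod N) : f (rep N k L (j - 1)) = f (rep N k L j - 1) := by
  have h4 := rep_range N k L j
  have h3 := rep_cast N k L j
  by_cases h : -(L + 1 : ℤ) ≤ rep N k L j - 1
  · rw [rep_unique N k L (j - 1) (rep N k L j - 1) h (by omega)]
    push_cast at h3 ⊢
    linear_combination h3
  · rw [rep_unique N k L (j - 1) (N - L - 2) (by omega) (by omega)]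
    · rw [hf, hf]
      · rw [lt_abs]; omega
      · rw [lt_abs]; omega
    · have : rep N k L j = -(L + 1) := by omega
      rw [← h3, this]
      push_cast
      simp; ring

lemma embed (lam : ℝ) (V : ℤ → ℝ) (e : ℂ) (H : L2 →L[ℂ] L2)
    (hH : ∀ u : L2, ∀ n : ℤ, H u n = u (n + 1) + u (n - 1) + (lam * V n : ℝ) * u n)
    (u : L2) (L : ℕ) (hu : ∀ n : ℤ, L < |n| → u n = 0) (S : List Bool)
    (hN : 2 * L + 3 ≤ S.length) (k : ℤ)
    (hS : ∀ n : ℤ, |n| ≤ L → V n = bit (S.getD ((n + k : ℤ) : ZMod S.length).val false))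
    (δ : ℝ) (hδ : 0 < δ)
    (hesc : ∀ e' : ℂ, ‖e' - e‖ < δ →
      2 < ‖(Mw (transferT lam e' 0) (transferT lam e' 1) S).trace‖) :
    δ * ‖u‖ ≤ ‖H u - e • u‖ := by
  by_contra! hlt
  have : NeZero S.length := ⟨by omega⟩
  set N := S.length with hNdef
  let φ : EuclideanSpace ℂ (ZMod N) := WithLp.toLp 2 fun j => u (rep N k L j)
  have hφ : ∀ j, φ j = u (rep N k L j) := fun j => rfl
  let T := cyc N (fun j => lam * bit (S.getD j.val false))
  have hT : ∀ j, (T φ - e • φ) j = (H u - e • u) (rep N k L j) := by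
    intro j
    have h1 : (T φ - e • φ) j = φ (j + 1) + φ (j - 1) + ((lam * bit (S.getD j.val false) : ℝ) : ℂ) * φ j - e * φ j := rfl
    have h2 : (H u - e • u) (rep N k L j) = H u (rep N k L j) - e * u (rep N k L j) := rfl
    rw [h1, h2, hH, hφ, hφ, hφ, rep_succ N k L hN u hu, rep_pred N k L hN u hu]
    by_cases hr : |rep N k L j| ≤ L
    · have := hS _ hr
      rw [rep_cast] at this
      rw [this]
    · rw [hu _ (not_le.mp hr)]; simp
  have n1 : ‖T φ - e • φ‖ ^ 2 ≤ ‖H u - e • u‖ ^ 2 := by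
    rw [EuclideanSpace.norm_sq_eq]
    simp only [hT]
    have := sum_le_hasSum (Finset.univ.map ⟨rep N k L, rep_inj N k L⟩)
      (fun i _ => sq_nonneg _) (l2_norm_sq (H u - e • u))
    rw [Finset.sum_map] at this
    exact this
  have n2 : ‖u‖ ^ 2 = ‖φ‖ ^ 2 := by
    rw [EuclideanSpace.norm_sq_eq]
    simp only [hφ]
    have h1 : HasSum (fun n => ‖u n‖ ^ 2) (∑ n ∈ Finset.univ.map ⟨rep N k L, rep_inj N k L⟩, ‖u n‖ ^ 2) := by
      apply hasSum_sum_of_ne_finset_zero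
      intro n hn
      by_contra hne
      apply hn
      have hn' : |n| ≤ L := by
        by_contra hc
        exact hne (by rw [hu n (not_le.mp hc)]; simp)
      rw [abs_le] at hn'
      rw [Finset.mem_map]
      exact ⟨((n + k : ℤ) : ZMod N), Finset.mem_univ _, rep_unique N k L _ n (by omega) (by omega) rfl⟩
    rw [Finset.sum_map] at h1
    exact (l2_norm_sq u).unique h1
  have n3 : ‖φ‖ = ‖u‖ := by
    have := (sq_eq_sq₀ (norm_nonneg u) (norm_nonneg φ)).mp n2
    exact this.symm
  have n4 : ‖T φ - e • φ‖ ≤ ‖H u - e • u‖ := (sq_le_sq₀ (norm_nonneg _) (norm_nonneg _)).mp n1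
  obtain ⟨μ, v, hv, hTv, hμ⟩ := eig_close T (cyc_symm N _) e δ hδ φ (by rw [n3]; linarith)
  have htr := trace_two N lam μ S rfl v hv hTv
  have := hesc μ hμ
  rw [htr] at this
  norm_num at this

/-- self-adjointness of the Jacobi operator. -/
lemma H_symm (W : ℤ → ℝ) (H : L2 →L[ℂ] L2)
    (hH : ∀ u : L2, ∀ n : ℤ, H u n = u (n + 1) + u (n - 1) + (W n : ℝ) * u n) :
    IsSelfAdjoint H := by
  rw [ContinuousLinearMap.isSelfAdjoint_iff_isSymmetric]
  intro u v
  have hs : ∀ (f g : L2), Summable fun n => inner ℂ (f n) (g n) := fun f g => lp.summable_inner f g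
  rw [lp.inner_eq_tsum, lp.inner_eq_tsum]
  have gen : ∀ (f g : L2) (m : ℤ), Summable fun n : ℤ => inner ℂ (f (n + m)) (g n) := by
    intro f g m
    have s1 : Summable fun n : ℤ => ‖f (n + m)‖ ^ 2 :=
      (l2_norm_sq f).summable.comp_injective (add_left_injective m)
    refine Summable.of_norm_bounded (s1.add (l2_norm_sq g).summable) fun n => ?_
    refine (norm_inner_le_norm _ _).trans ?_
    nlinarith [sq_nonneg (‖f (n + m)‖ - ‖g n‖), sq_nonneg (‖f (n + m)‖ + ‖g n‖)]
  have sh : ∀ (f g : L2) (m : ℤ), ∑' n : ℤ, inner ℂ (f (n + m)) (g n) =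
      ∑' n : ℤ, inner ℂ (f n) (g (n - m)) := by
    intro f g m
    rw [← (Equiv.addRight m).tsum_eq (fun n : ℤ => inner ℂ (f n) (g (n - m)))]
    simp
  have gen' : ∀ (f g : L2) (m : ℤ), Summable fun n : ℤ => inner ℂ (f n) (g (n - m)) := by
    intro f g m
    rw [← (Equiv.addRight m).summable_iff]
    simpa [Function.comp_def] using gen f g m
  have d1 : ∀ n : ℤ, inner ℂ (H u n) (v n) = inner ℂ (u (n + 1)) (v n) + inner ℂ (u (n + -1)) (v n)
      + (W n : ℂ) * inner ℂ (u n) (v n) := by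
    intro n
    rw [hH, inner_add_left, inner_add_left]
    simp [sub_eq_add_neg]; ring
  have d2 : ∀ n : ℤ, inner ℂ (u n) (H v n) = inner ℂ (u n) (v (n - -1)) + inner ℂ (u n) (v (n - 1))
      + (W n : ℂ) * inner ℂ (u n) (v n) := by
    intro n
    rw [hH, inner_add_right, inner_add_right]
    simp; ring
  have b3 : Summable fun n : ℤ => (W n : ℂ) * inner ℂ (u n) (v n) := by
    have := ((hs (H u) v).sub (gen u v 1)).sub (gen u v (-1))
    refine this.congr fun n => ?_
    rw [d1]; ring
  simp only [ContinuousLinearMap.coe_coe, d1, d2]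
  rw [((gen u v 1).add (gen u v (-1))).tsum_add b3, (gen u v 1).tsum_add (gen u v (-1)),
    ((gen' u v (-1)).add (gen' u v 1)).tsum_add b3, (gen' u v (-1)).tsum_add (gen' u v 1), sh, sh]
  ring

lemma below_unit (H : L2 →L[ℂ] L2) (hs : IsSelfAdjoint H) (e : ℂ) (δ : ℝ) (hδ : 0 < δ)
    (h : ∀ u : L2, δ * ‖u‖ ≤ ‖H u - e • u‖) : e ∉ spectrum ℂ H := by
  rw [spectrum.notMem_iff]
  set T : L2 →L[ℂ] L2 := algebraMap ℂ _ e - H with hT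
  have hTu : ∀ u, ‖T u‖ = ‖H u - e • u‖ := by
    intro u
    rw [← norm_neg]
    congr 1
    simp [hT, Algebra.algebraMap_eq_smul_one]
  have hc : Commute (star T) T := by
    have e1 : star T = algebraMap ℂ _ (star e) - H := by
      rw [hT, star_sub, hs.star_eq]
      simp [Algebra.algebraMap_eq_smul_one, star_smul]
    rw [e1, hT]
    have a1 : ∀ z, Commute (algebraMap ℂ (L2 →L[ℂ] L2) z) H := fun z => Algebra.commute_algebraMap_left z H
    refine Commute.sub_left ?_ ?_
    · exact Algebra.commute_algebraMap_left _ _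
    · exact Commute.sub_right (a1 e).symm (Commute.refl H)
  have hu : IsUnit (star T * T) := by
    refine ContinuousLinearMap.isUnit_of_forall_le_norm_inner_map _ (c := (δ ^ 2).toNNReal)
      (Real.toNNReal_pos.mpr (pow_pos hδ 2)) fun x => ?_
    have : inner ℂ ((star T * T) x) x = inner ℂ (T x) (T x) := by
      rw [mul_apply_eq_comp, ContinuousLinearMap.star_eq_adjoint,
        ContinuousLinearMap.adjoint_inner_left]
    rw [this, inner_self_eq_norm_sq_to_K, Real.coe_toNNReal _ (by positivity)]
    have h1 := h x
    rw [← hTu] at h1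
    have h2 : ‖((‖T x‖ : ℂ)) ^ 2‖ = ‖T x‖ ^ 2 := by simp
    have h3 : ‖x‖ ^ 2 * δ ^ 2 ≤ ‖T x‖ ^ 2 := by
      rw [← mul_pow, mul_comm]
      exact pow_le_pow_left₀ (by positivity) h1 2
    exact h3.trans h2.ge
  exact (hc.isUnit_mul_iff.mp hu).2

lemma dense_bound (H : L2 →L[ℂ] L2) (e : ℂ) (δ : ℝ)
    (h : ∀ (u : L2) (L : ℕ), (∀ n : ℤ, L < |n| → u n = 0) → δ * ‖u‖ ≤ ‖H u - e • u‖) (u : L2) :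
    δ * ‖u‖ ≤ ‖H u - e • u‖ := by
  have hsum := lp.hasSum_single (p := 2) (by norm_num) u
  unfold HasSum at hsum
  have hcl : IsClosed {u : L2 | δ * ‖u‖ ≤ ‖H u - e • u‖} :=
    isClosed_le (by fun_prop) (by fun_prop)
  refine hcl.mem_of_tendsto hsum (Filter.Eventually.of_forall fun s => ?_)
  refine h _ (∑ n ∈ s, n.natAbs) fun n hn => ?_
  have hns : n ∉ s := by
    intro hns
    have := Finset.single_le_sum (f := fun n : ℤ => n.natAbs) (fun _ _ => Nat.zero_le _) hns
    have h2 : (n.natAbs : ℤ) = |n| := Int.natCast_natAbs n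
    omega
  rw [lp.coeFn_sum, Finset.sum_apply]
  refine Finset.sum_eq_zero fun i hi => ?_
  rw [lp.single_apply_ne]
  rintro rfl
  exact hns hi

end SturmBound

/-! ## Continued fraction lengths and the spectrum -/
namespace SturmBound

section
variable {α : ℝ}

lemma gauss_mem (hirr : Irrational α) (hα : α ∈ Set.Ioo (0 : ℝ) 1) (n : ℕ) :
    Irrational (cfGauss α n) ∧ 0 < cfGauss α n ∧ cfGauss α n < 1 := by
  induction n with
  | zero => exact ⟨hirr, hα.1, hα.2⟩
  | succ n ih =>
    have h1 : Irrational (cfGauss α (n + 1)) := by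
      have : cfGauss α (n + 1) = (cfGauss α n)⁻¹ - (⌊(cfGauss α n)⁻¹⌋ : ℤ) := rfl
      rw [this]
      exact ih.1.inv.sub_intCast _
    refine ⟨h1, ?_, Int.fract_lt_one _⟩
    exact lt_of_le_of_ne (Int.fract_nonneg _) (fun h => h1.ne_zero h.symm)

lemma coeff_eq (hirr : Irrational α) (hα : α ∈ Set.Ioo (0 : ℝ) 1) (n : ℕ) :
    (cfCoeff α (n + 1) : ℝ) = (cfGauss α n)⁻¹ - cfGauss α (n + 1) := by
  have h := gauss_mem hirr hα n
  have h0 : 0 ≤ (cfGauss α n)⁻¹ := inv_nonneg.mpr h.2.1.le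
  have e1 : cfGauss α (n + 1) = (cfGauss α n)⁻¹ - (⌊(cfGauss α n)⁻¹⌋ : ℤ) := rfl
  have e2 : cfCoeff α (n + 1) = ⌊(cfGauss α n)⁻¹⌋₊ := rfl
  rw [e1, e2, natCast_floor_eq_intCast_floor h0]
  ring

lemma coeff_pos (hirr : Irrational α) (hα : α ∈ Set.Ioo (0 : ℝ) 1) (n : ℕ) :
    1 ≤ cfCoeff α (n + 1) := by
  have h := gauss_mem hirr hα n
  have e2 : cfCoeff α (n + 1) = ⌊(cfGauss α n)⁻¹⌋₊ := rfl
  rw [e2, Nat.one_le_floor_iff]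
  exact (one_lt_inv₀ h.2.1).mpr h.2.2 |>.le

/-- exponents of the desubstitution -/
noncomputable def bb (α : ℝ) (n : ℕ) : ℕ := if n = 0 then cfCoeff α 1 - 1 else cfCoeff α (n + 1)

noncomputable def qq (α : ℝ) (n : ℕ) : ℝ := ∏ i ∈ Finset.range (n + 1), cfGauss α i

noncomputable def pp (α : ℝ) : ℕ → ℝ
  | 0 => 1 - α
  | n + 1 => qq α n

lemma bb_pos (hirr : Irrational α) (hα : α ∈ Set.Ioo (0 : ℝ) 1) (n : ℕ) : 1 ≤ bb α (n + 1) := by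
  simp only [bb, Nat.succ_ne_zero, if_false]
  exact coeff_pos hirr hα _

lemma qq_zero : qq α 0 = α := by simp [qq, cfGauss]

lemma qq_pos (hirr : Irrational α) (hα : α ∈ Set.Ioo (0 : ℝ) 1) (n : ℕ) : 0 < qq α n :=
  Finset.prod_pos fun i _ => (gauss_mem hirr hα i).2.1

lemma qq_succ (n : ℕ) : qq α (n + 1) = qq α n * cfGauss α (n + 1) := by
  rw [qq, Finset.prod_range_succ]; rfl

lemma pq_rec (hirr : Irrational α) (hα : α ∈ Set.Ioo (0 : ℝ) 1) (n : ℕ) :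
    pp α n = bb α n * qq α n + qq α (n + 1) := by
  cases n with
  | zero =>
    rw [qq_succ, qq_zero]
    simp only [bb, pp, if_true]
    rw [Nat.cast_sub (coeff_pos hirr hα 0), coeff_eq hirr hα 0]
    have : cfGauss α 0 = α := rfl
    rw [this]
    have h0 : α ≠ 0 := hα.1.ne'
    field_simp
    push_cast
    ring
  | succ n =>
    rw [qq_succ (n + 1), qq_succ n]
    simp only [bb, pp, Nat.succ_ne_zero, if_false]
    rw [coeff_eq hirr hα]
    have h0 : cfGauss α (n + 1) ≠ 0 := (gauss_mem hirr hα (n + 1)).2.1.ne'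
    field_simp
    ring

lemma qq_anti (hirr : Irrational α) (hα : α ∈ Set.Ioo (0 : ℝ) 1) : Antitone (qq α) := by
  refine antitone_nat_of_succ_le fun n => ?_
  rw [qq_succ]
  nlinarith [qq_pos hirr hα n, (gauss_mem hirr hα (n + 1)).2.2]

lemma qq_half (hirr : Irrational α) (hα : α ∈ Set.Ioo (0 : ℝ) 1) (k : ℕ) :
    qq α (2 * k) ≤ (1 / 2) ^ k := by
  induction k with
  | zero => rw [mul_zero, qq_zero]; simpa using hα.2.le
  | succ k ih =>
    have h1 := pq_rec hirr hα (2 * k + 1)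
    have h2 : pp α (2 * k + 1) = qq α (2 * k) := rfl
    have h3 : (1 : ℝ) ≤ bb α (2 * k + 1) := by exact_mod_cast bb_pos hirr hα _
    have h4 := qq_anti hirr hα (show 2 * k + 1 ≤ 2 * k + 1 + 1 by omega)
    have h5 := qq_pos hirr hα (2 * k + 1)
    rw [show 2 * (k + 1) = 2 * k + 1 + 1 by ring, pow_succ]
    nlinarith

lemma qq_small (hirr : Irrational α) (hα : α ∈ Set.Ioo (0 : ℝ) 1) {ε : ℝ} (hε : 0 < ε) :
    ∃ M, ∀ m ≥ M, qq α m < ε := by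
  obtain ⟨k, hk⟩ := exists_pow_lt_of_lt_one hε (show (1 / 2 : ℝ) < 1 by norm_num)
  exact ⟨2 * k, fun m hm => ((qq_anti hirr hα hm).trans (qq_half hirr hα k)).trans_lt hk⟩

/-- window of the Sturmian sequence, as a boolean word -/
noncomputable def win (α θ : ℝ) (k : ℤ) (l : ℕ) : List Bool :=
  (List.range l).map fun i : ℕ => decide (1 - α ≤ Int.fract (((k + i : ℤ) : ℝ) * α + θ))

lemma win_succ (θ : ℝ) (k : ℤ) (l : ℕ) :
    win α θ k (l + 1) = decide (1 - α ≤ Int.fract ((k : ℝ) * α + θ)) :: win α θ (k + 1) l := by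
  simp only [win, List.range_succ_eq_map, List.map_cons, List.map_map]
  congr 1
  · simp
  · refine List.map_congr_left fun i _ => ?_
    have : k + ((i.succ : ℕ) : ℤ) = k + 1 + (i : ℤ) := by push_cast; ring
    simp only [Function.comp, this]

lemma sturmian_bit (θ : ℝ) (n : ℤ) :
    sturmian α θ n = bit (decide (1 - α ≤ Int.fract ((n : ℝ) * α + θ))) := by
  by_cases h : 1 - α ≤ Int.fract ((n : ℝ) * α + θ)
  · simp [sturmian, h, bit, Int.fract_lt_one]
  · simp [sturmian, h, bit]

lemma win_horb (hα : α ∈ Set.Ioo (0 : ℝ) 1) (θ : ℝ) (k : ℤ) (l : ℕ) :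
    HOrb (1 - α) α (Int.fract ((k : ℝ) * α + θ)) (win α θ k l) := by
  induction l generalizing k with
  | zero => trivial
  | succ l ih =>
    rw [win_succ]
    have ih := ih (k + 1)
    have hf := Int.fract_add_floor ((k : ℝ) * α + θ)
    have h0 := Int.fract_nonneg ((k : ℝ) * α + θ)
    have h1 := Int.fract_lt_one ((k : ℝ) * α + θ)
    by_cases h : 1 - α ≤ Int.fract ((k : ℝ) * α + θ)
    · have e : Int.fract (((k + 1 : ℤ) : ℝ) * α + θ) = Int.fract ((k : ℝ) * α + θ) - (1 - α) := by
        rw [Int.fract_eq_iff]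
        refine ⟨by linarith, by linarith [hα.2], ⌊(k : ℝ) * α + θ⌋ + 1, ?_⟩
        push_cast
        linarith
      rw [e] at ih
      simp only [h, decide_true]
      exact ⟨h, ih⟩
    · have e : Int.fract (((k + 1 : ℤ) : ℝ) * α + θ) = Int.fract ((k : ℝ) * α + θ) + α := by
        rw [Int.fract_eq_iff]
        refine ⟨by linarith [hα.1], by linarith, ⌊(k : ℝ) * α + θ⌋, ?_⟩
        push_cast
        linarith
      rw [e] at ih
      simp only [h, decide_false]
      exact ⟨not_le.mp h, ih⟩

lemma win_Lng (hα : α ∈ Set.Ioo (0 : ℝ) 1) (θ : ℝ) (k : ℤ) (l : ℕ) :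
    Lng (1 - α) α (win α θ k l) := by
  obtain ⟨δ, hδ, h⟩ := horb_orb (win_horb hα θ k l)
  have h0 := Int.fract_nonneg ((k : ℝ) * α + θ)
  have h1 := Int.fract_lt_one ((k : ℝ) * α + θ)
  obtain ⟨x, hx1, hx2, hg⟩ := exists_gen (1 - α) α
    (show Int.fract ((k : ℝ) * α + θ) < min (Int.fract ((k : ℝ) * α + θ) + δ) 1 from
      lt_min (by linarith) h1)
  rw [lt_min_iff] at hx2
  exact ⟨x, by linarith, by linarith, hg, h x hx1 hx2.1⟩

lemma rat_window (hirr : Irrational α) (hα : α ∈ Set.Ioo (0 : ℝ) 1) {w : List Bool}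
    (hw : Lng (1 - α) α w) :
    ∃ M, ∀ m ≥ M, ∃ r, w <:+: Phi m (bb α) (List.replicate r false) := by
  obtain ⟨x, hx0, hx1, -, ho⟩ := hw
  obtain ⟨δ, hδ, hop⟩ := orb_open ho
  obtain ⟨M, hM⟩ := qq_small hirr hα hδ
  refine ⟨M, fun m hm => ?_⟩
  have hge := rl_ge m (bb α) (c := 1) zero_le_one
  set c : ℝ := ((rl m (bb α) 1).1 + (rl m (bb α) 1).2)⁻¹ with hc
  have hc0 : 0 ≤ c := inv_nonneg.mpr (by linarith)
  have hc1 : c ≤ 1 := inv_le_one_of_one_le₀ hge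
  have hsum : (rl m (bb α) c).1 + (rl m (bb α) c).2 = 1 := by
    rw [rl_smul]
    simp only
    rw [← mul_add, hc, inv_mul_cancel₀ (by linarith)]
  have hcr := rl_cross m (bb α) c hc0 (pp α) (qq α) (pq_rec hirr hα) (fun n => rfl)
    (fun n => (qq_pos hirr hα n).le)
  have hp0 : pp α 0 = 1 - α := rfl
  rw [qq_zero, hp0] at hcr
  have hsm : c * qq α m < δ := by
    have := qq_pos hirr hα m
    have := hM m hm
    nlinarith
  have e1 : (rl m (bb α) c).2 - α = (1 - α) * (rl m (bb α) c).2 - α * (rl m (bb α) c).1 := by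
    linear_combination α * hsum
  have e2 : (rl m (bb α) c).1 - (1 - α) = -((1 - α) * (rl m (bb α) c).2 - α * (rl m (bb α) c).1) := by
    linear_combination (1 - α) * hsum
  obtain ⟨x', hx1', hx2', hg⟩ := exists_gen (rl m (bb α) c).1 (rl m (bb α) c).2
    (show x < min (x + δ) 1 from lt_min (by linarith) (by linarith))
  rw [lt_min_iff] at hx2'
  refine parse_rat m (bb α) hc0 ⟨x', by linarith, by linarith, hg, hop _ _ _ ?_ ?_ ?_⟩
  · rw [e2, abs_neg, hcr]; exact hsm
  · rw [e1, hcr]; exact hsm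
  · rw [abs_of_pos (by linarith)]; linarith

lemma Phi_long (hirr : Irrational α) (hα : α ∈ Set.Ioo (0 : ℝ) 1) (R : ℕ) :
    ∃ M, ∀ m ≥ M, R ≤ (Phi m (bb α) [false]).length := by
  obtain ⟨k, hk⟩ := pow_unbounded_of_one_lt (R : ℝ) (show (1 : ℝ) < 3 / 2 by norm_num)
  refine ⟨k + 1, fun m hm => ?_⟩
  obtain ⟨m, rfl⟩ : ∃ m', m = m' + 1 := ⟨m - 1, by omega⟩
  have h1 := Phi_wt m (fun n => bb α (n + 1)) (bb_pos hirr hα) [false]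
  have h2 := wt_le (Phi m (fun n => bb α (n + 1)) [false])
  have h3 := length_tau (bb α 0) (Phi m (fun n => bb α (n + 1)) [false])
  have h4 : wt [false] = 2 := rfl
  rw [h4] at h1
  change _ ≤ (tau (bb α 0) (Phi m (fun n => bb α (n + 1)) [false])).length
  refine le_trans ?_ h3
  have h5 : 3 ^ m ≤ 2 ^ m * (Phi m (fun n => bb α (n + 1)) [false]).length := by
    have := Nat.mul_le_mul_left (2 ^ m) h2
    nlinarith
  have h6 : (3 / 2 : ℝ) ^ m ≤ (Phi m (fun n => bb α (n + 1)) [false]).length := by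
    rw [div_pow, div_le_iff₀ (by positivity), mul_comm]
    exact_mod_cast h5
  have h7 : (3 / 2 : ℝ) ^ k ≤ (3 / 2 : ℝ) ^ m := pow_le_pow_right₀ (by norm_num) (by omega)
  have : (R : ℝ) ≤ (Phi m (fun n => bb α (n + 1)) [false]).length := by linarith
  exact_mod_cast this

lemma flatten_getD (r : ℕ) (S : List Bool) (i : ℕ) (hi : i < (List.replicate r S).flatten.length) :
    (List.replicate r S).flatten.getD i false = S.getD (i % S.length) false := by
  induction r generalizing i with
  | zero => simp at hi
  | succ r ih =>
    rw [List.replicate_succ, List.flatten_cons] at hi ⊢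
    rw [List.length_append] at hi
    by_cases h : i < S.length
    · rw [List.getD_append _ _ _ _ h, Nat.mod_eq_of_lt h]
    · rw [List.getD_append_right _ _ _ _ (not_lt.mp h), ih _ (by omega)]
      rw [← Nat.mod_eq_sub_mod (not_lt.mp h)]

lemma win_index (θ : ℝ) (L : ℕ) (S : List Bool) (r : ℕ)
    (h : win α θ (-L) (2 * L + 1) <:+: (List.replicate r S).flatten) :
    ∃ k : ℤ, ∀ n : ℤ, |n| ≤ L →
      sturmian α θ n = bit (S.getD ((n + k : ℤ) : ZMod S.length).val false) := by
  obtain ⟨s, t, hst⟩ := h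
  refine ⟨s.length + L, fun n hn => ?_⟩
  rw [abs_le] at hn
  obtain ⟨i, hi⟩ : ∃ i : ℕ, n = -L + i := ⟨(n + L).toNat, by omega⟩
  have hil : i < (win α θ (-L) (2 * L + 1)).length := by simp [win]; omega
  have h1 : (win α θ (-L) (2 * L + 1)).getD i false = decide (1 - α ≤ Int.fract ((n : ℝ) * α + θ)) := by
    rw [List.getD_eq_getElem _ _ hil]
    simp [win, hi]
  have e : n + (s.length + L) = ((s.length + i : ℕ) : ℤ) := by push_cast; omega
  rw [sturmian_bit, ← h1, e, Int.cast_natCast, ZMod.val_natCast, ← flatten_getD r, ← hst]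
  · rw [List.append_assoc, List.getD_append_right _ _ _ _ (by omega), Nat.add_sub_cancel_left,
      List.getD_append _ _ _ _ hil]
  · rw [← hst]; simp only [List.length_append]; omega

end

lemma transferT_cont (l a : ℝ) : Continuous fun e : ℂ => transferT l e a := by
  unfold transferT
  refine continuous_matrix fun i j => ?_
  fin_cases i <;> fin_cases j <;> simp <;> fun_prop

lemma sq_cont (b : ℕ → ℕ) (l : ℝ) (n : ℕ) :
    Continuous (fun e : ℂ => (sq b e l n).1) ∧ Continuous (fun e : ℂ => (sq b e l n).2) := by
  induction n with
  | zero => exact ⟨transferT_cont l 0, transferT_cont l 1⟩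
  | succ n ih => exact ⟨ih.2.mul (ih.1.pow _), ih.1⟩

lemma esc_open (b : ℕ → ℕ) (e : ℂ) (l : ℝ) (n : ℕ) (h : Esc (sq b e l n).1 (sq b e l n).2) :
    ∃ δ > 0, ∀ e', ‖e' - e‖ < δ → Esc (sq b e' l n).1 (sq b e' l n).2 := by
  obtain ⟨c1, c2⟩ := sq_cont b l n
  have t1 := c1.matrix_trace.norm
  have t2 := c2.matrix_trace.norm
  have t3 := (c2.mul c1).matrix_trace.norm
  have ho : IsOpen {e' : ℂ | Esc (sq b e' l n).1 (sq b e' l n).2} :=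
    (isOpen_lt continuous_const t1).inter ((isOpen_lt continuous_const t2).inter
      (isOpen_lt (t1.mul t2) (continuous_const.mul t3)))
  obtain ⟨δ, hδ, hb⟩ := Metric.isOpen_iff.mp ho e h
  refine ⟨δ, hδ, fun e' he' => hb ?_⟩
  rw [Metric.mem_ball, dist_eq_norm]
  exact he'

theorem spec_noesc {α : ℝ} (hirr : Irrational α) (hα : α ∈ Set.Ioo (0 : ℝ) 1) (lam θ : ℝ)
    (H : L2 →L[ℂ] L2)
    (hH : ∀ u : L2, ∀ n : ℤ, H u n = u (n + 1) + u (n - 1) + (lam * sturmian α θ n : ℝ) * u n)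
    (E : ℂ) (hE : E ∈ spectrum ℂ H) (n : ℕ) :
    ¬ Esc (sq (bb α) E lam n).1 (sq (bb α) E lam n).2 := by
  intro hesc
  obtain ⟨δ, hδ, ho⟩ := esc_open (bb α) E lam n hesc
  refine below_unit H (H_symm _ H hH) E δ hδ (dense_bound H E δ fun u L hu => ?_) hE
  obtain ⟨M1, hM1⟩ := rat_window hirr hα (win_Lng hα θ (-L) (2 * L + 1))
  obtain ⟨M2, hM2⟩ := Phi_long hirr hα (2 * L + 3)
  set m := max n (max M1 M2) with hm
  have m0 : n ≤ m := le_max_left _ _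
  obtain ⟨r, hr⟩ := hM1 m ((le_max_left _ _).trans (le_max_right _ _))
  have hl := hM2 m ((le_max_right _ _).trans (le_max_right _ _))
  rw [Phi_replicate] at hr
  obtain ⟨k, hk⟩ := win_index θ L _ r hr
  refine embed lam (sturmian α θ) E H hH u L hu _ hl k hk δ hδ fun e' he' => ?_
  rw [Mw_Phi]
  have := (esc_mono (bb α) e' lam m0 (ho e' he')).1
  simpa [Mw, sq] using this

end SturmBound

/-! ## Conclusion -/
namespace SturmBound

lemma KK_ge (l : ℝ) : 20 ≤ KK l := by
  unfold KK; nlinarith [sq_nonneg l, abs_nonneg l]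

/-- growth constant -/
noncomputable def C0 (l : ℝ) : ℝ := KK l * KK l + 4 * KK l + 1

lemma C0_gt (l : ℝ) : 1 < C0 l := by
  unfold C0; nlinarith [KK_ge l]

section
variable {α : ℝ}

lemma level_ind (hirr : Irrational α) (hα : α ∈ Set.Ioo (0 : ℝ) 1) (lam : ℝ) (E : ℂ)
    (he : ∀ n, ¬ Esc (sq (bb α) E lam n).1 (sq (bb α) E lam n).2) (k : ℕ) :
    ∀ (n : ℕ) (w : List Bool), Lng (pp α (n + 1)) (qq α (n + 1)) w → wt w * 2 ^ k < 3 ^ k →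
      RR (sq (bb α) E lam (n + 1)).1 (sq (bb α) E lam (n + 1)).2
        (Mw (sq (bb α) E lam (n + 1)).1 (sq (bb α) E lam (n + 1)).2 w)
        (C0 lam ^ (∑ j ∈ Finset.range k, (3 * bb α (n + 1 + j) + 4))) := by
  induction k with
  | zero =>
    intro n w hw hk
    have hw0 : w.length = 0 := by
      have := le_wt w
      simp at hk; omega
    rw [List.length_eq_zero_iff] at hw0
    subst hw0
    simpa [Mw] using RR_one _ _
  | succ k ih =>
    intro n w hw hk
    have hq := qq_pos hirr hα (n + 1)
    have hrec := pq_rec hirr hα (n + 1)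
    have hq2 := qq_pos hirr hα (n + 1 + 1)
    obtain ⟨w', u, u', W, rfl, hu, hu', hL, -, -⟩ := parse (bb α (n + 1)) hq.le (by linarith) hw
    have hL' : Lng (pp α (n + 1 + 1)) (qq α (n + 1 + 1)) w' := by
      have e1 : pp α (n + 1 + 1) = qq α (n + 1) := rfl
      have e2 : qq α (n + 1 + 1) = pp α (n + 1) - bb α (n + 1) * qq α (n + 1) := by linarith
      rw [e1, e2]; exact hL
    have h1 := wt_tau (bb_pos hirr hα n) w'
    rw [wt_append, wt_append] at hk
    have hk' : wt w' * 2 ^ k < 3 ^ k := by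
      rw [pow_succ, pow_succ] at hk
      have : 0 < 2 ^ k := by positivity
      nlinarith
    have ih' := ih (n + 1) w' hL' hk'
    have hst := RR.step (tb_all (bb_pos hirr hα) he (n + 1)) (by linarith [KK_ge lam])
      (bb α (n + 1)) (by have := C0_gt lam; positivity) hu hu' ih'
    refine hst.mono (le_of_eq ?_)
    have hs : ∑ j ∈ Finset.range (k + 1), (3 * bb α (n + 1 + j) + 4) =
        (3 * bb α (n + 1) + 4) + ∑ j ∈ Finset.range k, (3 * bb α (n + 1 + 1 + j) + 4) := by
      rw [Finset.sum_range_succ', add_comm]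
      congr 1
      refine Finset.sum_congr rfl fun j _ => ?_
      rw [show n + 1 + (j + 1) = n + 1 + 1 + j by omega]
    rw [hs, pow_add (C0 lam)]
    rfl

lemma level_zero (hirr : Irrational α) (hα : α ∈ Set.Ioo (0 : ℝ) 1) (lam : ℝ) (E : ℂ)
    (he : ∀ n, ¬ Esc (sq (bb α) E lam n).1 (sq (bb α) E lam n).2) (k : ℕ) (w : List Bool)
    (hw : Lng (1 - α) α w) (hk : 2 * w.length * 2 ^ k < 3 ^ k) :
      RR (transferT lam E 0) (transferT lam E 1)
        (Mw (transferT lam E 0) (transferT lam E 1) w)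
        (C0 lam ^ (∑ j ∈ Finset.range (k + 1), (3 * bb α j + 4))) := by
  have hrec := pq_rec hirr hα 0
  have hq2 := qq_pos hirr hα 1
  have hp0 : pp α 0 = 1 - α := rfl
  rw [qq_zero, hp0, zero_add] at hrec
  obtain ⟨w', u, u', W, rfl, hu, hu', hL, -, -⟩ := parse (bb α 0) hα.1.le (by linarith) hw
  have hL' : Lng (pp α (0 + 1)) (qq α (0 + 1)) w' := by
    have e1 : pp α (0 + 1) = α := qq_zero
    have e2 : qq α (0 + 1) = 1 - α - bb α 0 * α := by rw [zero_add]; linarith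
    rw [e1, e2]; exact hL
  have h1 := length_tau (bb α 0) w'
  have h2 := wt_le w'
  rw [List.length_append, List.length_append] at hk
  have hk' : wt w' * 2 ^ k < 3 ^ k := by
    have : 0 < 2 ^ k := by positivity
    nlinarith
  have ih' := level_ind hirr hα lam E he k 0 w' hL' hk'
  have hst := RR.step (tb_all (bb_pos hirr hα) he 0) (by linarith [KK_ge lam])
    (bb α 0) (by have := C0_gt lam; positivity) hu hu' ih'
  refine hst.mono (le_of_eq ?_)
  have hs : ∑ j ∈ Finset.range (k + 1), (3 * bb α j + 4) =
      (3 * bb α 0 + 4) + ∑ j ∈ Finset.range k, (3 * bb α (0 + 1 + j) + 4) := by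
    rw [Finset.sum_range_succ', add_comm]
    congr 1
    refine Finset.sum_congr rfl fun j _ => ?_
    rw [show 0 + 1 + j = j + 1 by omega]
  rw [hs, pow_add (C0 lam)]
  rfl

lemma sum_bound (hbd : BoundedDensity α) :
    ∃ G > (0 : ℝ), ∀ k : ℕ, ((∑ j ∈ Finset.range (k + 1), (3 * bb α j + 4) : ℕ) : ℝ) ≤ G * (k + 1) := by
  obtain ⟨D, hD⟩ := hbd
  rw [Filter.eventually_map, Filter.eventually_atTop] at hD
  obtain ⟨N, hN⟩ := hD
  set F : ℕ → ℝ := fun n => ∑ j ∈ Finset.Icc 1 n, (cfCoeff α j : ℝ) with hF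
  have hmono : Monotone F := by
    intro m n hmn
    refine Finset.sum_le_sum_of_subset_of_nonneg (Finset.Icc_subset_Icc_right hmn) ?_
    intros; positivity
  have hF0 : ∀ n, 0 ≤ F n := fun n => Finset.sum_nonneg (by intros; positivity)
  have hb : ∀ k : ℕ, F (k + 1) ≤ (|D| + F N) * (k + 1) := by
    intro k
    have hk0 : (0 : ℝ) ≤ k := Nat.cast_nonneg k
    rcases le_total N (k + 1) with h | h
    · have h1 := hN (k + 1) h
      have h2 : F (k + 1) ≤ D * (k + 1) := by
        simp only [one_div] at h1
        push_cast at h1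
        rw [inv_mul_le_iff₀ (by positivity)] at h1
        linarith
      have h3 := le_abs_self D
      have h4 := hF0 N
      nlinarith
    · have h1 := hmono h
      have h3 := abs_nonneg D
      have h4 := hF0 N
      nlinarith
  refine ⟨3 * (|D| + F N) + 4, by have := hF0 N; positivity, fun k => ?_⟩
  have h1 : (∑ j ∈ Finset.range (k + 1), (bb α j : ℝ)) ≤ F (k + 1) := by
    have : F (k + 1) = ∑ j ∈ Finset.range (k + 1), (cfCoeff α (j + 1) : ℝ) := by
      simp only [hF]
      rw [Finset.range_eq_Ico, Finset.sum_Ico_add' (fun j => (cfCoeff α j : ℝ)) 0 (k + 1) 1]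
      rfl
    rw [this]
    refine Finset.sum_le_sum fun j _ => ?_
    have : bb α j ≤ cfCoeff α (j + 1) := by
      unfold bb
      split_ifs with h
      · subst h; simp
      · exact le_rfl
    exact_mod_cast this
  have h2 := hb k
  push_cast
  rw [Finset.sum_add_distrib, ← Finset.mul_sum]
  simp
  linarith

end

lemma opNorm_add (A B : Mt) : opNorm (A + B) ≤ opNorm A + opNorm B := by
  unfold opNorm; rw [map_add]; exact norm_add_le _ _

lemma opNorm_mul (A B : Mt) : opNorm (A * B) ≤ opNorm A * opNorm B := by
  unfold opNorm; rw [map_mul]; exact norm_mul_le _ _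

lemma opNorm_smul (c : ℂ) (A : Mt) : opNorm (c • A) = ‖c‖ * opNorm A := by
  unfold opNorm; rw [map_smul]; exact norm_smul _ _

lemma opNorm_nonneg (A : Mt) : 0 ≤ opNorm A := norm_nonneg _

/-- bound for one-step matrices -/
noncomputable def tc (l : ℝ) : ℝ := KK l * opNorm !![1, 0; 0, 0] + opNorm !![0, -1; 1, 0]

lemma tc_nonneg (l : ℝ) : 0 ≤ tc l := by
  have h1 := KK_ge l
  have h2 := opNorm_nonneg !![1, 0; 0, 0]
  have h3 := opNorm_nonneg !![0, -1; 1, 0]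
  have h4 : 0 ≤ KK l := by linarith
  unfold tc; positivity

lemma opNorm_T (l a : ℝ) (E : ℂ) (h : ‖(transferT l E a).trace‖ ≤ KK l) :
    opNorm (transferT l E a) ≤ tc l := by
  have e : transferT l E a = (E - l * a) • !![1, 0; 0, 0] + !![0, -1; 1, 0] := by
    ext i j; fin_cases i <;> fin_cases j <;> simp [transferT]
  have ht : (transferT l E a).trace = E - l * a := by simp [transferT, Matrix.trace_fin_two]
  rw [ht] at h
  rw [e]
  refine (opNorm_add _ _).trans ?_
  rw [opNorm_smul]
  unfold tc
  have := opNorm_nonneg !![1, 0; 0, 0]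
  gcongr

/-- final constant -/
noncomputable def DD (l : ℝ) : ℝ := opNorm 1 + 2 * tc l + tc l * tc l + 1

lemma DD_pos (l : ℝ) : 0 < DD l := by
  have h1 := tc_nonneg l
  have h2 := opNorm_nonneg (1 : Mt)
  unfold DD; positivity

lemma opNorm_RR {l : ℝ} {A B X : Mt} {r : ℝ} (hA : opNorm A ≤ tc l) (hB : opNorm B ≤ tc l)
    (h : RR A B X r) : opNorm X ≤ DD l * r := by
  obtain ⟨c0, c1, c2, c3, rfl, hc⟩ := h
  have ht := tc_nonneg l
  have h1 := opNorm_nonneg (1 : Mt)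
  have hAB : opNorm (A * B) ≤ tc l * tc l :=
    (opNorm_mul A B).trans (mul_le_mul hA hB (opNorm_nonneg _) ht)
  have b0 : opNorm (1 : Mt) ≤ DD l := by unfold DD; nlinarith
  have b1 : opNorm A ≤ DD l := by unfold DD; nlinarith
  have b2 : opNorm B ≤ DD l := by unfold DD; nlinarith
  have b3 : opNorm (A * B) ≤ DD l := by unfold DD; nlinarith
  have s1 := opNorm_add (c0 • (1 : Mt) + c1 • A + c2 • B) (c3 • (A * B))
  have s2 := opNorm_add (c0 • (1 : Mt) + c1 • A) (c2 • B)
  have s3 := opNorm_add (c0 • (1 : Mt)) (c1 • A)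
  simp only [opNorm_smul] at s1 s2 s3
  have t0 := mul_le_mul_of_nonneg_left b0 (norm_nonneg c0)
  have t1 := mul_le_mul_of_nonneg_left b1 (norm_nonneg c1)
  have t2 := mul_le_mul_of_nonneg_left b2 (norm_nonneg c2)
  have t3 := mul_le_mul_of_nonneg_left b3 (norm_nonneg c3)
  have t4 := mul_le_mul_of_nonneg_left hc (DD_pos l).le
  linarith

lemma transferM_bit (l : ℝ) (E : ℂ) (w : List Bool) :
    transferM l E (w.map bit) = Mw (transferT l E 0) (transferT l E 1) w := by
  induction w with
  | nil => rfl
  | cons a w ih => cases a <;> simp [transferM, Mw, ih, bit]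

lemma choose_k (n : ℕ) (hn : 1 ≤ n) : ∃ k : ℕ, 2 * n * 2 ^ k < 3 ^ k ∧
    (k : ℝ) ≤ Real.log (2 * n) / Real.log (3 / 2) + 1 := by
  have hl : 0 < Real.log (3 / 2) := Real.log_pos (by norm_num)
  have hn' : (1 : ℝ) ≤ n := by exact_mod_cast hn
  have h0 : 0 ≤ Real.log (2 * n) / Real.log (3 / 2) :=
    div_nonneg (Real.log_nonneg (by linarith)) hl.le
  refine ⟨⌊Real.log (2 * n) / Real.log (3 / 2)⌋₊ + 1, ?_, ?_⟩
  · have h1 := Nat.lt_floor_add_one (Real.log (2 * n) / Real.log (3 / 2))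
    set k := ⌊Real.log (2 * n) / Real.log (3 / 2)⌋₊ + 1 with hk
    have h2 : Real.log (2 * n) < k * Real.log (3 / 2) := by
      rw [div_lt_iff₀ hl] at h1
      rw [hk]; push_cast; exact h1
    rw [← Real.log_pow, Real.log_lt_log_iff (by positivity) (by positivity), div_pow,
      lt_div_iff₀ (by positivity)] at h2
    exact_mod_cast h2
  · push_cast
    have := Nat.floor_le h0
    linarith

end SturmBound

theorem transfer_matrices_polynomially_bounded_on_Walpha
    (α : ℝ) (hirr : Irrational α) (hα : α ∈ Set.Ioo (0 : ℝ) 1) (hbd : BoundedDensity α)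
    (lam : ℝ) (hlam : lam ≠ 0) :
    ∃ C > (0 : ℝ), ∃ μ > (0 : ℝ), ∀ w ∈ Walpha α, ∀ θ' ∈ Set.Ico (0 : ℝ) 1,
      ∀ H : lp (fun _ : ℤ => ℂ) 2 →L[ℂ] lp (fun _ : ℤ => ℂ) 2,
        (∀ u : lp (fun _ : ℤ => ℂ) 2, ∀ n : ℤ,
      H u n = u (n + 1) + u (n - 1) + (lam * sturmian α θ' n : ℝ) * u n) →
        ∀ E ∈ spectrum ℂ H,
          opNorm (transferM lam E w) ≤ C * (w.length : ℝ) ^ μ := by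
  obtain ⟨G, hG, hsum⟩ := SturmBound.sum_bound hbd
  have hc := SturmBound.C0_gt lam
  have hlc : 0 < Real.log (SturmBound.C0 lam) := Real.log_pos hc
  have hl : 0 < Real.log (3 / 2) := Real.log_pos (by norm_num)
  have hD := SturmBound.DD_pos lam
  set c := SturmBound.C0 lam with hcdef
  set μ : ℝ := Real.log c * G / Real.log (3 / 2) with hμ
  have hμ0 : 0 < μ := by positivity
  refine ⟨SturmBound.DD lam * (Real.exp (2 * (Real.log c * G)) * 2 ^ μ), by positivity, μ, hμ0, ?_⟩
  rintro w ⟨θ, -, hne, k0, hw⟩ θ' - H hH E hE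
  have he := SturmBound.spec_noesc hirr hα lam θ' H hH E hE
  have hw' : w = (SturmBound.win α θ k0 w.length).map SturmBound.bit := by
    conv_lhs => rw [hw]
    simp only [List.bind_eq_flatMap, List.pure_def, ← List.map_eq_flatMap]
    rw [SturmBound.win, List.map_map, List.map_map]
    refine List.map_congr_left fun i _ => ?_
    simp only [Function.comp, SturmBound.sturmian_bit]
  have hlen : (SturmBound.win α θ k0 w.length).length = w.length := by simp [SturmBound.win]
  have hn : 1 ≤ w.length := List.length_pos_iff.mpr hne
  have hn' : (1 : ℝ) ≤ w.length := by exact_mod_cast hn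
  obtain ⟨k, hk1, hk2⟩ := SturmBound.choose_k w.length hn
  have hRR := SturmBound.level_zero hirr hα lam E he k _
    (SturmBound.win_Lng hα θ k0 w.length) (by rw [hlen]; exact hk1)
  have htb := SturmBound.tb_all (SturmBound.bb_pos hirr hα) he 0
  have hA := SturmBound.opNorm_T lam 0 E htb.x
  have hB := SturmBound.opNorm_T lam 1 E htb.y
  have hfin := SturmBound.opNorm_RR hA hB hRR
  rw [← SturmBound.transferM_bit, ← hw', ← hcdef] at hfin
  refine hfin.trans ?_
  rw [mul_assoc]
  refine mul_le_mul_of_nonneg_left ?_ hD.le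
  have h2n : (0 : ℝ) < 2 * w.length := by positivity
  have e1 : Real.exp (2 * (Real.log c * G)) * 2 ^ μ * (w.length : ℝ) ^ μ =
      Real.exp (Real.log c * (G * (Real.log (2 * w.length) / Real.log (3 / 2) + 2))) := by
    rw [mul_assoc, ← Real.mul_rpow (by norm_num) (by positivity), Real.rpow_def_of_pos h2n,
      ← Real.exp_add]
    congr 1
    rw [hμ]
    field_simp
    ring
  rw [e1, ← Real.rpow_natCast, Real.rpow_def_of_pos (by linarith)]
  refine Real.exp_le_exp.mpr (mul_le_mul_of_nonneg_left ((hsum k).trans ?_) hlc.le)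
  refine mul_le_mul_of_nonneg_left ?_ hG.le
  linarith
end

section
/- Let α ∈ (0,1) be an irrational bounded density number and let λ ∈ ℝ \ {0}. Then there exist constants C > 0 and μ > 0 such that for every E in the spectrum of H_{λ,α,θ'} for some θ' ∈ [0,1) and every nonempty prefix w of the infinite word c_α, one has ‖M(λ,E,w)‖ ≤ C·|w|^μ. -/
open scoped Classical

section TracePart

theorem seq_forward (x : ℂ) (t : ℕ → ℂ) (hx : 2 < ‖x‖)
    (ht : ∀ p, t (p + 2) = x * t (p + 1) - t p) (h1 : 2 < ‖t 1‖) (h0 : ‖t 0‖ < ‖t 1‖) (p : ℕ) :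
    2 < ‖t (p + 1)‖ ∧ ‖t p‖ < ‖t (p + 1)‖ := by
  induction p with
  | zero => exact ⟨h1, h0⟩
  | succ p ih =>
    obtain ⟨i1, i2⟩ := ih
    have h : ‖x‖ * ‖t (p + 1)‖ - ‖t p‖ ≤ ‖t (p + 2)‖ := by
      rw [ht, ← norm_mul]; exact norm_sub_norm_le _ _
    have : ‖t (p + 1)‖ < ‖t (p + 2)‖ := by nlinarith
    exact ⟨by linarith, this⟩

theorem seq_forward2 (x : ℂ) (t : ℕ → ℂ) (hx : 2 < ‖x‖)
    (ht : ∀ p, t (p + 2) = x * t (p + 1) - t p) (h1 : 2 < ‖t 1‖) (h0 : ‖t 0‖ < ‖t 1‖) (p : ℕ) :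
    ‖x‖ < ‖t (p + 2)‖ := by
  obtain ⟨i1, i2⟩ := seq_forward x t hx ht h1 h0 p
  have h : ‖x‖ * ‖t (p + 1)‖ - ‖t p‖ ≤ ‖t (p + 2)‖ := by
    rw [ht, ← norm_mul]; exact norm_sub_norm_le _ _
  nlinarith

theorem seq_backward (x : ℂ) (hx : 2 < ‖x‖) (a : ℕ) : ∀ (t : ℕ → ℂ)
    (_ : ∀ p, t (p + 2) = x * t (p + 1) - t p) (_ : 2 < ‖t (a + 1)‖)
    (_ : ‖t (a + 2)‖ < ‖t (a + 1)‖),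
    2 < ‖t 0‖ ∧ ‖t 1‖ < ‖t 0‖ := by
  induction a with
  | zero =>
    intro t ht h1 h2
    have h : ‖x‖ * ‖t 1‖ - ‖t 2‖ ≤ ‖t 0‖ := by
      have : t 0 = x * t 1 - t 2 := by rw [ht 0]; ring
      rw [this, ← norm_mul]; exact norm_sub_norm_le _ _
    simp only [zero_add] at *
    constructor <;> nlinarith
  | succ a ih =>
    intro t ht h1 h2
    have := ih (fun p => t (p + 1)) (fun p => ht (p + 1)) h1 h2
    simp only [zero_add] at this
    obtain ⟨i1, i2⟩ := this
    have h : ‖x‖ * ‖t 1‖ - ‖t 2‖ ≤ ‖t 0‖ := by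
      have : t 0 = x * t 1 - t 2 := by rw [ht 0]; ring
      rw [this, ← norm_mul]; exact norm_sub_norm_le _ _
    simp only [zero_add, Nat.reduceAdd] at *
    constructor <;> nlinarith

theorem seq_backward2 (x : ℂ) (hx : 2 < ‖x‖) (a : ℕ) (t : ℕ → ℂ)
    (ht : ∀ p, t (p + 2) = x * t (p + 1) - t p) (h1 : 2 < ‖t (a + 1)‖)
    (h2 : ‖t (a + 2)‖ ≤ ‖x‖) :
    2 < ‖t 0‖ ∧ ‖t 1‖ < ‖t 0‖ := by
  have h : ‖x‖ * ‖t (a + 1)‖ - ‖t (a + 2)‖ ≤ ‖t a‖ := by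
    have : t a = x * t (a + 1) - t (a + 2) := by rw [ht a]; ring
    rw [this, ← norm_mul]; exact norm_sub_norm_le _ _
  have h3 : ‖t (a + 1)‖ < ‖t a‖ := by nlinarith
  cases a with
  | zero => exact ⟨by linarith, h3⟩
  | succ a => exact seq_backward x hx a t ht (by linarith) h3

theorem seq_inv (x : ℂ) (t : ℕ → ℂ)
    (ht : ∀ p, t (p + 2) = x * t (p + 1) - t p) (p : ℕ) :
    t p ^ 2 + t (p + 1) ^ 2 + x ^ 2 - x * t p * t (p + 1)
      = t 0 ^ 2 + t 1 ^ 2 + x ^ 2 - x * t 0 * t 1 := by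
  induction p with
  | zero => simp
  | succ p ih => rw [← ih, ht p]; ring

/-- abstract trace system: `x k` the traces, `y k` the traces of consecutive products. -/
structure TrSys (L : ℝ) (a : ℕ → ℕ) (x y : ℕ → ℂ) where
  t : ℕ → ℕ → ℂ
  ha : ∀ k, 1 ≤ a (k + 1)
  hrec : ∀ k p, t k (p + 2) = x (k + 1) * t k (p + 1) - t k p
  t0 : ∀ k, t k 0 = x k
  t1 : ∀ k, t k 1 = y k
  ta : ∀ k, t k (a (k + 1)) = x (k + 2)
  ta1 : ∀ k, t k (a (k + 1) + 1) = y (k + 1)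
  x0 : x 0 = 2
  inv0 : x 0 ^ 2 + y 0 ^ 2 + x 1 ^ 2 - x 1 * x 0 * y 0 = 4 + (L : ℂ) ^ 2

def Esc (x y : ℕ → ℂ) (k : ℕ) : Prop := 2 < ‖x (k + 1)‖ ∧ 2 < ‖y k‖ ∧ ‖x k‖ < ‖y k‖

theorem TrSys.esc_succ {L a x y} (S : TrSys L a x y) {k : ℕ} (h : Esc x y k) :
    Esc x y (k + 1) := by
  obtain ⟨h1, h2, h3⟩ := h
  rw [← S.t1] at h2 h3
  rw [← S.t0] at h3
  obtain ⟨b, hb⟩ : ∃ b, a (k + 1) = b + 1 := ⟨a (k + 1) - 1, by have := S.ha k; omega⟩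
  have e1 := S.ta k
  have e2 := S.ta1 k
  rw [hb] at e1 e2
  have f1 := seq_forward _ _ h1 (S.hrec k) h2 h3
  have f2 := seq_forward2 _ _ h1 (S.hrec k) h2 h3 b
  refine ⟨?_, ?_, ?_⟩
  · rw [← e1]; exact (f1 b).1
  · rw [← e2]; exact (f1 (b + 1)).1
  · rw [← e2]; exact f2

theorem TrSys.esc_big {L a x y} (S : TrSys L a x y) {k : ℕ} (h : Esc x y k) (n : ℕ)
    (hn : k + 1 ≤ n) : 2 < ‖x n‖ := by
  have : ∀ j, Esc x y (k + j) := by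
    intro j
    induction j with
    | zero => exact h
    | succ j ih => exact S.esc_succ ih
  obtain ⟨j, rfl⟩ := Nat.exists_eq_add_of_le hn
  have := (this j).1
  rwa [show k + 1 + j = k + j + 1 by ring]

theorem TrSys.noP {L a x y} (S : TrSys L a x y) (k : ℕ) :
    ¬ (2 < ‖x (k + 1)‖ ∧ 2 < ‖x k‖ ∧ ‖y k‖ ≤ ‖x k‖) := by
  induction k with
  | zero => rintro ⟨-, h, -⟩; rw [S.x0] at h; simp at h
  | succ k ih =>
    rintro ⟨h1, h2, h3⟩
    apply ih
    obtain ⟨b, hb⟩ : ∃ b, a (k + 1) = b + 1 := ⟨a (k + 1) - 1, by have := S.ha k; omega⟩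
    have e1 := S.ta k
    have e2 := S.ta1 k
    rw [hb] at e1 e2
    have := seq_backward2 _ h2 b (S.t k) (S.hrec k) (by rw [e1]; exact h1) (by rw [e2]; exact h3)
    rw [S.t0, S.t1] at this
    exact ⟨h2, this.1, this.2.le⟩

theorem TrSys.inv {L a x y} (S : TrSys L a x y) (k : ℕ) :
    x k ^ 2 + y k ^ 2 + x (k + 1) ^ 2 - x (k + 1) * x k * y k = 4 + (L : ℂ) ^ 2 := by
  induction k with
  | zero => exact S.inv0
  | succ k ih =>
    have := seq_inv _ _ (S.hrec k) (a (k + 1))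
    rw [S.ta, S.ta1, S.t0, S.t1] at this
    rw [← ih, ← this]; ring

theorem inv_norm {L : ℝ} {u v w : ℂ} (h : u ^ 2 + v ^ 2 + w ^ 2 - w * u * v = 4 + (L : ℂ) ^ 2) :
    ‖w‖ ^ 2 ≤ ‖w‖ * ‖u‖ * ‖v‖ + ‖u‖ ^ 2 + ‖v‖ ^ 2 + (4 + L ^ 2) := by
  have : w ^ 2 = (w * u * v + (4 + (L : ℂ) ^ 2)) - u ^ 2 - v ^ 2 := by rw [← h]; ring
  calc ‖w‖ ^ 2 = ‖w ^ 2‖ := by rw [norm_pow]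
    _ ≤ ‖w * u * v + (4 + (L : ℂ) ^ 2)‖ + ‖u ^ 2‖ + ‖v ^ 2‖ := by
      rw [this]
      exact (norm_sub_le _ _).trans (add_le_add_left (norm_sub_le _ _) _)
    _ ≤ (‖w * u * v‖ + ‖4 + (L : ℂ) ^ 2‖) + ‖u ^ 2‖ + ‖v ^ 2‖ := by
      gcongr; exact norm_add_le _ _
    _ = _ := by
      have : ‖4 + (L : ℂ) ^ 2‖ = 4 + L ^ 2 := by
        have : (4 + (L : ℂ) ^ 2) = ((4 + L ^ 2 : ℝ) : ℂ) := by push_cast; ring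
        rw [this, Complex.norm_real, Real.norm_of_nonneg (by positivity)]
      rw [this, norm_mul, norm_mul, norm_pow, norm_pow]; ring

theorem TrSys.x_bound {L a x y} (S : TrSys L a x y) (hE : ∀ k, ¬ Esc x y k) (k : ℕ) :
    ‖x k‖ ≤ 16 + L ^ 2 := by
  cases k with
  | zero => rw [S.x0]; simp; nlinarith [sq_nonneg L]
  | succ k =>
    by_contra hc
    push Not at hc
    have hL := sq_nonneg L
    have h1 : 2 < ‖x (k + 1)‖ := by linarith
    have hp := S.noP k
    have he := hE k
    unfold Esc at he
    by_cases hu : 2 < ‖x k‖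
    · by_cases hw : ‖y k‖ ≤ ‖x k‖
      · exact hp ⟨h1, hu, hw⟩
      · push Not at hw
        exact he ⟨h1, by linarith, hw⟩
    · push Not at hu
      by_cases hw : 2 < ‖y k‖
      · exact he ⟨h1, hw, by linarith⟩
      · push Not at hw
        have := inv_norm (S.inv k)
        have h3 : ‖x (k+1)‖ * ‖x k‖ * ‖y k‖ ≤ ‖x (k+1)‖ * 2 * 2 := by gcongr
        have h4 : ‖x k‖ ^ 2 ≤ 2 ^ 2 := by gcongr
        have h5 : ‖y k‖ ^ 2 ≤ 2 ^ 2 := by gcongr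
        nlinarith

def Kc (L : ℝ) : ℝ := 3 * (16 + L ^ 2) ^ 2 + 5 + L ^ 2

theorem TrSys.x_bound' {L a x y} (S : TrSys L a x y) (hE : ∀ k, ¬ Esc x y k) (k : ℕ) :
    ‖x k‖ ≤ Kc L := by
  have := S.x_bound hE k
  unfold Kc; nlinarith [sq_nonneg L]

theorem TrSys.y_bound {L a x y} (S : TrSys L a x y) (hE : ∀ k, ¬ Esc x y k) (k : ℕ) :
    ‖y k‖ ≤ Kc L := by
  by_contra hc
  push Not at hc
  unfold Kc at hc
  have hL := sq_nonneg L
  have h1 := S.x_bound hE k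
  have h2 := S.x_bound hE (k + 1)
  have := inv_norm (L := L) (u := x k) (v := x (k + 1)) (w := y k) (by rw [← S.inv k]; ring)
  set K := 16 + L ^ 2
  have hK : 16 ≤ K := by simp only [K]; linarith
  have h3 : ‖y k‖ * ‖x k‖ * ‖x (k+1)‖ ≤ ‖y k‖ * K * K := by gcongr
  have h4 : ‖x k‖ ^ 2 ≤ K ^ 2 := by gcongr
  have h5 : ‖x (k+1)‖ ^ 2 ≤ K ^ 2 := by gcongr
  have h6 : 1 < ‖y k‖ := by nlinarith
  nlinarith [mul_pos (sub_pos.2 h6) (sub_pos.2 hc)]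

end TracePart
section MatPart

abbrev M2 := Matrix (Fin 2) (Fin 2) ℂ

def Sp (A B X : M2) (r : ℝ) : Prop :=
  ∃ x0 x1 x2 x3 : ℂ, X = x0 • (1 : M2) + x1 • A + x2 • B + x3 • (A * B) ∧
    ‖x0‖ + ‖x1‖ + ‖x2‖ + ‖x3‖ ≤ r

theorem Sp.mono {A B X : M2} {r s : ℝ} (h : Sp A B X r) (hrs : r ≤ s) : Sp A B X s := by
  obtain ⟨x0, x1, x2, x3, h1, h2⟩ := h
  exact ⟨x0, x1, x2, x3, h1, h2.trans hrs⟩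

theorem Sp.add {A B X Y : M2} {r s : ℝ} (h : Sp A B X r) (h' : Sp A B Y s) :
    Sp A B (X + Y) (r + s) := by
  obtain ⟨x0, x1, x2, x3, rfl, h2⟩ := h
  obtain ⟨y0, y1, y2, y3, rfl, h3⟩ := h'
  refine ⟨x0 + y0, x1 + y1, x2 + y2, x3 + y3, by module, ?_⟩
  have := norm_add_le x0 y0
  have := norm_add_le x1 y1
  have := norm_add_le x2 y2
  have := norm_add_le x3 y3
  linarith

theorem Sp.smul {A B X : M2} {r : ℝ} (c : ℂ) (h : Sp A B X r) :
    Sp A B (c • X) (‖c‖ * r) := by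
  obtain ⟨x0, x1, x2, x3, rfl, h2⟩ := h
  refine ⟨c * x0, c * x1, c * x2, c * x3, by module, ?_⟩
  simp only [norm_mul]
  have := mul_le_mul_of_nonneg_left h2 (norm_nonneg c)
  linarith

theorem Sp.one (A B : M2) : Sp A B 1 1 := ⟨1, 0, 0, 0, by simp, by simp⟩
theorem Sp.left (A B : M2) : Sp A B A 1 := ⟨0, 1, 0, 0, by simp, by simp⟩
theorem Sp.right (A B : M2) : Sp A B B 1 := ⟨0, 0, 1, 0, by simp, by simp⟩
theorem Sp.prod (A B : M2) : Sp A B (A * B) 1 := ⟨0, 0, 0, 1, by simp, by simp⟩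

theorem Sp.trans {A B A' B' X : M2} {r s : ℝ} (h : Sp A B X r) (h0 : Sp A' B' 1 s)
    (h1 : Sp A' B' A s) (h2 : Sp A' B' B s) (h3 : Sp A' B' (A * B) s) (hs : 0 ≤ s) :
    Sp A' B' X (r * s) := by
  obtain ⟨x0, x1, x2, x3, rfl, h⟩ := h
  refine ((((h0.smul x0).add (h1.smul x1)).add (h2.smul x2)).add (h3.smul x3)).mono ?_
  have := mul_le_mul_of_nonneg_right h hs
  linarith

theorem ch2 (A : M2) (h : A.det = 1) : A * A = A.trace • A - 1 := by
  rw [Matrix.det_fin_two] at h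
  ext i j
  fin_cases i <;> fin_cases j <;>
    simp [Matrix.mul_apply, Fin.sum_univ_two, Matrix.trace_fin_two] <;> first | ring1 | linear_combination -h | linear_combination h

theorem ba2 (A B : M2) :
    B * A = -(A * B) + A.trace • B + B.trace • A + ((A * B).trace - A.trace * B.trace) • (1 : M2) := by
  ext i j
  fin_cases i <;> fin_cases j <;>
    simp [Matrix.mul_apply, Fin.sum_univ_two, Matrix.trace_fin_two] <;> ring

theorem aba2 (A B : M2) (h : A.det = 1) :
    A * B * A = (A * B).trace • A - B.trace • (1 : M2) + B := by
  rw [Matrix.det_fin_two] at h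
  ext i j
  fin_cases i <;> fin_cases j <;>
    simp [Matrix.mul_apply, Fin.sum_univ_two, Matrix.trace_fin_two] 
  · linear_combination (-B 1 1) * h
  · linear_combination (B 0 1) * h
  · linear_combination (B 1 0) * h
  · linear_combination (-B 0 0) * h

theorem adj2 (A : M2) : A.adjugate = A.trace • (1 : M2) - A := by
  rw [Matrix.adjugate_fin_two]
  ext i j
  fin_cases i <;> fin_cases j <;> simp [Matrix.trace_fin_two]

/-- growth constant -/
def cG (K : ℝ) : ℝ := 1 + 4 * K + K ^ 2

structure Good (K : ℝ) (A B : M2) : Prop where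
  K1 : 1 ≤ K
  dA : A.det = 1
  dB : B.det = 1
  tA : ‖A.trace‖ ≤ K
  tB : ‖B.trace‖ ≤ K
  tAB : ‖(A * B).trace‖ ≤ K

theorem cG_one {K : ℝ} (h : 1 ≤ K) : 1 ≤ cG K := by unfold cG; nlinarith

theorem Sp.nonneg {A B X : M2} {r : ℝ} (h : Sp A B X r) : 0 ≤ r := by
  obtain ⟨x0, x1, x2, x3, -, h⟩ := h
  exact le_trans (by positivity) h

theorem Sp.mulB {K : ℝ} {A B X : M2} {r : ℝ} (g : Good K A B) (h : Sp A B X r) :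
    Sp A B (X * B) (r * cG K) := by
  have hK := g.K1
  have key : ∀ {Y : M2}, Sp A B Y (1 + K) → Sp A B Y (cG K) :=
    fun h => h.mono (by unfold cG; nlinarith)
  obtain ⟨x0, x1, x2, x3, rfl, h⟩ := h
  have e0 : Sp A B B (cG K) := (Sp.right A B).mono (cG_one hK)
  have e1 : Sp A B (A * B) (cG K) := (Sp.prod A B).mono (cG_one hK)
  have e2 : Sp A B (B * B) (cG K) := by
    apply key
    rw [ch2 B g.dB]
    refine ⟨-1, 0, B.trace, 0, by module, ?_⟩
    simp; exact g.tB
  have e3 : Sp A B (A * B * B) (cG K) := by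
    apply key
    rw [mul_assoc, ch2 B g.dB]
    refine ⟨0, -1, 0, B.trace, by simp [mul_sub]; module, ?_⟩
    simp; exact g.tB
  have := (((e0.smul x0).add (e1.smul x1)).add (e2.smul x2)).add (e3.smul x3)
  simp only [add_mul, smul_mul_assoc, one_mul]
  refine this.mono ?_
  have := mul_le_mul_of_nonneg_right h (zero_le_one.trans (cG_one hK))
  linarith

theorem Sp.mulA' {K : ℝ} {A B X : M2} {r : ℝ} (g : Good K A B) (h : Sp A B X r) :
    Sp A B (X * A) (r * (1 + 3 * K + K ^ 2)) := by
  have hK := g.K1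
  obtain ⟨x0, x1, x2, x3, rfl, h⟩ := h
  have hc : 1 ≤ 1 + 3 * K + K ^ 2 := by nlinarith
  have e0 : Sp A B A (1 + 3 * K + K ^ 2) := (Sp.left A B).mono hc
  have e1 : Sp A B (A * A) (1 + 3 * K + K ^ 2) := by
    rw [ch2 A g.dA]
    refine ⟨-1, A.trace, 0, 0, by module, ?_⟩
    have := g.tA
    simp; nlinarith
  have e2 : Sp A B (B * A) (1 + 3 * K + K ^ 2) := by
    rw [ba2]
    refine ⟨(A * B).trace - A.trace * B.trace, B.trace, A.trace, -1, by module, ?_⟩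
    have h1 := norm_sub_le (A * B).trace (A.trace * B.trace)
    rw [norm_mul] at h1
    have h2 : ‖A.trace‖ * ‖B.trace‖ ≤ K * K := by
      gcongr
      exacts [g.tA, g.tB]
    have := g.tA
    have := g.tB
    have := g.tAB
    rw [norm_neg, norm_one]
    nlinarith
  have e3 : Sp A B (A * B * A) (1 + 3 * K + K ^ 2) := by
    rw [aba2 A B g.dA]
    refine ⟨-B.trace, (A * B).trace, 1, 0, by module, ?_⟩
    have := g.tB
    have := g.tAB
    rw [norm_neg, norm_one, norm_zero]
    nlinarith
  have := (((e0.smul x0).add (e1.smul x1)).add (e2.smul x2)).add (e3.smul x3)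
  simp only [add_mul, smul_mul_assoc, one_mul]
  refine this.mono ?_
  have := mul_le_mul_of_nonneg_right h (zero_le_one.trans hc)
  linarith

theorem Sp.mulA {K : ℝ} {A B X : M2} {r : ℝ} (g : Good K A B) (h : Sp A B X r) :
    Sp A B (X * A) (r * cG K) := by
  refine (h.mulA' g).mono ?_
  have := g.K1
  exact mul_le_mul_of_nonneg_left (by unfold cG; linarith) h.nonneg

theorem Sp.mulAinv {K : ℝ} {A B X : M2} {r : ℝ} (g : Good K A B) (h : Sp A B X r) :
    Sp A B (X * A.adjugate) (r * cG K) := by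
  have := (h.smul A.trace).add ((h.mulA' g).smul (-1))
  have e : X * A.adjugate = A.trace • X + (-1 : ℂ) • (X * A) := by
    rw [adj2, mul_sub]; simp [sub_eq_add_neg]
  rw [e]
  refine this.mono ?_
  have h1 := h.nonneg
  have h2 := mul_le_mul_of_nonneg_right g.tA h1
  simp only [norm_neg, norm_one]
  unfold cG
  linarith

theorem Sp.mulBpow {K : ℝ} {A B X : M2} {r : ℝ} (g : Good K A B) (h : Sp A B X r) (p : ℕ) :
    Sp A B (X * B ^ p) (r * cG K ^ p) := by
  induction p with
  | zero => simpa using h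
  | succ p ih => 
    have := ih.mulB g
    rwa [mul_assoc, mul_assoc, ← pow_succ, ← pow_succ] at this

theorem Sp.mulAinvpow {K : ℝ} {A B X : M2} {r : ℝ} (g : Good K A B) (h : Sp A B X r) (p : ℕ) :
    Sp A B (X * A.adjugate ^ p) (r * cG K ^ p) := by
  induction p with
  | zero => simpa using h
  | succ p ih => 
    have := ih.mulAinv g
    rwa [mul_assoc, mul_assoc, ← pow_succ, ← pow_succ] at this

theorem Sp.up {K : ℝ} {A B C X : M2} {r : ℝ} {a : ℕ} (g : Good K B C) (hC : C = A * B ^ a)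
    (h : Sp A B X r) : Sp B C X (r * cG K ^ (a + 2)) := by
  have hc := cG_one g.K1
  have hm : ∀ j ≤ a + 2, (1 : ℝ) * cG K ^ j ≤ cG K ^ (a + 2) := by
    intro j hj; rw [one_mul]; exact pow_le_pow_right₀ hc hj
  have hBB : B * B.adjugate = 1 := by rw [Matrix.mul_adjugate, g.dA, one_smul]
  have hcomm : Commute B B.adjugate := by
    unfold Commute SemiconjBy; rw [Matrix.mul_adjugate, Matrix.adjugate_mul]
  have hA : A = C * B.adjugate ^ a := by
    rw [hC, mul_assoc, ← hcomm.mul_pow, hBB, one_pow, mul_one]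
  have h1 : Sp B C A (1 * cG K ^ a) := by
    rw [hA]; exact (Sp.right B C).mulAinvpow g a
  refine h.trans ((Sp.one B C).mono (one_le_pow₀ hc)) (h1.mono (hm _ (by omega)))
    ((Sp.left B C).mono (one_le_pow₀ hc)) ?_ (by positivity)
  have := h1.mulA g
  rw [mul_assoc, ← pow_succ] at this
  exact this.mono (hm _ (by omega))

theorem Sp.down {K : ℝ} {A B C X : M2} {r : ℝ} {a : ℕ} (g : Good K A B) (hC : C = A * B ^ a)
    (h : Sp B C X r) : Sp A B X (r * cG K ^ (a + 2)) := by
  have hc := cG_one g.K1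
  have hm : ∀ j ≤ a + 2, (1 : ℝ) * cG K ^ j ≤ cG K ^ (a + 2) := by
    intro j hj; rw [one_mul]; exact pow_le_pow_right₀ hc hj
  refine h.trans ((Sp.one _ _).mono (one_le_pow₀ hc)) ((Sp.right _ _).mono (one_le_pow₀ hc))
    ?_ ?_ (by positivity)
  · rw [hC]
    exact ((Sp.left A B).mulBpow g a).mono (hm _ (by omega))
  · rw [hC, ← mul_assoc]
    have := (((Sp.right A B).mulA g).mulBpow g a)
    rw [mul_assoc 1, ← pow_succ'] at this
    exact this.mono (hm _ (by omega))

/-- transfer matrices of standard words with the modified `M_{-1}`. -/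
def Mk (lam : ℝ) (E : ℂ) (a : ℕ → ℕ) : ℕ → M2
  | 0 => !![1, -lam; 0, 1]
  | 1 => transferT lam E 0
  | (k + 2) => Mk lam E a k * Mk lam E a (k + 1) ^ a (k + 1)

theorem Mk_det (lam : ℝ) (E : ℂ) (a : ℕ → ℕ) (k : ℕ) : (Mk lam E a k).det = 1 := by
  induction k using Nat.twoStepInduction with
  | zero => simp [Mk]
  | one => simp [Mk, transferT]
  | more k h1 h2 => simp [Mk, h1, h2]

theorem transferM_append (lam : ℝ) (E : ℂ) (u v : List ℝ) :
    transferM lam E (u ++ v) = transferM lam E v * transferM lam E u := by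
  induction u with
  | nil => simp [transferM]
  | cons x u ih => simp [transferM, ih, mul_assoc]

theorem transferM_rep (lam : ℝ) (E : ℂ) (u : List ℝ) (p : ℕ) :
    transferM lam E (List.replicate p u).flatten = transferM lam E u ^ p := by
  induction p with
  | zero => simp [transferM]
  | succ p ih => simp [List.replicate_succ, transferM_append, ih, pow_succ]

theorem transferM_rep' (lam : ℝ) (E : ℂ) (x : ℝ) (p : ℕ) :
    transferM lam E (List.replicate p x) = transferT lam E x ^ p := by
  induction p with
  | zero => simp [transferM]
  | succ p ih => simp [List.replicate_succ, transferM, ih, pow_succ]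

theorem transferT_one (lam : ℝ) (E : ℂ) (a : ℕ → ℕ) :
    transferT lam E 1 = Mk lam E a 0 * Mk lam E a 1 := by
  simp [transferT, Mk]
  ring

theorem transferM_sWord (lam : ℝ) (E : ℂ) (a : ℕ → ℕ) (ha : 1 ≤ a 1) (k : ℕ) :
    transferM lam E (sWord a (k + 1)) = Mk lam E a (k + 1) := by
  induction k using Nat.twoStepInduction with
  | zero => simp [Mk, sWord, transferM]
  | one =>
    obtain ⟨b, hb⟩ : ∃ b, a 1 = b + 1 := ⟨a 1 - 1, by omega⟩
    have e : Mk lam E a (1 + 1) = Mk lam E a 0 * Mk lam E a 1 ^ (a 1) := rfl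
    rw [e, hb]
    simp only [sWord, hb, transferM_append, transferM_rep', transferM, one_mul,
      transferT_one lam E a, Nat.add_sub_cancel, pow_succ']
    rw [mul_assoc]
    rfl
  | more k h1 h2 =>
    rw [sWord, transferM_append, transferM_rep, Mk, h1, h2]

/-- trace system attached to `Mk`. -/
def trSys (lam : ℝ) (E : ℂ) (a : ℕ → ℕ) (ha : ∀ k, 1 ≤ a (k + 1)) :
    TrSys lam a (fun k => (Mk lam E a k).trace)
      (fun k => (Mk lam E a k * Mk lam E a (k + 1)).trace) where
  t k p := (Mk lam E a k * Mk lam E a (k + 1) ^ p).trace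
  ha := ha
  hrec k p := by
    have : Mk lam E a k * Mk lam E a (k + 1) ^ (p + 2) =
      (Mk lam E a (k + 1)).trace • (Mk lam E a k * Mk lam E a (k + 1) ^ (p + 1))
        - Mk lam E a k * Mk lam E a (k + 1) ^ p := by
      rw [pow_add, pow_two, ch2 _ (Mk_det _ _ _ _), mul_sub, mul_sub, mul_one, pow_succ]
      simp
    rw [this, Matrix.trace_sub, Matrix.trace_smul, smul_eq_mul]
  t0 k := by simp
  t1 k := by simp
  ta k := by simp [Mk]
  ta1 k := by
    show (Mk lam E a k * Mk lam E a (k + 1) ^ (a (k + 1) + 1)).trace = _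
    rw [pow_succ, ← mul_assoc, ← Mk, Matrix.trace_mul_comm]
  x0 := by simp [Mk, Matrix.trace_fin_two]; norm_num
  inv0 := by
    simp [Mk, Matrix.trace_fin_two, transferT]; ring

theorem opNorm_bound : ∃ C : ℝ, 0 < C ∧ ∀ (X : M2) (r : ℝ), 0 ≤ r → (∀ i j, ‖X i j‖ ≤ r) →
    opNorm X ≤ C * r := by
  let f : (Fin 2 → Fin 2 → ℂ) →ₗ[ℂ] (EuclideanSpace ℂ (Fin 2) →L[ℂ] EuclideanSpace ℂ (Fin 2)) :=
    { toFun := fun X => Matrix.toEuclideanCLM (𝕜 := ℂ) (X : M2)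
      map_add' := fun X Y => map_add (Matrix.toEuclideanCLM (𝕜 := ℂ)) (X : M2) (Y : M2)
      map_smul' := fun c X => map_smul (Matrix.toEuclideanCLM (𝕜 := ℂ)) c (X : M2) }
  let F := LinearMap.toContinuousLinearMap f
  refine ⟨‖F‖ + 1, by positivity, fun X r hr h => ?_⟩
  let Y : Fin 2 → Fin 2 → ℂ := X
  have h1 : ‖F Y‖ ≤ ‖F‖ * ‖Y‖ := F.le_opNorm _
  have h2 : ‖Y‖ ≤ r := by
    rw [pi_norm_le_iff_of_nonneg hr]; intro i
    rw [pi_norm_le_iff_of_nonneg hr]; intro j; exact h i j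
  have h3 : opNorm X = ‖F Y‖ := rfl
  rw [h3]
  calc _ ≤ ‖F‖ * r := h1.trans (by gcongr)
    _ ≤ _ := by gcongr; linarith

theorem opNorm_Sp0 (lam K : ℝ) : ∃ C : ℝ, 0 < C ∧ ∀ (E : ℂ) (a : ℕ → ℕ) (X : M2) (r : ℝ),
    ‖E‖ ≤ K → Sp (Mk lam E a 0) (Mk lam E a 1) X r → opNorm X ≤ C * r := by
  obtain ⟨C, hC, h⟩ := opNorm_bound
  refine ⟨C * (2 + |lam| + |K|), by positivity, fun E a X r hE hX => ?_⟩
  have hr := hX.nonneg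
  rw [mul_assoc]
  apply h _ _ (by positivity)
  obtain ⟨x0, x1, x2, x3, rfl, hx⟩ := hX
  have hK := le_abs_self K
  have hE' : ‖E‖ ≤ 2 + |lam| + |K| := by have := abs_nonneg lam; linarith
  have hl : |lam| ≤ 2 + |lam| + |K| := by have := abs_nonneg K; linarith
  have h1 : 1 ≤ 2 + |lam| + |K| := by have := abs_nonneg K; have := abs_nonneg lam; linarith
  have h0 : 0 ≤ 2 + |lam| + |K| := by positivity
  have hEl : ‖E - lam‖ ≤ 2 + |lam| + |K| := by
    refine (norm_sub_le _ _).trans ?_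
    rw [Complex.norm_real, Real.norm_eq_abs]; linarith
  set D := 2 + |lam| + |K|
  have hd : ∀ (i j : Fin 2), ‖(1 : M2) i j‖ ≤ D ∧ ‖(Mk lam E a 0) i j‖ ≤ D ∧
      ‖(Mk lam E a 1) i j‖ ≤ D ∧ ‖(Mk lam E a 0 * Mk lam E a 1) i j‖ ≤ D := by
    intro i j
    rw [← transferT_one]
    fin_cases i <;> fin_cases j <;> simp [Mk, transferT, *]
  intro i j
  obtain ⟨d0, d1, d2, d3⟩ := hd i j
  simp only [Matrix.add_apply, Matrix.smul_apply, smul_eq_mul]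
  calc _ ≤ ‖x0‖ * D + ‖x1‖ * D + ‖x2‖ * D + ‖x3‖ * D := by
        refine (norm_add_le _ _).trans (add_le_add ((norm_add_le _ _).trans (add_le_add ((norm_add_le _ _).trans (add_le_add ?_ ?_)) ?_)) ?_) <;> rw [norm_mul] <;> gcongr
    _ = D * (‖x0‖ + ‖x1‖ + ‖x2‖ + ‖x3‖) := by ring
    _ ≤ _ := by gcongr

theorem prefix_flatten {u v w : List ℝ} {p : ℕ}
    (h : w <+: (List.replicate p u).flatten ++ v) :
    ∃ j ≤ p, ∃ w', w = (List.replicate j u).flatten ++ w' ∧ (w' <+: u ∨ w' <+: v) := by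
  induction p generalizing w with
  | zero => exact ⟨0, le_rfl, w, by simp, Or.inr (by simpa using h)⟩
  | succ p ih =>
    rw [List.replicate_succ, List.flatten_cons, List.append_assoc] at h
    rcases List.prefix_or_prefix_of_prefix h (List.prefix_append u _) with h1 | h1
    · exact ⟨0, by omega, w, by simp, Or.inl h1⟩
    · obtain ⟨w1, rfl⟩ := h1
      rw [List.prefix_append_right_inj] at h
      obtain ⟨j, hj, w', rfl, hw'⟩ := ih h
      exact ⟨j + 1, by omega, w', by simp [List.replicate_succ], hw'⟩

def As (a : ℕ → ℕ) (k : ℕ) : ℕ := ∑ j ∈ Finset.range k, (a (j + 1) + 2)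

theorem prefix_Sp (lam K : ℝ) (E : ℂ) (a : ℕ → ℕ) (ha : 1 ≤ a 1)
    (g : ∀ k, Good K (Mk lam E a k) (Mk lam E a (k + 1))) (k : ℕ) :
    ∀ w, (w <+: sWord a (k + 1) ∨ w <+: sWord a (k + 2)) →
      Sp (Mk lam E a k) (Mk lam E a (k + 1)) (transferM lam E w) (cG K ^ (As a (k + 1) + As a k)) := by
  have hc := cG_one (g 0).K1
  induction k with
  | zero =>
    have e : As a (0 + 1) + As a 0 = a 1 + 2 := by simp [As]
    rw [e]
    have key : ∀ j ≤ a 1, Sp (Mk lam E a 0) (Mk lam E a 1) (Mk lam E a 1 ^ j) (cG K ^ (a 1 + 2)) := by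
      intro j hj
      have := (Sp.one _ _).mulBpow (g 0) j
      rw [one_mul, one_mul] at this
      exact this.mono (pow_le_pow_right₀ hc (by omega))
    have key2 : Sp (Mk lam E a 0) (Mk lam E a 1) (Mk lam E a 2) (cG K ^ (a 1 + 2)) := by
      have := (Sp.left _ _).mulBpow (g 0) (a 1)
      rw [one_mul] at this
      exact this.mono (pow_le_pow_right₀ hc (by omega))
    have e1 : ∀ p, transferM lam E (List.replicate p 0) = Mk lam E a 1 ^ p := by
      intro p; rw [transferM_rep']; rfl
    rintro w (h | h)
    · have h : w <+: List.replicate 1 0 := by simpa [sWord] using h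
      rw [List.prefix_replicate_iff] at h
      rw [h.2, e1]
      exact key _ (by omega)
    · rw [zero_add, sWord, List.prefix_concat_iff] at h
      rcases h with h | h
      · rw [h]
        have := transferM_sWord lam E a ha 1
        rw [sWord] at this
        rw [this]; exact key2
      · rw [List.prefix_replicate_iff] at h
        rw [h.2, e1]
        exact key _ (by omega)
  | succ k ih =>
    have up : ∀ w, (w <+: sWord a (k + 1) ∨ w <+: sWord a (k + 2)) →
      Sp (Mk lam E a (k + 1)) (Mk lam E a (k + 2)) (transferM lam E w) 
        (cG K ^ (As a (k + 1) + As a k + (a (k + 1) + 2))) := by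
      intro w hw
      rw [pow_add]
      exact Sp.up (g (k + 1)) (by rw [Mk]) (ih w hw)
    have e1 : As a (k + 1) = As a k + (a (k + 1) + 2) := Finset.sum_range_succ _ _
    have e2 : As a (k + 2) = As a (k + 1) + (a (k + 2) + 2) := Finset.sum_range_succ _ _
    rintro w (h | h)
    · refine (up w (Or.inr h)).mono (pow_le_pow_right₀ hc ?_)
      rw [show k + 1 + 1 = k + 2 from rfl, e2]; omega
    · rw [show k + 1 + 2 = k + 3 from rfl, sWord] at h
      obtain ⟨j, hj, w', rfl, hw⟩ := prefix_flatten h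
      have h1 := (up w' hw.symm).mulBpow (g (k + 1)) j
      rw [← pow_add] at h1
      rw [transferM_append, transferM_rep, transferM_sWord _ _ _ ha]
      refine h1.mono (pow_le_pow_right₀ hc ?_)
      rw [show k + 1 + 1 = k + 2 from rfl, e2]; omega

theorem down_all (lam K : ℝ) (E : ℂ) (a : ℕ → ℕ)
    (g : ∀ k, Good K (Mk lam E a k) (Mk lam E a (k + 1))) (k : ℕ) (X : M2) (r : ℝ)
    (h : Sp (Mk lam E a k) (Mk lam E a (k + 1)) X r) :
    Sp (Mk lam E a 0) (Mk lam E a 1) X (r * cG K ^ As a k) := by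
  induction k generalizing r with
  | zero => simpa [As] using h
  | succ k ih =>
    have := ih _ (Sp.down (g k) (by rw [Mk]) h)
    rw [mul_assoc, ← pow_add] at this
    rwa [As, Finset.sum_range_succ, add_comm, ← As]

end MatPart
section CFPart

theorem cfGauss_mem {α : ℝ} (hirr : Irrational α) (hα : α ∈ Set.Ioo (0 : ℝ) 1) (k : ℕ) :
    Irrational (cfGauss α k) ∧ 0 < cfGauss α k ∧ cfGauss α k < 1 := by
  induction k with
  | zero => exact ⟨hirr, hα.1, hα.2⟩
  | succ k ih =>
    have h1 : Irrational (cfGauss α k)⁻¹ := irrational_inv_iff.2 ih.1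
    have h2 : Irrational (cfGauss α (k + 1)) := by
      rw [cfGauss, Int.fract]; exact h1.sub_intCast _
    refine ⟨h2, ?_, Int.fract_lt_one _⟩
    exact lt_of_le_of_ne (Int.fract_nonneg _) (Ne.symm h2.ne_zero)

theorem cfCoeff_pos {α : ℝ} (hirr : Irrational α) (hα : α ∈ Set.Ioo (0 : ℝ) 1) (k : ℕ) :
    1 ≤ cfCoeff α (k + 1) := by
  obtain ⟨-, h1, h2⟩ := cfGauss_mem hirr hα k
  rw [cfCoeff, Nat.add_sub_cancel]
  apply Nat.le_floor
  rw [Nat.cast_one]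
  exact (one_lt_inv_iff₀.2 ⟨h1, h2⟩).le

def Qn (a : ℕ → ℕ) : ℕ → ℕ
  | 0 => 0
  | 1 => 1
  | (k + 2) => a (k + 1) * Qn a (k + 1) + Qn a k

def Pn (a : ℕ → ℕ) : ℕ → ℤ
  | 0 => 1
  | 1 => 0
  | (k + 2) => a (k + 1) * Pn a (k + 1) + Pn a k

noncomputable def eN (α : ℝ) : ℕ → ℝ
  | 0 => 1
  | (k + 1) => eN α k * cfGauss α k

theorem eN_pos {α : ℝ} (hirr : Irrational α) (hα : α ∈ Set.Ioo (0 : ℝ) 1) (k : ℕ) :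
    0 < eN α k := by
  induction k with
  | zero => simp [eN]
  | succ k ih => rw [eN]; exact mul_pos ih (cfGauss_mem hirr hα k).2.1

theorem eN_lt {α : ℝ} (hirr : Irrational α) (hα : α ∈ Set.Ioo (0 : ℝ) 1) (k : ℕ) :
    eN α (k + 1) < eN α k := by
  have := (cfGauss_mem hirr hα k).2.2
  rw [eN]; nlinarith [eN_pos hirr hα k]

theorem eN_rec {α : ℝ} (hirr : Irrational α) (hα : α ∈ Set.Ioo (0 : ℝ) 1) (k : ℕ) :
    eN α (k + 2) = eN α k - cfCoeff α (k + 1) * eN α (k + 1) := by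
  obtain ⟨-, h1, h2⟩ := cfGauss_mem hirr hα k
  have h3 : ((⌊(cfGauss α k)⁻¹⌋₊ : ℕ) : ℝ) = ((⌊(cfGauss α k)⁻¹⌋ : ℤ) : ℝ) :=
    natCast_floor_eq_intCast_floor (inv_pos.2 h1).le
  rw [eN, eN, cfCoeff, Nat.add_sub_cancel, h3, cfGauss, Int.fract]
  field_simp

theorem QP_eq {α : ℝ} (hirr : Irrational α) (hα : α ∈ Set.Ioo (0 : ℝ) 1) (k : ℕ) :
    (Qn (cfCoeff α) k : ℝ) * α - Pn (cfCoeff α) k = (-1) ^ (k + 1) * eN α k := by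
  induction k using Nat.twoStepInduction with
  | zero => simp [Qn, Pn, eN]
  | one => simp [Qn, Pn, eN, cfGauss]
  | more k h1 h2 =>
    rw [eN_rec hirr hα, Qn, Pn]
    push_cast
    rw [pow_succ, pow_succ] at *
    linear_combination (cfCoeff α (k + 1) : ℝ) * h2 + h1

theorem QP_det (a : ℕ → ℕ) (k : ℕ) :
    (Qn a (k + 1) : ℤ) * Pn a k - Qn a k * Pn a (k + 1) = (-1) ^ k := by
  induction k with
  | zero => simp [Qn, Pn]
  | succ k ih =>
    rw [Qn, Pn, pow_succ, ← ih]; push_cast; ring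

theorem Qn_pos {a : ℕ → ℕ} (ha : ∀ k, 1 ≤ a (k + 1)) (k : ℕ) : 1 ≤ Qn a (k + 1) := by
  induction k with
  | zero => simp [Qn]
  | succ k ih => rw [Qn]; nlinarith [ha k]

theorem Qn_add {a : ℕ → ℕ} (ha : ∀ k, 1 ≤ a (k + 1)) (k : ℕ) :
    Qn a (k + 1) + Qn a k ≤ Qn a (k + 2) := by
  rw [Qn]; nlinarith [ha k]

theorem Qn_mono {a : ℕ → ℕ} (ha : ∀ k, 1 ≤ a (k + 1)) : Monotone (Qn a) := by
  apply monotone_nat_of_le_succ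
  intro k
  cases k with
  | zero => simp [Qn]
  | succ k => exact (Nat.le_add_right _ _).trans (Qn_add ha k)

theorem Qn_ge {a : ℕ → ℕ} (ha : ∀ k, 1 ≤ a (k + 1)) (k : ℕ) : k ≤ Qn a (k + 1) := by
  induction k with
  | zero => simp
  | succ k ih =>
    cases k with
    | zero => exact Qn_pos ha 1
    | succ k =>
      have := Qn_add ha (k + 1)
      have := Qn_pos ha k
      have e : k + 1 + 1 + 1 = k + 1 + 2 := rfl
      rw [e]; omega

theorem Qn_exp {a : ℕ → ℕ} (ha : ∀ k, 1 ≤ a (k + 1)) (k : ℕ) : 2 ^ k ≤ 2 * Qn a (k + 1) ^ 2 := by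
  induction k using Nat.twoStepInduction with
  | zero => simp [Qn]
  | one => have := Qn_pos ha 1; nlinarith
  | more k h1 h2 =>
    have h3 : Qn a (k + 2) + Qn a (k + 1) ≤ Qn a (k + 3) := Qn_add ha (k + 1)
    have h4 : Qn a (k + 1) ≤ Qn a (k + 2) := Qn_mono ha (by omega)
    have h5 : 2 * Qn a (k + 1) ≤ Qn a (k + 3) := by omega
    calc 2 ^ (k + 2) = 4 * 2 ^ k := by ring
      _ ≤ 4 * (2 * Qn a (k + 1) ^ 2) := by omega
      _ = 2 * (2 * Qn a (k + 1)) ^ 2 := by ring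
      _ ≤ _ := by gcongr

theorem sWord_length {a : ℕ → ℕ} (ha : ∀ k, 1 ≤ a (k + 1)) (k : ℕ) :
    (sWord a (k + 1)).length = Qn a (k + 1) := by
  induction k using Nat.twoStepInduction with
  | zero => simp [sWord, Qn]
  | one => have := ha 0; simp [sWord, Qn] at *; omega
  | more k h1 h2 =>
    rw [sWord, Qn, ← h1, ← h2]; simp

theorem best_approx {α : ℝ} (hirr : Irrational α) (hα : α ∈ Set.Ioo (0 : ℝ) 1) (k : ℕ)
    (m l : ℤ) (h0 : 0 < m) (h1 : m < Qn (cfCoeff α) (k + 1))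
    (h2 : 0 ≤ (-1) ^ k * (m * α - l)) (h3 : (-1) ^ k * (m * α - l) ≤ eN α k) : False := by
  have hd := QP_det (cfCoeff α) k
  have e1 := QP_eq hirr hα k
  have e2 := QP_eq hirr hα (k + 1)
  have p1 := eN_pos hirr hα k
  have p2 := eN_pos hirr hα (k + 1)
  have q1 := Qn_pos (cfCoeff_pos hirr hα) k
  set Q := Qn (cfCoeff α) k
  set Q' := Qn (cfCoeff α) (k + 1)
  set P := Pn (cfCoeff α) k
  set P' := Pn (cfCoeff α) (k + 1)
  have hs : ((-1 : ℤ) ^ k) * (-1) ^ k = 1 := by rw [← mul_pow]; simp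
  have hs' : ((-1 : ℝ) ^ k) * (-1) ^ k = 1 := by rw [← mul_pow]; simp
  obtain ⟨x, hx⟩ : ∃ x, x = (-1) ^ k * (l * Q' - m * P') := ⟨_, rfl⟩
  obtain ⟨y, hy⟩ : ∃ y, y = (-1) ^ k * (m * P - l * Q) := ⟨_, rfl⟩
  have hm : m = x * Q + y * Q' := by
    rw [hx, hy]; linear_combination (-(-1) ^ k * m) * hd - m * hs
  have hl : l = x * P + y * P' := by
    rw [hx, hy]; linear_combination (-(-1) ^ k * l) * hd - l * hs
  have hδ : (-1) ^ k * (m * α - l) = - x * eN α k + y * eN α (k + 1) := by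
    rw [hm, hl]
    push_cast
    rw [pow_succ] at e1
    rw [pow_succ, pow_succ] at e2
    linear_combination ((-1) ^ k * x) * e1 + ((-1) ^ k * y) * e2 + (-x * eN α k + y * eN α (k+1)) * hs'
  rw [hδ] at h2 h3
  have hQ : (0 : ℤ) ≤ Q := by positivity
  have hQ' : (1 : ℤ) ≤ Q' := by exact_mod_cast q1
  rcases lt_trichotomy y 0 with hy0 | hy0 | hy0
  · have : 0 < x := by
      by_contra hc; push Not at hc; nlinarith
    have hx' : (1 : ℝ) ≤ x := by exact_mod_cast this
    have hy' : (y : ℝ) ≤ -1 := by exact_mod_cast (by omega : y ≤ -1)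
    nlinarith
  · subst hy0
    have : 0 < x := by
      by_contra hc; push Not at hc; nlinarith
    have hx' : (1 : ℝ) ≤ x := by exact_mod_cast this
    push_cast at h2
    nlinarith
  · have : x < 0 := by
      by_contra hc; push Not at hc; nlinarith
    have hx' : (x : ℝ) ≤ -1 := by exact_mod_cast (by omega : x ≤ -1)
    have hy' : (1 : ℝ) ≤ y := by exact_mod_cast hy0
    nlinarith

theorem floor_shift {α : ℝ} (hirr : Irrational α) (hα : α ∈ Set.Ioo (0 : ℝ) 1) (k : ℕ)
    (m : ℤ) (h0 : 0 < m) (h1 : m < Qn (cfCoeff α) (k + 1)) :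
    ⌊((m : ℝ) + Qn (cfCoeff α) k) * α⌋ = Pn (cfCoeff α) k + ⌊(m : ℝ) * α⌋ := by
  have e1 := QP_eq hirr hα k
  have p1 := eN_pos hirr hα k
  have hba := fun l => best_approx hirr hα k m l h0 h1
  rw [Int.floor_eq_iff]
  push_cast
  have f1 := Int.floor_le ((m : ℝ) * α)
  have f2 := Int.lt_floor_add_one ((m : ℝ) * α)
  rcases Nat.even_or_odd k with hk | hk
  · rw [pow_succ, hk.neg_one_pow] at e1
    have := hba ⌊(m : ℝ) * α⌋
    rw [hk.neg_one_pow] at this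
    constructor
    · by_contra hc
      push Not at hc
      exact this (by linarith) (by linarith)
    · linarith
  · rw [pow_succ, hk.neg_one_pow] at e1
    have := hba (⌊(m : ℝ) * α⌋ + 1)
    rw [hk.neg_one_pow] at this
    push_cast at this
    constructor
    · linarith
    · by_contra hc
      push Not at hc
      exact this (by linarith) (by linarith)

theorem sturmian_floor {α : ℝ} (hα : α ∈ Set.Ioo (0 : ℝ) 1) (θ : ℝ) (n : ℤ) :
    sturmian α θ n = (⌊((n : ℝ) + 1) * α + θ⌋ : ℝ) - ⌊(n : ℝ) * α + θ⌋ := by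
  obtain ⟨a0, a1⟩ := hα
  unfold sturmian
  have f1 := Int.floor_add_fract ((n : ℝ) * α + θ)
  have f2 := Int.fract_nonneg ((n : ℝ) * α + θ)
  have f3 := Int.fract_lt_one ((n : ℝ) * α + θ)
  split_ifs with h
  · have : ⌊((n : ℝ) + 1) * α + θ⌋ = ⌊(n : ℝ) * α + θ⌋ + 1 := by
      rw [Int.floor_eq_iff]; push_cast
      constructor <;> linarith [h.1]
    rw [this]; push_cast; ring
  · have h' : Int.fract ((n : ℝ) * α + θ) < 1 - α := by
      by_contra hc
      exact h ⟨not_lt.1 hc, f3⟩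
    have : ⌊((n : ℝ) + 1) * α + θ⌋ = ⌊(n : ℝ) * α + θ⌋ := by
      rw [Int.floor_eq_iff]
      constructor <;> linarith
    rw [this]; ring

theorem sturmian_shift {α : ℝ} (hirr : Irrational α) (hα : α ∈ Set.Ioo (0 : ℝ) 1) (k : ℕ)
    (m : ℕ) (h0 : 0 < m) (h1 : m + 1 < Qn (cfCoeff α) (k + 1)) :
    sturmian α 0 (m + Qn (cfCoeff α) k : ℤ) = sturmian α 0 m := by
  have i1 := floor_shift hirr hα k m (by omega) (by omega)
  have i2 := floor_shift hirr hα k (m + 1) (by omega) (by omega)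
  rw [sturmian_floor hα, sturmian_floor hα]
  simp only [add_zero]
  push_cast at *
  rw [i1, add_right_comm, i2]; push_cast; ring

noncomputable def vWord (α : ℝ) (n : ℕ) : List ℝ :=
  (List.range n).map (fun i : ℕ => sturmian α 0 ((i : ℤ) + 1))

theorem vWord_add (α : ℝ) (q N : ℕ)
    (h : ∀ i < N, sturmian α 0 ((i + 1 : ℕ) + q : ℤ) = sturmian α 0 (i + 1 : ℕ)) :
    vWord α (q + N) = vWord α q ++ vWord α N := by
  unfold vWord
  rw [List.range_add, List.map_append, List.map_map]
  congr 1
  apply List.map_congr_left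
  intro i hi
  rw [List.mem_range] at hi
  have := h i hi
  simp only [Function.comp]
  push_cast at *
  rw [← this]; congr 1; ring

theorem vWord_rep (α : ℝ) (q p r : ℕ)
    (h : ∀ m, 0 < m → m + q ≤ p * q + r → sturmian α 0 (m + q : ℤ) = sturmian α 0 m) :
    vWord α (p * q + r) =
      (List.replicate p (vWord α q)).flatten ++ vWord α r := by
  induction p with
  | zero => simp
  | succ p ih =>
    have e : (p + 1) * q + r = q + (p * q + r) := by ring
    rw [e] at h ⊢
    rw [vWord_add, ih, List.replicate_succ, List.flatten_cons, List.append_assoc]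
    · intro m hm hm'; exact h m hm (by omega)
    · intro i hi; exact h (i + 1) (by omega) (by omega)

theorem vWord_succ (α : ℝ) (n : ℕ) :
    vWord α (n + 1) = vWord α n ++ [sturmian α 0 (n + 1)] := by
  simp [vWord, List.range_succ]

theorem sWord_eq {α : ℝ} (hirr : Irrational α) (hα : α ∈ Set.Ioo (0 : ℝ) 1) (k : ℕ) :
    sWord (cfCoeff α) (k + 2) = vWord α (Qn (cfCoeff α) (k + 2)) := by
  have ha := cfCoeff_pos hirr hα
  have base : sWord (cfCoeff α) 2 = vWord α (Qn (cfCoeff α) 2) := by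
    obtain ⟨b, hb⟩ : ∃ b, cfCoeff α 1 = b + 1 := ⟨cfCoeff α 1 - 1, by have := ha 0; rw [zero_add] at this; omega⟩
    have r0 := eN_rec hirr hα 0
    have p2 := eN_pos hirr hα 2
    have l2 := eN_lt hirr hα 1
    simp only [zero_add] at r0
    rw [r0] at p2 l2
    simp only [eN, cfGauss, one_mul, hb, Nat.reduceAdd, zero_add] at p2 l2
    push_cast at p2 l2
    have a0 := hα.1
    have hfl : ∀ j : ℕ, j ≤ b + 1 → ⌊(j : ℝ) * α⌋ = 0 := by
      intro j hj
      have hj' : (j : ℝ) ≤ b + 1 := by exact_mod_cast hj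
      rw [Int.floor_eq_zero_iff]
      constructor
      · positivity
      · nlinarith
    have hz : ∀ j, j ≤ b → vWord α j = List.replicate j 0 := by
      intro j hj
      induction j with
      | zero => simp [vWord]
      | succ j ih =>
        rw [vWord_succ, ih (by omega), List.replicate_succ', sturmian_floor hα]
        have h1 := hfl (j + 1) (by omega)
        have h2 := hfl (j + 2) (by omega)
        push_cast at *
        simp only [add_zero]
        rw [h1, show (j : ℝ) + 1 + 1 = j + 2 by ring, h2]; simp
    have hQ : Qn (cfCoeff α) 2 = b + 1 := by simp [Qn, hb]
    rw [hQ, vWord_succ, sWord, hb, hz b le_rfl, sturmian_floor hα]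
    have h1 := hfl (b + 1) le_rfl
    have h2 : ⌊((b : ℝ) + 2) * α⌋ = 1 := by
      rw [Int.floor_eq_iff]; push_cast
      constructor <;> nlinarith [hα.2]
    push_cast at *
    simp only [add_zero]
    rw [h1, show (b : ℝ) + 1 + 1 = b + 2 by ring, h2]; simp
  induction k using Nat.twoStepInduction with
  | zero => exact base
  | one =>
    rw [show 1 + 2 = 3 from rfl, sWord]
    simp only [zero_add]
    have hQ2 : Qn (cfCoeff α) 2 = cfCoeff α 1 := by simp [Qn]
    have hQ3 : Qn (cfCoeff α) 3 = cfCoeff α 2 * Qn (cfCoeff α) 2 + 1 := by rw [Qn]; rfl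
    have hw1 : sWord (cfCoeff α) 1 = [0] := by simp [sWord]
    rw [hw1, base]
    have r0 := eN_rec hirr hα 0
    have l2 := eN_lt hirr hα 2
    have l1 := eN_lt hirr hα 1
    have p3 := eN_pos hirr hα 3
    have p2 := eN_pos hirr hα 2
    simp only [zero_add] at r0
    have e0 : eN α 0 = 1 := rfl
    have e1 : eN α 1 = α := by simp [eN, cfGauss]
    rw [e0, e1] at r0
    have a0 := hα.1
    by_cases h1 : 2 ≤ cfCoeff α 1
    · rw [hQ3, vWord_rep]
      · have : vWord α 1 = [0] := by
          rw [vWord_succ, sturmian_floor hα]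
          have h1' : (2 : ℝ) ≤ cfCoeff α 1 := by exact_mod_cast h1
          have f1 : ⌊α⌋ = 0 := by
            rw [Int.floor_eq_zero_iff]; exact ⟨hα.1.le, hα.2⟩
          have f2 : ⌊(1 + 1) * α⌋ = 0 := by
            rw [Int.floor_eq_zero_iff]; exact ⟨by linarith, by nlinarith⟩
          simp [vWord, f1, f2]
        rw [this]
      · intro m hm hm'
        exact sturmian_shift hirr hα 2 m hm (by rw [show 2 + 1 = 3 from rfl, hQ3]; omega)
    · have h1' : cfCoeff α 1 = 1 := by have := ha 0; simp at this; omega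
      rw [h1'] at hQ2 r0
      have hQ3' : Qn (cfCoeff α) 3 = cfCoeff α 2 + 1 := by rw [hQ3, hQ2]; ring
      rw [hQ3', vWord_succ]
      have hr := vWord_rep α 1 (cfCoeff α 2) 0 (by
        intro m hm hm'
        have := sturmian_shift hirr hα 2 m hm (by rw [show 2 + 1 = 3 from rfl, hQ3']; omega)
        rwa [hQ2] at this)
      rw [mul_one, add_zero] at hr
      rw [hQ2, hr]
      have q3 := QP_eq hirr hα 3
      rw [hQ3'] at q3
      have f1 : ⌊((cfCoeff α 2 : ℝ) + 1) * α⌋ = Pn (cfCoeff α) 3 := by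
        rw [Int.floor_eq_iff]
        push_cast at q3
        constructor <;> nlinarith
      have f2 : ⌊((cfCoeff α 2 : ℝ) + 1 + 1) * α⌋ = Pn (cfCoeff α) 3 := by
        rw [Int.floor_eq_iff]
        push_cast at q3 r0
        norm_num at q3 l2
        constructor <;> nlinarith
      have : sturmian α 0 ((cfCoeff α 2 : ℤ) + 1) = 0 := by
        rw [sturmian_floor hα]
        simp only [add_zero]
        push_cast
        rw [f1, f2]; ring
      rw [this]
      simp [vWord]
  | more k i1 i2 =>
    rw [show k + 2 + 2 = (k + 1) + 3 from rfl, sWord]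
    rw [show k + 1 + 2 = k + 3 from rfl, show k + 1 + 1 = k + 2 from rfl] at *
    have hQ : Qn (cfCoeff α) (k + 1 + 3) = cfCoeff α (k + 3) * Qn (cfCoeff α) (k + 3) +
      Qn (cfCoeff α) (k + 2) := by rw [Qn]
    rw [hQ, i1, i2, vWord_rep]
    intro m hm hm'
    have := Qn_ge ha (k + 2)
    rw [show k + 2 + 1 = k + 3 from rfl] at this
    refine sturmian_shift hirr hα (k + 3) m hm ?_
    rw [show k + 3 + 1 = k + 1 + 3 from rfl, hQ]; omega

theorem sWord_getD {α : ℝ} (hirr : Irrational α) (hα : α ∈ Set.Ioo (0 : ℝ) 1) (k i : ℕ)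
    (h : i < Qn (cfCoeff α) (k + 2)) :
    (sWord (cfCoeff α) (k + 2)).getD i 0 = sturmian α 0 (i + 1) := by
  rw [sWord_eq hirr hα, vWord, List.getD_eq_getElem _ _ (by simpa using h)]
  simp

theorem small_step {α : ℝ} (hirr : Irrational α) (hα : α ∈ Set.Ioo (0 : ℝ) 1) (ε : ℝ) (hε : 0 < ε) :
    ∃ (Q : ℕ) (P : ℤ), 1 ≤ Q ∧ 0 < Q * α - P ∧ Q * α - P < ε := by
  have key : ∀ j : ℕ, eN α (2 * j + 1) ≤ (1 / 2) ^ j := by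
    intro j
    induction j with
    | zero => simp [eN, cfGauss]; exact hα.2.le
    | succ j ih =>
      have h1 := eN_rec hirr hα (2 * j + 1)
      have h2 := eN_lt hirr hα (2 * j + 2)
      have h3 : (1 : ℝ) ≤ cfCoeff α (2 * j + 1 + 1) := by exact_mod_cast cfCoeff_pos hirr hα _
      have h4 := eN_pos hirr hα (2 * j + 2)
      rw [show 2 * (j + 1) + 1 = 2 * j + 1 + 2 by ring, pow_succ]
      rw [show 2 * j + 1 + 1 = 2 * j + 2 from rfl] at *
      rw [show 2 * j + 2 + 1 = 2 * j + 1 + 2 from rfl] at *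
      nlinarith
  obtain ⟨j, hj⟩ := exists_pow_lt_of_lt_one hε (show (1 / 2 : ℝ) < 1 by norm_num)
  have h := QP_eq hirr hα (2 * j + 1)
  have he : (-1 : ℝ) ^ (2 * j + 1 + 1) = 1 := Even.neg_one_pow ⟨j + 1, by ring⟩
  rw [he, one_mul] at h
  refine ⟨Qn (cfCoeff α) (2 * j + 1), Pn (cfCoeff α) (2 * j + 1), Qn_pos (cfCoeff_pos hirr hα) _, ?_, ?_⟩
  · rw [h]; exact eN_pos hirr hα _
  · rw [h]; exact (key j).trans_lt hj

theorem dense_step {α : ℝ} (hirr : Irrational α) (hα : α ∈ Set.Ioo (0 : ℝ) 1) (θ ε : ℝ)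
    (hε : 0 < ε) (N : ℕ) :
    ∃ (k : ℕ) (l : ℤ) (s : ℝ), N ≤ k ∧ 0 ≤ s ∧ s < ε ∧ (k : ℝ) * α = l + θ + s := by
  obtain ⟨Q, P, hQ, h0, h1⟩ := small_step hirr hα ε hε
  set η := Q * α - P with hη
  obtain ⟨L, hL⟩ := exists_nat_gt (N * η + |θ|)
  have ht : 0 < (L + θ) / η := by
    apply div_pos _ h0
    have := neg_abs_le θ
    have : 0 ≤ N * η := by positivity
    linarith
  set j := ⌈(L + θ) / η⌉₊ with hj
  have j1 : (L + θ) / η ≤ j := Nat.le_ceil _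
  have j2 : (j : ℝ) < (L + θ) / η + 1 := Nat.ceil_lt_add_one ht.le
  rw [div_le_iff₀ h0] at j1
  have j3 : (j : ℝ) * η < L + θ + η := by
    have := mul_lt_mul_of_pos_right j2 h0
    rwa [add_mul, div_mul_cancel₀ _ h0.ne', one_mul] at this
  refine ⟨j * Q, j * P + L, j * η - (L + θ), ?_, by linarith, by linarith, ?_⟩
  · have : (N : ℝ) < j := by
      by_contra hc
      push Not at hc
      have := neg_abs_le θ
      nlinarith
    have : N < j := by exact_mod_cast this
    nlinarith
  · push_cast; rw [hη]; ring

theorem window {α : ℝ} (hirr : Irrational α) (hα : α ∈ Set.Ioo (0 : ℝ) 1) (θ : ℝ) (N : ℕ) :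
    ∃ n0, ∀ n ≥ n0, ∃ k : ℕ, N ≤ k ∧ k + N < (sWord (cfCoeff α) n).length ∧
      ∀ i : ℕ, k ≤ i + N → i ≤ k + N →
        (sWord (cfCoeff α) n).getD i 0 = sturmian α θ ((i : ℤ) - k) := by
  obtain ⟨ε, hε, hfl⟩ : ∃ ε > 0, ∀ j ∈ Finset.Icc (-(N : ℤ)) (N + 1), ∀ s : ℝ, 0 ≤ s → s < ε →
      ⌊(j : ℝ) * α + θ + s⌋ = ⌊(j : ℝ) * α + θ⌋ := by
    have key : ∀ S : Finset ℤ, ∃ ε > 0, ∀ j ∈ S, ∀ s : ℝ, 0 ≤ s → s < ε →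
      ⌊(j : ℝ) * α + θ + s⌋ = ⌊(j : ℝ) * α + θ⌋ := by
      intro S
      induction S using Finset.induction_on with
      | empty => exact ⟨1, one_pos, by simp⟩
      | insert x S hx ih =>
        obtain ⟨ε, hε, h⟩ := ih
        have hf := Int.fract_lt_one ((x : ℝ) * α + θ)
        refine ⟨min ε (1 - Int.fract ((x : ℝ) * α + θ)), lt_min hε (by linarith), ?_⟩
        intro j hj s hs hs'
        rw [lt_min_iff] at hs'
        rcases Finset.mem_insert.1 hj with rfl | hj
        · rw [Int.floor_eq_iff]
          have f1 := Int.floor_add_fract ((j : ℝ) * α + θ)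
          have f2 := Int.fract_nonneg ((j : ℝ) * α + θ)
          constructor <;> linarith [hs'.2]
        · exact h j hj s hs hs'.1
    exact key _
  obtain ⟨k, l, s, hk, hs0, hs1, hks⟩ := dense_step hirr hα θ ε hε (N + 1)
  have ha := cfCoeff_pos hirr hα
  refine ⟨k + N + 2, fun n hn => ⟨k - 1, by omega, ?_, ?_⟩⟩
  · obtain ⟨n, rfl⟩ : ∃ m, n = m + 1 := ⟨n - 1, by omega⟩
    rw [sWord_length ha]
    have := Qn_ge ha n
    omega
  · intro i h1 h2
    obtain ⟨n, rfl⟩ : ∃ m, n = m + 2 := ⟨n - 2, by omega⟩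
    have := Qn_ge ha (n + 1)
    rw [sWord_getD hirr hα n i (by rw [show n + 2 = n + 1 + 1 from rfl]; omega)]
    rw [sturmian_floor hα, sturmian_floor hα]
    have g1 := hfl ((i : ℤ) - (k - 1 : ℕ)) (by rw [Finset.mem_Icc]; omega) s hs0 hs1
    have g2 := hfl ((i : ℤ) - (k - 1 : ℕ) + 1) (by rw [Finset.mem_Icc]; omega) s hs0 hs1
    push_cast [Nat.cast_sub (show 1 ≤ k by omega)] at *
    rw [← g1, ← g2]
    have t1 : ((i : ℝ) + 1) * α + 0 = ((i : ℝ) - (k - 1)) * α + θ + s + l := by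
      linear_combination hks
    have t2 : ((i : ℝ) + 1 + 1) * α + 0 = ((i : ℝ) - (k - 1) + 1) * α + θ + s + l := by
      linear_combination hks
    rw [t1, t2, Int.floor_add_intCast, Int.floor_add_intCast]
    push_cast; ring

end CFPart
section SpectralPart

theorem approx_eig {F : Type*} [NormedAddCommGroup F] [InnerProductSpace ℂ F] [CompleteSpace F]
    (H : F →L[ℂ] F) (hH : IsSelfAdjoint H) (E : ℂ) (hE : E ∈ spectrum ℂ H) (ε : ℝ) (hε : 0 < ε) :
    ∃ u, ‖H u - E • u‖ < ε * ‖u‖ := by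
  by_contra hc
  push Not at hc
  have hre : E = (E.re : ℂ) := hH.mem_spectrum_eq_re hE
  set T : F →L[ℂ] F := algebraMap ℂ (F →L[ℂ] F) E - H with hT
  have hTsa : IsSelfAdjoint T := by
    apply IsSelfAdjoint.sub _ hH
    rw [hre]
    rw [Algebra.algebraMap_eq_smul_one]
    apply IsSelfAdjoint.smul
    · simp [isSelfAdjoint_iff]
    · exact IsSelfAdjoint.one _
  have hTx : ∀ x, T x = E • x - H x := by
    intro x; simp [hT, Algebra.algebraMap_eq_smul_one]
  have hsym := ContinuousLinearMap.isSelfAdjoint_iff_isSymmetric.1 hTsa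
  have hu : IsUnit (T * T) := by
    apply ContinuousLinearMap.isUnit_of_forall_le_norm_inner_map (c := ⟨ε ^ 2, by positivity⟩)
    · exact_mod_cast (by positivity : (0 : ℝ) < ε ^ 2)
    · intro x
      have h1 : inner ℂ ((T * T) x) x = inner ℂ (T x) (T x) := hsym (T x) x
      rw [h1, inner_self_eq_norm_sq_to_K]
      have := hc x
      rw [norm_sub_rev, ← hTx] at this
      simp only [NNReal.coe_mk, Complex.coe_algebraMap, norm_pow, Complex.norm_real, norm_norm]
      calc ‖x‖ ^ 2 * ε ^ 2 = (ε * ‖x‖) ^ 2 := by ring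
        _ ≤ _ := by gcongr
  have hu' : IsUnit T := by
    have : Commute T T := Commute.refl T
    exact (this.isUnit_mul_iff.1 hu).1
  exact hE hu'

theorem H_selfAdjoint (lam α θ : ℝ) (H : lp (fun _ : ℤ => ℂ) 2 →L[ℂ] lp (fun _ : ℤ => ℂ) 2)
    (hH : ∀ u : lp (fun _ : ℤ => ℂ) 2, ∀ n : ℤ,
      H u n = u (n + 1) + u (n - 1) + (lam * sturmian α θ n : ℝ) * u n) : IsSelfAdjoint H := by
  rw [ContinuousLinearMap.isSelfAdjoint_iff_isSymmetric]
  intro u v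
  have hs : ∀ u : lp (fun _ : ℤ => ℂ) 2, Summable (fun n : ℤ => ‖u n‖ ^ 2) := by
    intro u
    have := (lp.hasSum_norm (p := 2) (by norm_num) u).summable
    simpa using this
  have hf : ∀ u v : lp (fun _ : ℤ => ℂ) 2, Summable (fun n : ℤ => v n * (starRingEnd ℂ) (u (n + 1))) := by
    intro u v
    have hu := ((Equiv.addRight (1 : ℤ)).summable_iff.2 (hs u))
    apply Summable.of_norm_bounded (hu.add (hs v))
    intro n
    simp only [norm_mul, RCLike.norm_conj, Function.comp, Equiv.coe_addRight]
    nlinarith [sq_nonneg (‖u (n + 1)‖ - ‖v n‖), norm_nonneg (u (n+1)), norm_nonneg (v n)]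
  have hg : ∀ u v : lp (fun _ : ℤ => ℂ) 2, Summable (fun n : ℤ => v (n + 1) * (starRingEnd ℂ) (u n)) := by
    intro u v
    have hu := ((Equiv.addRight (1 : ℤ)).summable_iff.2 (hs v))
    apply Summable.of_norm_bounded (hu.add (hs u))
    intro n
    simp only [norm_mul, RCLike.norm_conj, Function.comp, Equiv.coe_addRight]
    nlinarith [sq_nonneg (‖v (n + 1)‖ - ‖u n‖), norm_nonneg (v (n+1)), norm_nonneg (u n)]
  have f1 := (hf u v).hasSum
  have f2 := (Equiv.subRight (1 : ℤ)).hasSum_iff.2 f1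
  have g1 := (hg u v).hasSum
  have g2 := (Equiv.subRight (1 : ℤ)).hasSum_iff.2 g1
  have h0 := (f1.sub f2).add (g2.sub g1)
  have h1 := (lp.hasSum_inner (𝕜 := ℂ) (H u) v).sub (lp.hasSum_inner (𝕜 := ℂ) u (H v))
  have := h1.unique (a₂ := 0) (by
    rw [sub_self, sub_self, add_zero] at h0
    convert h0 using 1
    funext n
    simp only [RCLike.inner_apply, hH, Function.comp, Equiv.subRight_apply, sub_add_cancel, map_add, map_mul, Complex.conj_ofReal]
    ring)
  exact sub_eq_zero.1 this

theorem approx_fin (lam α θ : ℝ) (H : lp (fun _ : ℤ => ℂ) 2 →L[ℂ] lp (fun _ : ℤ => ℂ) 2)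
    (hH : ∀ u : lp (fun _ : ℤ => ℂ) 2, ∀ n : ℤ,
      H u n = u (n + 1) + u (n - 1) + (lam * sturmian α θ n : ℝ) * u n)
    (E : ℂ) (hE : E ∈ spectrum ℂ H) (ε : ℝ) (hε : 0 < ε) :
    ∃ (u : ℤ → ℂ) (N : ℕ), (∀ j : ℤ, (N : ℤ) < |j| → u j = 0) ∧
      ∀ S : Finset ℤ, Finset.Icc (-(N : ℤ)) N ⊆ S →
        ∑ j ∈ S, ‖u (j + 1) + u (j - 1) + lam * sturmian α θ j * u j - E * u j‖ ^ 2 <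
          ε ^ 2 * ∑ j ∈ S, ‖u j‖ ^ 2 := by
  obtain ⟨u, hu⟩ := approx_eig H (H_selfAdjoint lam α θ H hH) E hE ε hε
  have hsum := lp.hasSum_single (E := fun _ : ℤ => ℂ) (p := 2) (by norm_num) u
  have hopen : IsOpen {v : lp (fun _ : ℤ => ℂ) 2 | ‖H v - E • v‖ < ε * ‖v‖} := by
    apply isOpen_lt <;> fun_prop
  have hev := hsum.eventually (hopen.mem_nhds hu)
  obtain ⟨s, hs⟩ := hev.exists
  simp only at hs
  set v := ∑ i ∈ s, lp.single (E := fun _ : ℤ => ℂ) 2 i (u i) with hv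
  have hv0 : ∀ j, j ∉ s → v j = 0 := by
    intro j hj
    rw [hv, lp.coeFn_sum, Finset.sum_apply]
    apply Finset.sum_eq_zero
    intro i hi
    rw [lp.single_apply, Pi.single_eq_of_ne]
    rintro rfl; exact hj hi
  refine ⟨v, ∑ i ∈ s, i.natAbs, ?_, ?_⟩
  · intro j hj
    apply hv0
    intro hjs
    have := Finset.single_le_sum (f := fun i : ℤ => i.natAbs) (fun _ _ => Nat.zero_le _) hjs
    rw [Int.abs_eq_natAbs] at hj
    omega
  · intro S hS
    have n2 : ∀ w : lp (fun _ : ℤ => ℂ) 2, HasSum (fun n : ℤ => ‖w n‖ ^ 2) (‖w‖ ^ 2) := by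
      intro w
      have := (lp.hasSum_norm (p := 2) (by norm_num) w)
      simpa using this
    have e1 : ‖v‖ ^ 2 = ∑ j ∈ S, ‖v j‖ ^ 2 := by
      apply (n2 v).unique
      apply hasSum_sum_of_ne_finset_zero
      intro j hj
      rw [hv0 j]; · simp
      intro hjs
      apply hj
      apply hS
      have := Finset.single_le_sum (f := fun i : ℤ => i.natAbs) (fun _ _ => Nat.zero_le _) hjs
      rw [Finset.mem_Icc]
      omega
    rw [← e1]
    have e2 := sum_le_hasSum S (fun i _ => by positivity) (n2 (H v - E • v))
    have e3 : ∀ j, (H v - E • v : lp (fun _ : ℤ => ℂ) 2) j = v (j + 1) + v (j - 1) + lam * sturmian α θ j * v j - E * v j := by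
      intro j
      rw [lp.coeFn_sub, Pi.sub_apply, hH, lp.coeFn_smul, Pi.smul_apply, smul_eq_mul]
      push_cast; rfl
    simp only [e3] at e2
    refine e2.trans_lt ?_
    rw [← mul_pow]
    exact pow_lt_pow_left₀ hs (norm_nonneg _) (by norm_num)

theorem fin_eig {F : Type*} [NormedAddCommGroup F] [InnerProductSpace ℂ F] [FiniteDimensional ℂ F]
    (A : F →ₗ[ℂ] F) (hA : A.IsSymmetric) (E : ℂ) (ε : ℝ) (hε : 0 < ε) (f : F)
    (hf : ‖A f - E • f‖ ^ 2 < ε ^ 2 * ‖f‖ ^ 2) :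
    ∃ E' : ℂ, ‖E' - E‖ < ε ∧ ∃ g : F, g ≠ 0 ∧ A g = E' • g := by
  by_contra hc
  push Not at hc
  set b := hA.eigenvectorBasis rfl
  have h1 : ∀ i, ε ≤ ‖(hA.eigenvalues rfl i : ℂ) - E‖ := by
    intro i
    by_contra h
    push Not at h
    refine hc _ h (b i) ?_ (hA.apply_eigenvectorBasis rfl i)
    intro h0
    have := b.orthonormal.1 i
    rw [h0] at this; simp at this
  have e1 : ‖f‖ ^ 2 = ∑ i, ‖b.repr f i‖ ^ 2 := by
    rw [← EuclideanSpace.norm_sq_eq, b.repr.norm_map]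
  have e2 : ‖A f - E • f‖ ^ 2 = ∑ i, ‖b.repr (A f - E • f) i‖ ^ 2 := by
    rw [← EuclideanSpace.norm_sq_eq, b.repr.norm_map]
  rw [e1, e2, Finset.mul_sum] at hf
  refine absurd hf (not_lt.2 (Finset.sum_le_sum fun i _ => ?_))
  have : b.repr (A f - E • f) i = ((hA.eigenvalues rfl i : ℂ) - E) * b.repr f i := by
    rw [map_sub, map_smul, sub_mul]
    have := hA.eigenvectorBasis_apply_self_apply rfl f i
    simp only [PiLp.sub_apply, PiLp.smul_apply, smul_eq_mul]
    rw [this]; rfl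
  rw [this, norm_mul, mul_pow]
  have := h1 i
  gcongr

theorem val_succ {q : ℕ} [NeZero q] (hq : 2 ≤ q) (z : ZMod q) :
    ((z + 1).val = z.val + 1 ∧ z.val + 1 < q) ∨ ((z + 1).val = 0 ∧ z.val + 1 = q) := by
  have : Fact (1 < q) := ⟨hq⟩
  have h1 := ZMod.val_lt z
  have h2 := ZMod.val_add z 1
  rw [ZMod.val_one] at h2
  rcases Nat.lt_or_ge (z.val + 1) q with h | h
  · left; rw [Nat.mod_eq_of_lt h] at h2; exact ⟨h2, h⟩
  · right
    have : z.val + 1 = q := by omega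
    rw [this, Nat.mod_self] at h2
    exact ⟨h2, this⟩

/-- The periodic operator on the cycle of length `q`. -/
noncomputable def cycA (q : ℕ) [NeZero q] (V : ZMod q → ℝ) :
    EuclideanSpace ℂ (ZMod q) →ₗ[ℂ] EuclideanSpace ℂ (ZMod q) where
  toFun f := WithLp.toLp 2 (fun z => f (z + 1) + f (z - 1) + V z * f z)
  map_add' f g := by ext z; simp; ring
  map_smul' c f := by ext z; simp; ring

theorem cycA_symm (q : ℕ) [NeZero q] (V : ZMod q → ℝ) : (cycA q V).IsSymmetric := by
  intro f g
  simp only [PiLp.inner_apply, RCLike.inner_apply, cycA, LinearMap.coe_mk, AddHom.coe_mk, map_add,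
    map_mul, Complex.conj_ofReal, mul_add, add_mul, Finset.sum_add_distrib]
  have e1 : ∑ z, g z * (starRingEnd ℂ) (f (z + 1)) = ∑ z, g (z - 1) * (starRingEnd ℂ) (f z) := by
    rw [← Equiv.sum_comp (Equiv.addRight (1 : ZMod q)) (fun z => g (z - 1) * (starRingEnd ℂ) (f z))]
    simp
  have e2 : ∑ z, g z * (starRingEnd ℂ) (f (z - 1)) = ∑ z, g (z + 1) * (starRingEnd ℂ) (f z) := by
    rw [← Equiv.sum_comp (Equiv.subRight (1 : ZMod q)) (fun z => g (z + 1) * (starRingEnd ℂ) (f z))]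
    simp
  have e3 : ∀ z, g z * ((V z : ℂ) * (starRingEnd ℂ) (f z)) = (V z : ℂ) * g z * (starRingEnd ℂ) (f z) := by
    intro z; ring
  simp only [e1, e2, e3]
  ring

theorem transferM_det (lam : ℝ) (E : ℂ) (w : List ℝ) : (transferM lam E w).det = 1 := by
  induction w with
  | nil => simp [transferM]
  | cons a w ih => simp [transferM, ih, transferT]

theorem cyc_trace (lam : ℝ) (E : ℂ) (s : List ℝ) (q : ℕ) [NeZero q] (hq : s.length = q)
    (F : ZMod q → ℂ) (hF : F ≠ 0)
    (h : ∀ z, F (z + 1) + F (z - 1) + (lam * s.getD z.val 0 : ℝ) * F z = E * F z) :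
    (transferM lam E s).trace = 2 := by
  have key : ∀ j : ℕ, j ≤ q → (transferM lam E (s.take j)).mulVec ![F 0, F (-1)] = ![F j, F (j - 1)] := by
    intro j hj
    induction j with
    | zero => simp [transferM]
    | succ j ih =>
      have hj' : j < s.length := by omega
      rw [List.take_succ_eq_append_getElem hj', transferM_append, ← Matrix.mulVec_mulVec, ih (by omega)]
      have := h (j : ZMod q)
      rw [ZMod.val_natCast_of_lt (by omega), List.getD_eq_getElem _ _ hj'] at this
      ext i
      fin_cases i
      · simp [transferM, transferT, Matrix.mulVec, dotProduct, Fin.sum_univ_two]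
        push_cast at this
        linear_combination -this
      · simp [transferM, transferT, Matrix.mulVec, dotProduct, Fin.sum_univ_two]
  have hq' := key q le_rfl
  rw [List.take_of_length_le hq.le, ZMod.natCast_self, zero_sub] at hq'
  have hv : (![F 0, F (-1)] : Fin 2 → ℂ) ≠ 0 := by
    intro h0
    apply hF
    funext z
    have := key z.val (ZMod.val_lt z).le
    rw [h0, Matrix.mulVec_zero, ZMod.natCast_zmod_val] at this
    have := congrFun this 0
    simpa using this.symm
  have hd : (transferM lam E s - 1).det = 0 := by
    rw [← Matrix.exists_mulVec_eq_zero_iff]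
    refine ⟨_, hv, ?_⟩
    rw [Matrix.sub_mulVec, hq', Matrix.one_mulVec, sub_self]
  have h1 := transferM_det lam E s
  rw [Matrix.det_fin_two] at h1 hd
  rw [Matrix.trace_fin_two]
  simp at hd
  linear_combination h1 - hd

theorem trace_two {α : ℝ} (hirr : Irrational α) (hα : α ∈ Set.Ioo (0 : ℝ) 1) (lam θ : ℝ)
    (H : lp (fun _ : ℤ => ℂ) 2 →L[ℂ] lp (fun _ : ℤ => ℂ) 2)
    (hH : ∀ u : lp (fun _ : ℤ => ℂ) 2, ∀ n : ℤ,
      H u n = u (n + 1) + u (n - 1) + (lam * sturmian α θ n : ℝ) * u n)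
    (E : ℂ) (hE : E ∈ spectrum ℂ H) (ε : ℝ) (hε : 0 < ε) :
    ∃ n0, ∀ n ≥ n0, ∃ E' : ℂ, ‖E' - E‖ < ε ∧
      (transferM lam E' (sWord (cfCoeff α) n)).trace = 2 := by
  obtain ⟨u, N, hu0, hu⟩ := approx_fin lam α θ H hH E hE ε hε
  obtain ⟨n0, hn0⟩ := window hirr hα θ (N + 1)
  refine ⟨n0, fun n hn => ?_⟩
  obtain ⟨k, hk1, hk2, hk3⟩ := hn0 n hn
  set s := sWord (cfCoeff α) n
  obtain ⟨q, hq⟩ : ∃ q, s.length = q := ⟨_, rfl⟩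
  rw [hq] at hk2
  have : NeZero q := ⟨by omega⟩
  set V : ZMod q → ℝ := fun z => lam * s.getD z.val 0 with hV
  set f : EuclideanSpace ℂ (ZMod q) := WithLp.toLp 2 (fun z => u ((z.val : ℤ) - k)) with hf
  have hu0' : ∀ j : ℤ, (j < -N ∨ N < j) → u j = 0 := by
    intro j hj; apply hu0; rw [lt_abs]; omega
  have hsum : ∀ g : ℤ → ℝ, ∑ z : ZMod q, g ((z.val : ℤ) - k) =
      ∑ j ∈ Finset.Icc (-(k : ℤ)) (q - 1 - k), g j := by
    intro g
    refine Finset.sum_bij (fun z _ => (z.val : ℤ) - k) ?_ ?_ ?_ ?_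
    · intro z _
      have := ZMod.val_lt z
      rw [Finset.mem_Icc]; omega
    · intro z _ z' _ h
      apply ZMod.val_injective q
      omega
    · intro j hj
      rw [Finset.mem_Icc] at hj
      refine ⟨((j + k).toNat : ZMod q), Finset.mem_univ _, ?_⟩
      rw [ZMod.val_natCast_of_lt (by omega)]; omega
    · intro z _; rfl
  have h1 : ∀ z : ZMod q, (cycA q V f - E • f) z =
      u ((z.val : ℤ) - k + 1) + u ((z.val : ℤ) - k - 1) +
        lam * sturmian α θ ((z.val : ℤ) - k) * u ((z.val : ℤ) - k) - E * u ((z.val : ℤ) - k) := by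
    intro z
    have hz := ZMod.val_lt z
    have p1 : f (z + 1) = u ((z.val : ℤ) - k + 1) := by
      rw [hf]; simp only
      rcases val_succ (by omega) z with ⟨h, h'⟩ | ⟨h, h'⟩
      · rw [h]; congr 1; push_cast; ring
      · rw [h, hu0', hu0']
        · omega
        · omega
    have p2 : f (z - 1) = u ((z.val : ℤ) - k - 1) := by
      rw [hf]; simp only
      have := val_succ (by omega) (z - 1)
      rw [sub_add_cancel] at this
      rcases this with ⟨h, h'⟩ | ⟨h, h'⟩
      · rw [h]; congr 1; push_cast; ring
      · rw [h, hu0', hu0']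
        · omega
        · omega
    have p3 : (V z : ℂ) * f z = lam * sturmian α θ ((z.val : ℤ) - k) * u ((z.val : ℤ) - k) := by
      by_cases hw : k ≤ z.val + (N + 1) ∧ z.val ≤ k + (N + 1)
      · rw [← hk3 z.val hw.1 hw.2, hV]; push_cast; rfl
      · have : u ((z.val : ℤ) - k) = 0 := hu0' _ (by omega)
        rw [hf]; simp only; rw [this]; simp
    rw [← p1, ← p2, ← p3]
    rfl
  have h2 := hu (Finset.Icc (-(k : ℤ)) (q - 1 - k)) (by
    intro j hj; rw [Finset.mem_Icc] at *; omega)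
  rw [← hsum, ← hsum] at h2
  have h3 : ‖cycA q V f - E • f‖ ^ 2 < ε ^ 2 * ‖f‖ ^ 2 := by
    rw [EuclideanSpace.norm_sq_eq, EuclideanSpace.norm_sq_eq]
    simp only [h1]
    exact h2
  obtain ⟨E', hE', g, hg, hgE⟩ := fin_eig _ (cycA_symm q V) E ε hε f h3
  refine ⟨E', hE', cyc_trace lam E' s q hq g.ofLp ?_ ?_⟩
  · intro h0; apply hg; ext z; exact congrFun h0 z
  · intro z
    exact congrFun (congrArg WithLp.ofLp hgE) z

end SpectralPart
section FinalPart

theorem Mk_cont (lam : ℝ) (a : ℕ → ℕ) (k : ℕ) : Continuous (fun E : ℂ => Mk lam E a k) := by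
  induction k using Nat.twoStepInduction with
  | zero => simp only [Mk]; exact continuous_const
  | one =>
    simp only [Mk, transferT]
    apply continuous_matrix
    intro i j
    fin_cases i <;> fin_cases j <;> simp <;> fun_prop
  | more k h1 h2 =>
    simp only [Mk]
    exact h1.mul (h2.pow _)

theorem no_escape {α : ℝ} (hirr : Irrational α) (hα : α ∈ Set.Ioo (0 : ℝ) 1) (lam θ : ℝ)
    (H : lp (fun _ : ℤ => ℂ) 2 →L[ℂ] lp (fun _ : ℤ => ℂ) 2)
    (hH : ∀ u : lp (fun _ : ℤ => ℂ) 2, ∀ n : ℤ,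
      H u n = u (n + 1) + u (n - 1) + (lam * sturmian α θ n : ℝ) * u n)
    (E : ℂ) (hE : E ∈ spectrum ℂ H) (k : ℕ) :
    ¬ Esc (fun k => (Mk lam E (cfCoeff α) k).trace)
      (fun k => (Mk lam E (cfCoeff α) k * Mk lam E (cfCoeff α) (k + 1)).trace) k := by
  intro hesc
  have cx : ∀ k, Continuous (fun E : ℂ => (Mk lam E (cfCoeff α) k).trace) :=
    fun k => (Mk_cont lam _ k).matrix_trace
  have cy : ∀ k, Continuous (fun E : ℂ => (Mk lam E (cfCoeff α) k * Mk lam E (cfCoeff α) (k + 1)).trace) :=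
    fun k => ((Mk_cont lam _ k).mul (Mk_cont lam _ (k + 1))).matrix_trace
  obtain ⟨h1, h2, h3⟩ := hesc
  have e1 := (cx (k + 1)).norm.continuousAt.eventually (lt_mem_nhds h1)
  have e2 := (cy k).norm.continuousAt.eventually (lt_mem_nhds h2)
  have e3 := (cx k).norm.continuousAt.eventually_lt (cy k).norm.continuousAt h3
  obtain ⟨ε, hε, hall⟩ := Metric.eventually_nhds_iff.1 (e1.and (e2.and e3))
  obtain ⟨n0, hn0⟩ := trace_two hirr hα lam θ H hH E hE ε hε
  obtain ⟨E', hE', htr⟩ := hn0 (n0 + k + 1) (by omega)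
  have hh := hall (y := E') (by rw [dist_eq_norm]; exact hE')
  have ha := cfCoeff_pos hirr hα
  have hb := (trSys lam E' (cfCoeff α) ha).esc_big (k := k) hh (n0 + k + 1) (by omega)
  rw [transferM_sWord lam E' _ (ha 0)] at htr
  simp only [htr] at hb
  simp at hb

theorem good_all {α : ℝ} (hirr : Irrational α) (hα : α ∈ Set.Ioo (0 : ℝ) 1) (lam θ : ℝ)
    (H : lp (fun _ : ℤ => ℂ) 2 →L[ℂ] lp (fun _ : ℤ => ℂ) 2)
    (hH : ∀ u : lp (fun _ : ℤ => ℂ) 2, ∀ n : ℤ,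
      H u n = u (n + 1) + u (n - 1) + (lam * sturmian α θ n : ℝ) * u n)
    (E : ℂ) (hE : E ∈ spectrum ℂ H) (k : ℕ) :
    Good (Kc lam) (Mk lam E (cfCoeff α) k) (Mk lam E (cfCoeff α) (k + 1)) := by
  have hn := no_escape hirr hα lam θ H hH E hE
  have S := trSys lam E (cfCoeff α) (cfCoeff_pos hirr hα)
  exact ⟨by unfold Kc; nlinarith [sq_nonneg lam], Mk_det _ _ _ _, Mk_det _ _ _ _,
    S.x_bound' hn k, S.x_bound' hn (k + 1), S.y_bound hn k⟩

theorem As_bound {α : ℝ} (hbd : BoundedDensity α) :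
    ∃ B B0 : ℕ, ∀ n, As (cfCoeff α) n ≤ B * n + B0 := by
  obtain ⟨b, hb⟩ := hbd
  rw [Filter.eventually_map, Filter.eventually_atTop] at hb
  obtain ⟨n0, hn0⟩ := hb
  refine ⟨⌈b⌉₊ + 2, As (cfCoeff α) n0, fun n => ?_⟩
  rcases Nat.lt_or_ge n (n0 + 1) with h | h
  · have : As (cfCoeff α) n ≤ As (cfCoeff α) n0 := by
      unfold As
      apply Finset.sum_le_sum_of_subset
      intro j; simp only [Finset.mem_range]; omega
    exact this.trans (Nat.le_add_left _ _)
  · have h1 := hn0 n (by omega)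
    have hn : (0 : ℝ) < n := by exact_mod_cast (by omega : 0 < n)
    rw [one_div, inv_mul_le_iff₀ hn] at h1
    have h2 : As (cfCoeff α) n = ∑ j ∈ Finset.Icc 1 n, cfCoeff α j + 2 * n := by
      unfold As
      rw [Finset.sum_add_distrib, Finset.range_eq_Ico,
        Finset.sum_Ico_add' (fun j => cfCoeff α j) 0 n 1]
      simp [mul_comm]
      rfl
    have h3 : ∑ j ∈ Finset.Icc 1 n, cfCoeff α j ≤ n * ⌈b⌉₊ := by
      have : ((∑ j ∈ Finset.Icc 1 n, cfCoeff α j : ℕ) : ℝ) ≤ ((n * ⌈b⌉₊ : ℕ) : ℝ) := by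
        push_cast
        exact h1.trans (mul_le_mul_of_nonneg_left (Nat.le_ceil b) hn.le)
      exact_mod_cast this
    rw [h2]
    nlinarith

theorem pref_level {α : ℝ} (hirr : Irrational α) (hα : α ∈ Set.Ioo (0 : ℝ) 1) (w : List ℝ)
    (hw : w ≠ []) (hp : IsPrefC α w) :
    ∃ k, w <+: sWord (cfCoeff α) (k + 2) ∧ 2 ^ k ≤ 2 * w.length ^ 2 := by
  have ha := cfCoeff_pos hirr hα
  have hlen : 1 ≤ w.length := List.length_pos_iff.2 hw
  have hex : ∃ k, w.length ≤ Qn (cfCoeff α) (k + 2) :=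
    ⟨w.length, by have := Qn_ge ha (w.length + 1); exact (Nat.le_succ _).trans this⟩
  have hwv : w = vWord α w.length := by
    conv_lhs => rw [hp]
    unfold vWord
    apply List.map_congr_left
    intro i _
    have := sWord_getD hirr hα i i (by
      have := Qn_ge ha (i + 1); exact this)
    rw [← this]; rfl
  refine ⟨Nat.find hex, ?_, ?_⟩
  · rw [sWord_eq hirr hα]
    have hv : ∀ m n, m ≤ n → vWord α m <+: vWord α n := by
      intro m n hmn
      rw [List.prefix_iff_eq_take]
      unfold vWord
      rw [← List.map_take, List.take_range]
      simp only [List.length_map, List.length_range]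
      rw [min_eq_left hmn]
    have := hv _ _ (Nat.find_spec hex)
    rwa [← hwv] at this
  · refine (Qn_exp ha _).trans ?_
    have : Qn (cfCoeff α) (Nat.find hex + 1) ≤ w.length := by
      rcases hk : Nat.find hex with _ | k
      · simpa [Qn] using hlen
      · have := Nat.find_min hex (m := k) (by omega)
        push Not at this
        exact this.le
    gcongr

end FinalPart

theorem transfer_matrices_polynomially_bounded_on_prefixes
    (α : ℝ) (hirr : Irrational α) (hα : α ∈ Set.Ioo (0 : ℝ) 1) (hbd : BoundedDensity α)
    (lam : ℝ) (hlam : lam ≠ 0) :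
    ∃ C > (0 : ℝ), ∃ μ > (0 : ℝ), ∀ θ' ∈ Set.Ico (0 : ℝ) 1,
      ∀ H : lp (fun _ : ℤ => ℂ) 2 →L[ℂ] lp (fun _ : ℤ => ℂ) 2,
        (∀ u : lp (fun _ : ℤ => ℂ) 2, ∀ n : ℤ,
      H u n = u (n + 1) + u (n - 1) + (lam * sturmian α θ' n : ℝ) * u n) →
        ∀ E ∈ spectrum ℂ H, ∀ w : List ℝ, w ≠ [] → IsPrefC α w →
          opNorm (transferM lam E w) ≤ C * (w.length : ℝ) ^ μ := by
  obtain ⟨B, B0, hB⟩ := As_bound hbd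
  obtain ⟨C0, hC0, hop⟩ := opNorm_Sp0 lam (Kc lam)
  have hK : 1 ≤ Kc lam := by unfold Kc; nlinarith [sq_nonneg lam]
  have hc := cG_one hK
  have hc0 : 0 < cG (Kc lam) := by linarith
  obtain ⟨R, hR⟩ : ∃ R, R = cG (Kc lam) ^ (3 * B) := ⟨_, rfl⟩
  obtain ⟨D, hD⟩ : ∃ D, D = cG (Kc lam) ^ (3 * B + 3 * B0) := ⟨_, rfl⟩
  have hR1 : 1 ≤ R := hR ▸ one_le_pow₀ hc
  have hR0 : 0 < R := by linarith
  have hD0 : 0 < D := hD ▸ pow_pos hc0 _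
  have hρ : 0 ≤ Real.logb 2 R := Real.logb_nonneg (by norm_num) hR1
  have hρR : (2 : ℝ) ^ Real.logb 2 R = R := Real.rpow_logb (by norm_num) (by norm_num) hR0
  set ρ := Real.logb 2 R
  refine ⟨C0 * (D * R), by positivity, 2 * ρ + 1, by linarith, ?_⟩
  intro θ _ H hH E hE w hw hp
  have g := good_all hirr hα lam θ H hH E hE
  have hEn : ‖E‖ ≤ Kc lam := by
    have := (g 0).tB
    simpa [Mk, transferT, Matrix.trace_fin_two] using this
  obtain ⟨k, hpre, hk⟩ := pref_level hirr hα w hw hp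
  have h1 := prefix_Sp lam (Kc lam) E (cfCoeff α) (cfCoeff_pos hirr hα 0) g k w (Or.inr hpre)
  have h2 := hop E _ _ _ hEn (down_all lam (Kc lam) E _ g k _ _ h1)
  have hm : (1 : ℝ) ≤ w.length := by exact_mod_cast List.length_pos_iff.2 hw
  refine h2.trans ?_
  rw [mul_assoc C0]
  refine mul_le_mul_of_nonneg_left ?_ hC0.le
  rw [← pow_add]
  have hexp : As (cfCoeff α) (k + 1) + As (cfCoeff α) k + As (cfCoeff α) k ≤
      (3 * B + 3 * B0) + 3 * B * k := by
    have i1 := hB (k + 1)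
    have i2 := hB k
    nlinarith
  have hk' : ((2 : ℝ) ^ k) ≤ 2 * (w.length : ℝ) ^ 2 := by exact_mod_cast hk
  have hRk : R ^ k ≤ R * (w.length : ℝ) ^ (2 * ρ + 1) := by
    calc R ^ k = ((2 : ℝ) ^ ρ) ^ k := by rw [hρR]
      _ = ((2 : ℝ) ^ k) ^ ρ := by
        rw [← Real.rpow_natCast, ← Real.rpow_mul (by norm_num), mul_comm,
          Real.rpow_mul (by norm_num), Real.rpow_natCast]
      _ ≤ (2 * (w.length : ℝ) ^ 2) ^ ρ := Real.rpow_le_rpow (by positivity) hk' hρ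
      _ = R * (w.length : ℝ) ^ (2 * ρ) := by
        rw [Real.mul_rpow (by norm_num) (by positivity), hρR, Real.rpow_mul (by positivity)]
        norm_num
      _ ≤ _ := by
        apply mul_le_mul_of_nonneg_left _ hR0.le
        exact Real.rpow_le_rpow_of_exponent_le hm (by linarith)
  calc cG (Kc lam) ^ (As (cfCoeff α) (k + 1) + As (cfCoeff α) k + As (cfCoeff α) k)
      ≤ cG (Kc lam) ^ ((3 * B + 3 * B0) + 3 * B * k) := pow_le_pow_right₀ hc hexp
    _ = D * R ^ k := by rw [pow_add, pow_mul, hD, hR]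
    _ ≤ D * (R * (w.length : ℝ) ^ (2 * ρ + 1)) := mul_le_mul_of_nonneg_left hRk hD0.le
    _ = _ := by ring
end
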